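/- arXiv:1605.02171 — 4 statements merged into one kernel-verified Lean document; each statement's English description precedes it below -/
import Mathlib

section
/- Let f = h + \overline{g} be a sense-preserving harmonic function on the unit disk \mathbb{D} (h, g holomorphic on \mathbb{D} with |g'(z)| < |h'(z)| for all z \in \mathbb{D}). Then the following are equivalent: (i) for every a \in \mathbb{D} and every r with 0 < r < 1-|a|, the image f(\mathbb{D}(a,r)) is a convex subset of \mathbb{C}; (iii) for all \zeta, b \in \mathbb{D}, writing T = |\zeta-b|^2 |1-\zeta\overline{b}|^2, one has T\,|h'(\zeta)|^2 (1+|b|^2 - 2\,\mathrm{Re}(\overline{b}\zeta)) + T\,\mathrm{Re}\{(\zeta-b)(1-\zeta\overline{b})\, h''(\zeta)\,\overline{h'(\zeta)}\} \geq T\,|g'(\zeta)|^2 (1+|b|^2 - 2\,\mathrm{Re}(\overline{b}\zeta)) + T\,\mathrm{Re}\{(\zeta-b)(1-\zeta\overline{b})\, g''(\zeta)\,\overline{g'(\zeta)}\} + \mathrm{Re}\{(\zeta-b)^3 (1-\zeta\overline{b})^3 \,[h''(\zeta) g'(\zeta) - h'(\zeta) g''(\zeta)]\}. -/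
open Complex Metric ComplexConjugate

noncomputable section



section Aux
/-- The curvature quantity. -/
def Qf (p p2 q q2 w : ℂ) : ℝ :=
  normSq w * (normSq p - normSq q) + (normSq w * ((w * p2 * conj p).re - (w * q2 * conj q).re)
    - (w ^ 3 * (p2 * q - p * q2)).re)

/-- The cubic part of the curvature quantity. -/
def Bf (p p2 q q2 w : ℂ) : ℝ :=
  normSq w * ((w * p2 * conj p).re - (w * q2 * conj q).re)
    - (w ^ 3 * (p2 * q - p * q2)).re

lemma Bf_smul (p p2 q q2 w : ℂ) (s : ℝ) :
    Bf p p2 q q2 ((s : ℂ) * w) = s ^ 3 * Bf p p2 q q2 w := by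
  unfold Bf
  have h1 : ((s : ℂ) * w * p2 * conj p) = (s : ℂ) * (w * p2 * conj p) := by ring
  have h2 : ((s : ℂ) * w * q2 * conj q) = (s : ℂ) * (w * q2 * conj q) := by ring
  have h3 : (((s : ℂ) * w) ^ 3 * (p2 * q - p * q2))
      = ((s ^ 3 : ℝ) : ℂ) * (w ^ 3 * (p2 * q - p * q2)) := by push_cast; ring
  rw [h1, h2, h3, re_ofReal_mul, re_ofReal_mul, re_ofReal_mul, normSq_mul, normSq_ofReal]
  ring

lemma Qf_smul (p p2 q q2 w : ℂ) (s : ℝ) :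
    Qf p p2 q q2 ((s : ℂ) * w) = s ^ 2 * (normSq w * (normSq p - normSq q))
      + s ^ 3 * Bf p p2 q q2 w := by
  have : Qf p p2 q q2 ((s : ℂ) * w) = normSq ((s : ℂ) * w) * (normSq p - normSq q)
    + Bf p p2 q q2 ((s : ℂ) * w) := rfl
  rw [this, Bf_smul, normSq_mul, normSq_ofReal]; ring

lemma Qf_eq (p p2 q q2 w : ℂ) :
    Qf p p2 q q2 w = (normSq w * (normSq p - normSq q)) + Bf p p2 q q2 w := rfl

lemma normSq_lt_of_norm_lt {p q : ℂ} (hpq : ‖q‖ < ‖p‖) : 0 < normSq p - normSq q := by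
  rw [normSq_eq_norm_sq, normSq_eq_norm_sq]
  have := norm_nonneg q
  nlinarith

/-- nonstrict inequality for all discs gives the strict one -/
lemma strict_of_nonstrict (h g : ℂ → ℂ)
    (hsp : ∀ z ∈ ball (0:ℂ) 1, ‖deriv g z‖ < ‖deriv h z‖)
    (H : ∀ ζ w : ℂ, w ≠ 0 → ‖ζ - w‖ + ‖w‖ < 1 →
      0 ≤ Qf (deriv h ζ) (deriv (deriv h) ζ) (deriv g ζ) (deriv (deriv g) ζ) w) :
    ∀ ζ w : ℂ, w ≠ 0 → ‖ζ - w‖ + ‖w‖ < 1 →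
      0 < Qf (deriv h ζ) (deriv (deriv h) ζ) (deriv g ζ) (deriv (deriv g) ζ) w := by
  intro ζ w hw hlt
  have hζ : ζ ∈ ball (0:ℂ) 1 := by
    rw [mem_ball_zero_iff]
    calc ‖ζ‖ = ‖(ζ - w) + w‖ := by ring_nf
      _ ≤ ‖ζ - w‖ + ‖w‖ := norm_add_le _ _
      _ < 1 := hlt
  have hJ := normSq_lt_of_norm_lt (hsp ζ hζ)
  have hwp : 0 < ‖w‖ := norm_pos_iff.2 hw
  have hN : 0 < normSq w := normSq_pos.2 hw
  set ε : ℝ := (1 - (‖ζ - w‖ + ‖w‖)) / (4 * ‖w‖) with hε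
  have hεp : 0 < ε := by rw [hε]; apply div_pos <;> linarith
  have hεw : ε * ‖w‖ = (1 - (‖ζ - w‖ + ‖w‖)) / 4 := by rw [hε]; field_simp
  have hs : ‖ζ - ((1 + ε : ℝ) : ℂ) * w‖ + ‖((1 + ε : ℝ) : ℂ) * w‖ < 1 := by
    have e1 : ζ - ((1 + ε : ℝ) : ℂ) * w = (ζ - w) - (ε : ℂ) * w := by push_cast; ring
    have e2 : ‖((1 + ε : ℝ) : ℂ) * w‖ = (1 + ε) * ‖w‖ := by
      rw [norm_mul, norm_real, Real.norm_of_nonneg (by linarith)]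
    have e3 : ‖(ε : ℂ) * w‖ = ε * ‖w‖ := by
      rw [norm_mul, norm_real, Real.norm_of_nonneg hεp.le]
    have := norm_sub_le (ζ - w) ((ε : ℂ) * w)
    rw [e1, e2]; rw [e3] at this
    nlinarith
  have h0 := H ζ (((1 + ε : ℝ) : ℂ) * w) (mul_ne_zero (by exact_mod_cast (by linarith : (1 + ε) ≠ 0)) hw) hs
  rw [Qf_smul] at h0
  rw [Qf_eq]
  set B := Bf (deriv h ζ) (deriv (deriv h) ζ) (deriv g ζ) (deriv (deriv g) ζ) w
  have hA : 0 < normSq w * (normSq (deriv h ζ) - normSq (deriv g ζ)) := mul_pos hN hJ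
  set A := normSq w * (normSq (deriv h ζ) - normSq (deriv g ζ))
  have h1 : 0 ≤ (1 + ε) ^ 2 * (A + (1 + ε) * B) := by nlinarith
  have h2 : 0 ≤ A + (1 + ε) * B := by
    by_contra hc
    push Not at hc
    have : 0 < (1 + ε) ^ 2 := by positivity
    nlinarith
  by_contra hc
  push Not at hc
  nlinarith

lemma kpos {ζ b : ℂ} (hζ : ‖ζ‖ < 1) (hb : ‖b‖ < 1) :
    0 < 1 + ‖b‖ ^ 2 - 2 * (conj b * ζ).re := by
  have h1 : (conj b * ζ).re ≤ ‖b‖ * ‖ζ‖ := by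
    have := re_le_norm (conj b * ζ)
    rwa [norm_mul, norm_conj] at this
  have h2 : ‖b‖ * ‖ζ‖ ≤ ‖b‖ := by nlinarith [norm_nonneg b]
  nlinarith

lemma kid (ζ b : ℂ) :
    ((1 + ‖b‖ ^ 2 - 2 * (conj b * ζ).re : ℝ) : ℂ) * ζ - (ζ - b) * (1 - ζ * conj b)
      = ((1 - ‖ζ‖ ^ 2 : ℝ) : ℂ) * b := by
  rw [← normSq_eq_norm_sq, ← normSq_eq_norm_sq]
  apply Complex.ext <;> simp [normSq_apply] <;> ring

/-- the displayed expression (iii), rewritten -/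
lemma iii_iff (p p2 q q2 ζ b : ℂ) :
    (‖ζ - b‖ ^ 2 * ‖1 - ζ * conj b‖ ^ 2 * ‖q‖ ^ 2
          * (1 + ‖b‖ ^ 2 - 2 * (conj b * ζ).re)
        + ‖ζ - b‖ ^ 2 * ‖1 - ζ * conj b‖ ^ 2
          * ((ζ - b) * (1 - ζ * conj b) * q2 * conj q).re
        + ((ζ - b) ^ 3 * (1 - ζ * conj b) ^ 3
          * (p2 * q - p * q2)).re
      ≤ ‖ζ - b‖ ^ 2 * ‖1 - ζ * conj b‖ ^ 2 * ‖p‖ ^ 2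
          * (1 + ‖b‖ ^ 2 - 2 * (conj b * ζ).re)
        + ‖ζ - b‖ ^ 2 * ‖1 - ζ * conj b‖ ^ 2
          * ((ζ - b) * (1 - ζ * conj b) * p2 * conj p).re) ↔
    0 ≤ (1 + ‖b‖ ^ 2 - 2 * (conj b * ζ).re) *
      (normSq ((ζ - b) * (1 - ζ * conj b)) * (normSq p - normSq q))
      + Bf p p2 q q2 ((ζ - b) * (1 - ζ * conj b)) := by
  unfold Bf
  rw [normSq_mul, normSq_eq_norm_sq, normSq_eq_norm_sq, normSq_eq_norm_sq p,
    normSq_eq_norm_sq q, mul_pow (ζ - b)]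
  rw [← sub_nonneg]
  apply iff_of_eq
  congr 1
  ring

lemma Q_of_k (p p2 q q2 v : ℂ) {k : ℝ} (hk : 0 < k) :
    0 ≤ Qf p p2 q q2 (((k⁻¹ : ℝ) : ℂ) * v) ↔
      0 ≤ k * (normSq v * (normSq p - normSq q)) + Bf p p2 q q2 v := by
  rw [Qf_smul]
  have : (k⁻¹) ^ 2 * (normSq v * (normSq p - normSq q)) + (k⁻¹) ^ 3 * Bf p p2 q q2 v
     = (k⁻¹) ^ 3 * (k * (normSq v * (normSq p - normSq q)) + Bf p p2 q q2 v) := by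
    field_simp
  rw [this]
  exact mul_nonneg_iff_of_pos_left (by positivity)

lemma disc_of_b {ζ b : ℂ} (hζ : ‖ζ‖ < 1) (hb : ‖b‖ < 1) :
    ‖ζ - (((1 + ‖b‖ ^ 2 - 2 * (conj b * ζ).re)⁻¹ : ℝ) : ℂ) * ((ζ - b) * (1 - ζ * conj b))‖
      + ‖(((1 + ‖b‖ ^ 2 - 2 * (conj b * ζ).re)⁻¹ : ℝ) : ℂ) * ((ζ - b) * (1 - ζ * conj b))‖ < 1 := by
  have hk := kpos hζ hb
  have hid := kid ζ b
  have hX : ‖ζ - b‖ ^ 2 = (1 + ‖b‖ ^ 2 - 2 * (conj b * ζ).re) - (1 - ‖ζ‖ ^ 2) := by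
    simp only [← normSq_eq_norm_sq]
    simp [normSq_apply]; ring
  have hY : ‖1 - ζ * conj b‖ ^ 2 = (1 + ‖b‖ ^ 2 - 2 * (conj b * ζ).re)
      - ‖b‖ ^ 2 * (1 - ‖ζ‖ ^ 2) := by
    simp only [← normSq_eq_norm_sq]
    simp [normSq_apply]; ring
  set k := 1 + ‖b‖ ^ 2 - 2 * (conj b * ζ).re with hkdef
  have e1 : ζ - ((k⁻¹ : ℝ) : ℂ) * ((ζ - b) * (1 - ζ * conj b))
      = ((k⁻¹ : ℝ) : ℂ) * (((1 - ‖ζ‖ ^ 2 : ℝ) : ℂ) * b) := by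
    rw [← hid]
    have : (k : ℂ) ≠ 0 := by exact_mod_cast hk.ne'
    push_cast
    field_simp
  have hm : 0 < 1 - ‖ζ‖ ^ 2 := by nlinarith [norm_nonneg ζ]
  rw [e1, norm_mul, norm_mul, norm_mul, norm_mul, norm_real, norm_real,
    Real.norm_of_nonneg hm.le, Real.norm_of_nonneg (inv_pos.2 hk).le, ← mul_add,
    inv_mul_lt_iff₀ hk, mul_one]
  set X := ‖ζ - b‖
  set Y := ‖1 - ζ * conj b‖
  set m := 1 - ‖ζ‖ ^ 2
  set β := ‖b‖
  have hβ : 0 ≤ β := norm_nonneg _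
  have hkm : m ≤ k := by nlinarith [sq_nonneg X]
  have hpos : 0 < k - m * β := by nlinarith
  have : (X * Y) ^ 2 < (k - m * β) ^ 2 := by
    rw [mul_pow, hX, hY]
    have : 0 < k * m * (1 - β) ^ 2 := by
      have : 0 < 1 - β := by linarith
      positivity
    nlinarith
  have := lt_of_pow_lt_pow_left₀ 2 hpos.le this
  linarith

lemma b_of_disc {ζ w : ℂ} (hlt : ‖ζ - w‖ + ‖w‖ < 1) :
    ∃ b : ℂ, ‖b‖ < 1 ∧
      (((1 + ‖b‖ ^ 2 - 2 * (conj b * ζ).re)⁻¹ : ℝ) : ℂ) * ((ζ - b) * (1 - ζ * conj b)) = w := by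
  have hζ : ‖ζ‖ < 1 := by
    calc ‖ζ‖ = ‖(ζ - w) + w‖ := by ring_nf
      _ ≤ ‖ζ - w‖ + ‖w‖ := norm_add_le _ _
      _ < 1 := hlt
  obtain ⟨a, ha⟩ : ∃ a, a = ζ - w := ⟨_, rfl⟩
  rw [← ha] at hlt
  have hw : w = ζ - a := by rw [ha]; ring
  set α := ‖a‖ with hα
  set r := ‖w‖ with hr
  have hα0 : 0 ≤ α := norm_nonneg _
  have hr0 : 0 ≤ r := norm_nonneg _
  set β := 1 + α ^ 2 - r ^ 2 with hβ
  have hβα : 2 * α < β := by nlinarith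
  set D := Real.sqrt (β ^ 2 - 4 * α ^ 2)
  have hD0 : 0 ≤ D := Real.sqrt_nonneg _
  have hD : D ^ 2 = β ^ 2 - 4 * α ^ 2 := Real.sq_sqrt (by nlinarith)
  have hBD : 0 < β + D := by linarith
  set s := 2 / (β + D) with hs
  have hs0 : 0 < s := by positivity
  have hP : s ^ 2 * α ^ 2 - s * β + 1 = 0 := by
    rw [hs]; field_simp; nlinarith
  have hb : ‖(s : ℂ) * a‖ = s * α := by
    rw [norm_mul, norm_real, Real.norm_of_nonneg hs0.le]
  have hsα : s * α < 1 := by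
    rw [hs, div_mul_eq_mul_div, div_lt_one hBD]; linarith
  have hb1 : ‖(s : ℂ) * a‖ < 1 := hb ▸ hsα
  refine ⟨(s : ℂ) * a, hb1, ?_⟩
  have hk := kpos hζ hb1
  have hid := kid ζ ((s : ℂ) * a)
  have hkk : 1 + ‖(s : ℂ) * a‖ ^ 2 - 2 * (conj ((s : ℂ) * a) * ζ).re = s * (1 - ‖ζ‖ ^ 2) := by
    have e : 2 * (conj ((s : ℂ) * a) * ζ).re = s * (α ^ 2 + ‖ζ‖ ^ 2 - r ^ 2) := by
      rw [hr, hw, hα]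
      simp only [← normSq_eq_norm_sq]
      simp [normSq_apply]; ring
    rw [e, hb]; nlinarith
  set k := 1 + ‖(s : ℂ) * a‖ ^ 2 - 2 * (conj ((s : ℂ) * a) * ζ).re with hkdef
  have hkc : (k : ℂ) ≠ 0 := by exact_mod_cast hk.ne'
  have e2 : ((1 - ‖ζ‖ ^ 2 : ℝ) : ℂ) * ((s : ℂ) * a) = (k : ℂ) * a := by
    rw [hkk]; push_cast; ring
  rw [e2] at hid
  have : (ζ - (s : ℂ) * a) * (1 - ζ * conj ((s : ℂ) * a)) = (k : ℂ) * w := by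
    rw [hw]; linear_combination -hid
  rw [this]; push_cast; field_simp

lemma iii_iff_iv (h g : ℂ → ℂ) :
    (∀ ζ ∈ ball (0:ℂ) 1, ∀ b ∈ ball (0:ℂ) 1,
      ‖ζ - b‖ ^ 2 * ‖1 - ζ * conj b‖ ^ 2 * ‖deriv g ζ‖ ^ 2
          * (1 + ‖b‖ ^ 2 - 2 * (conj b * ζ).re)
        + ‖ζ - b‖ ^ 2 * ‖1 - ζ * conj b‖ ^ 2
          * ((ζ - b) * (1 - ζ * conj b) * deriv (deriv g) ζ * conj (deriv g ζ)).re
        + ((ζ - b) ^ 3 * (1 - ζ * conj b) ^ 3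
          * (deriv (deriv h) ζ * deriv g ζ - deriv h ζ * deriv (deriv g) ζ)).re
      ≤ ‖ζ - b‖ ^ 2 * ‖1 - ζ * conj b‖ ^ 2 * ‖deriv h ζ‖ ^ 2
          * (1 + ‖b‖ ^ 2 - 2 * (conj b * ζ).re)
        + ‖ζ - b‖ ^ 2 * ‖1 - ζ * conj b‖ ^ 2
          * ((ζ - b) * (1 - ζ * conj b) * deriv (deriv h) ζ * conj (deriv h ζ)).re) ↔
    ∀ ζ w : ℂ, w ≠ 0 → ‖ζ - w‖ + ‖w‖ < 1 →
      0 ≤ Qf (deriv h ζ) (deriv (deriv h) ζ) (deriv g ζ) (deriv (deriv g) ζ) w := by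
  simp only [iii_iff]
  constructor
  · intro H ζ w hw hlt
    have hζ : ‖ζ‖ < 1 := by
      calc ‖ζ‖ = ‖(ζ - w) + w‖ := by ring_nf
        _ ≤ ‖ζ - w‖ + ‖w‖ := norm_add_le _ _
        _ < 1 := hlt
    obtain ⟨b, hb, hbw⟩ := b_of_disc hlt
    have := H ζ (by simpa using hζ) b (by simpa using hb)
    rw [← Q_of_k _ _ _ _ _ (kpos hζ hb), hbw] at this
    exact this
  · intro H ζ hζ b hb
    rw [mem_ball_zero_iff] at hζ hb
    rw [← Q_of_k _ _ _ _ _ (kpos hζ hb)]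
    by_cases hz : (((1 + ‖b‖ ^ 2 - 2 * (conj b * ζ).re)⁻¹ : ℝ) : ℂ) *
        ((ζ - b) * (1 - ζ * conj b)) = 0
    · rw [hz]; simp [Qf]
    · exact H ζ _ hz (disc_of_b hζ hb)

open Filter Topology Set

/-- Sense preserving harmonic data on the unit disc. -/
structure SP (h g : ℂ → ℂ) : Prop where
  hh : DifferentiableOn ℂ h (ball (0:ℂ) 1)
  hg : DifferentiableOn ℂ g (ball (0:ℂ) 1)
  hsp : ∀ z ∈ ball (0:ℂ) 1, ‖deriv g z‖ < ‖deriv h z‖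

/-- The harmonic map. -/
def HF (h g : ℂ → ℂ) (z : ℂ) : ℂ := h z + conj (g z)

lemma norm_lower (p q v : ℂ) : (‖p‖ - ‖q‖) * ‖v‖ ≤ ‖p * v + conj (q * v)‖ := by
  have := norm_sub_norm_le (p * v) (-conj (q * v))
  rw [norm_neg, norm_conj, norm_mul, norm_mul, sub_neg_eq_add] at this
  linarith

lemma exists_equiv {p q : ℂ} (hpq : ‖q‖ < ‖p‖) :
    ∃ e : ℂ ≃L[ℝ] ℂ, ∀ v, e v = p * v + conj (q * v) := by
  let L : ℂ →ₗ[ℝ] ℂ :=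
    { toFun := fun v => p * v + conj (q * v)
      map_add' := by intro x y; simp only [mul_add, map_add]; ring
      map_smul' := by
        intro m x
        simp only [real_smul, map_mul, conj_ofReal, RingHom.id_apply]; ring }
  have hL : Function.Injective L := by
    rw [injective_iff_map_eq_zero]
    intro v hv
    have h1 := norm_lower p q v
    have h2 : p * v + conj (q * v) = 0 := hv
    rw [h2, norm_zero] at h1
    have h3 : 0 ≤ ‖v‖ := norm_nonneg v
    have : ‖v‖ = 0 := by nlinarith
    exact norm_eq_zero.1 this
  refine ⟨(LinearEquiv.ofInjectiveEndo L hL).toContinuousLinearEquiv, fun v => rfl⟩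

namespace SP

variable {h g : ℂ → ℂ} (H : SP h g)
include H

lemma dh {z : ℂ} (hz : z ∈ ball (0:ℂ) 1) : HasDerivAt h (deriv h z) z :=
  (H.hh.differentiableAt (isOpen_ball.mem_nhds hz)).hasDerivAt

lemma dg {z : ℂ} (hz : z ∈ ball (0:ℂ) 1) : HasDerivAt g (deriv g z) z :=
  (H.hg.differentiableAt (isOpen_ball.mem_nhds hz)).hasDerivAt

lemma dh2 {z : ℂ} (hz : z ∈ ball (0:ℂ) 1) : HasDerivAt (deriv h) (deriv (deriv h) z) z :=
  ((H.hh.deriv isOpen_ball).differentiableAt (isOpen_ball.mem_nhds hz)).hasDerivAt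

lemma dg2 {z : ℂ} (hz : z ∈ ball (0:ℂ) 1) : HasDerivAt (deriv g) (deriv (deriv g) z) z :=
  ((H.hg.deriv isOpen_ball).differentiableAt (isOpen_ball.mem_nhds hz)).hasDerivAt

lemma strict {z : ℂ} (hz : z ∈ ball (0:ℂ) 1) :
    ∃ e : ℂ ≃L[ℝ] ℂ, (∀ v, e v = deriv h z * v + conj (deriv g z * v)) ∧
      HasStrictFDerivAt (HF h g) (e : ℂ →L[ℝ] ℂ) z := by
  obtain ⟨e, he⟩ := exists_equiv (H.hsp z hz)
  refine ⟨e, he, ?_⟩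
  have h1 : HasStrictDerivAt h (deriv h z) z :=
    ((H.hh.analyticAt (isOpen_ball.mem_nhds hz)).hasStrictDerivAt)
  have h2 : HasStrictDerivAt g (deriv g z) z :=
    ((H.hg.analyticAt (isOpen_ball.mem_nhds hz)).hasStrictDerivAt)
  have h1' := h1.hasStrictFDerivAt.restrictScalars ℝ
  have h2' := h2.hasStrictFDerivAt.restrictScalars ℝ
  have h3 := h1'.add ((conjCLE : ℂ ≃L[ℝ] ℂ).toContinuousLinearMap.hasStrictFDerivAt.comp z h2')
  refine (h3.congr_fderiv ?_)
  ext v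
  simp [he]
  ring

lemma cont {z : ℂ} (hz : z ∈ ball (0:ℂ) 1) : ContinuousAt (HF h g) z := by
  obtain ⟨e, _, he⟩ := H.strict hz
  exact he.hasFDerivAt.continuousAt

lemma comp_deriv {γ : ℝ → ℂ} {v : ℂ} {t : ℝ} (hγ : HasDerivAt γ v t)
    (ht : γ t ∈ ball (0:ℂ) 1) :
    HasDerivAt (fun s => HF h g (γ s)) (deriv h (γ t) * v + conj (deriv g (γ t) * v)) t := by
  obtain ⟨e, he, hs⟩ := H.strict ht
  have := hs.hasFDerivAt.comp_hasDerivAt t hγ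
  rw [← he]
  exact this

lemma isOpen_image {s : Set ℂ} (hs : IsOpen s) (hsub : s ⊆ ball (0:ℂ) 1) :
    IsOpen (HF h g '' s) := by
  rw [isOpen_iff_mem_nhds]
  rintro _ ⟨x, hx, rfl⟩
  obtain ⟨e, he, hs'⟩ := H.strict (hsub hx)
  rw [← hs'.map_nhds_eq_of_equiv]
  exact image_mem_map (hs.mem_nhds hx)

/-- local injectivity -/
lemma local_inj {z : ℂ} (hz : z ∈ ball (0:ℂ) 1) :
    ∃ k : ℂ → ℂ, ∀ᶠ x in 𝓝 z, k (HF h g x) = x := by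
  obtain ⟨e, he, hs'⟩ := H.strict hz
  exact ⟨_, hs'.eventually_left_inverse⟩

/-- derivative of a lift of a segment -/
lemma lift_deriv {γ : ℝ → ℂ} {S : Set ℝ} {t : ℝ} (htS : t ∈ S) (hγ : ContinuousWithinAt γ S t)
    (ht : γ t ∈ ball (0:ℂ) 1) {p c : ℂ} (hl : ∀ s ∈ S, HF h g (γ s) = p + (s : ℂ) * c) :
    ∃ v, HasDerivWithinAt γ v S t ∧ deriv h (γ t) * v + conj (deriv g (γ t) * v) = c := by
  obtain ⟨e, he, hs⟩ := H.strict ht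
  refine ⟨e.symm c, ?_, by rw [← he]; simp⟩
  have h1 : HasDerivAt (fun s : ℝ => p + (s : ℂ) * c) c t := by
    simpa using ((ofRealCLM.hasDerivAt (x := t)).mul_const c).const_add p
  have h2 := hs.to_localInverse.hasFDerivAt
  rw [hl t htS] at h2
  have h3 := h2.comp_hasDerivAt t h1
  refine (h3.hasDerivWithinAt (s := S)).congr_of_eventuallyEq ?_ ?_
  · have := hγ.eventually hs.eventually_left_inverse
    filter_upwards [this, self_mem_nhdsWithin] with s h1 h2
    rw [hl s h2] at h1
    exact h1.symm
  · have := hs.eventually_left_inverse.self_of_nhds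
    rw [hl t htS] at this
    exact this.symm

end SP

/-- explicit inverse of the differential -/
lemma solve_v {p q v c : ℂ} (hpq : ‖q‖ < ‖p‖) (hv : p * v + conj (q * v) = c) :
    v = (conj p * c - conj q * conj c) / (p * conj p - q * conj q) := by
  have hJ := normSq_lt_of_norm_lt hpq
  have : p * conj p - q * conj q ≠ 0 := by
    rw [mul_conj, mul_conj]; exact_mod_cast hJ.ne'
  rw [eq_div_iff this, ← hv]
  simp only [map_add, map_mul, conj_conj]
  ring

lemma second_deriv_nonpos {ρ ρ' : ℝ → ℝ} {t d : ℝ} (h1 : ∀ᶠ s in 𝓝 t, HasDerivAt ρ (ρ' s) s)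
    (h2 : HasDerivAt ρ' d t) (hmax : IsLocalMax ρ t) : ρ' t = 0 ∧ d ≤ 0 := by
  have h0 : ρ' t = 0 := hmax.hasDerivAt_eq_zero h1.self_of_nhds
  refine ⟨h0, ?_⟩
  by_contra hd
  push Not at hd
  have e1 : deriv ρ =ᶠ[𝓝 t] ρ' := h1.mono fun s hs => hs.deriv
  have e2 : deriv (deriv ρ) t = d := by rw [e1.deriv_eq]; exact h2.deriv
  have hmin : IsLocalMin ρ t := isLocalMin_of_deriv_deriv_pos (by rw [e2]; exact hd)
    (by rw [e1.self_of_nhds, h0]) h1.self_of_nhds.continuousAt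
  have hc : ρ =ᶠ[𝓝 t] fun _ => ρ t := by
    filter_upwards [hmax, hmin] with s a b using le_antisymm a b
  have e3 : deriv ρ =ᶠ[𝓝 t] fun _ => 0 := by
    have := hc.deriv
    simpa using this
  have e4 : deriv (deriv ρ) t = 0 := by rw [e3.deriv_eq]; simp
  linarith

/-- algebra for the second derivative -/
lemma key_alg {p p2 q q2 w v v2 c : ℂ} (hpq : ‖q‖ < ‖p‖) (hw : w ≠ 0) (hc : c ≠ 0)
    (hv : p * v + conj (q * v) = c)
    (hv2 : p2 * v * v + p * v2 + conj (q2 * v * v + q * v2) = 0)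
    (hperp : (conj w * v).re = 0) (hQ : 0 < Qf p p2 q q2 w) :
    0 < normSq v + (conj w * v2).re := by
  have hJ := normSq_lt_of_norm_lt hpq
  have hN := normSq_pos.2 hw
  obtain ⟨κ, hκ⟩ : ∃ κ : ℝ, v = I * (κ : ℂ) * w := by
    obtain ⟨μ, e⟩ : ∃ μ : ℝ, conj w * v = (μ : ℂ) * I := by
      refine ⟨(conj w * v).im, ?_⟩
      apply Complex.ext
      · rw [hperp]; simp
      · simp
    refine ⟨μ / normSq w, ?_⟩
    have hc' : conj w * w = (normSq w : ℂ) := by rw [mul_comm, mul_conj]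
    have hNc : (normSq w : ℂ) ≠ 0 := by exact_mod_cast hN.ne'
    rw [ofReal_div]
    field_simp
    rw [← hc']
    linear_combination w * e
  have hκ0 : κ ≠ 0 := by
    rintro rfl
    apply hc; rw [← hv, hκ]; simp
  have hJv2 : ((normSq p - normSq q : ℝ) : ℂ) * v2 = (κ ^ 2 : ℝ) * (conj p * (p2 * w ^ 2 + conj (q2 * w ^ 2))
      - conj q * conj (p2 * w ^ 2 + conj (q2 * w ^ 2))) := by
    push_cast
    rw [← mul_conj, ← mul_conj]
    have hv3 := congrArg conj hv2
    rw [hκ] at hv2 hv3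
    simp only [map_add, map_mul, conj_conj, conj_I, conj_ofReal, map_zero, map_pow, map_neg] at hv2 hv3 ⊢
    linear_combination conj p * hv2 - conj q * hv3 - (κ^2 * (conj p * (p2 * w^2 + conj q2 * conj w ^ 2) - conj q * (conj p2 * conj w ^ 2 + q2 * w ^ 2))) * I_sq
  have hnv : normSq v = κ ^ 2 * normSq w := by
    rw [hκ, normSq_mul, normSq_mul, normSq_I, normSq_ofReal]; ring
  have hre : (normSq p - normSq q) * (conj w * v2).re
      = κ ^ 2 * Bf p p2 q q2 w := by
    rw [← re_ofReal_mul]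
    have : ((normSq p - normSq q : ℝ) : ℂ) * (conj w * v2) = (κ ^ 2 : ℝ) * (conj w * (conj p * (p2 * w ^ 2 + conj (q2 * w ^ 2))
      - conj q * conj (p2 * w ^ 2 + conj (q2 * w ^ 2)))) := by linear_combination conj w * hJv2
    rw [this, re_ofReal_mul]
    congr 1
    unfold Bf
    simp [normSq_apply, pow_succ]
    ring
  have : 0 < (normSq p - normSq q) * (normSq v + (conj w * v2).re) := by
    rw [mul_add, hre, hnv]
    have : 0 < κ ^ 2 * Qf p p2 q q2 w := by positivity
    rw [Qf_eq] at this
    nlinarith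
  exact pos_of_mul_pos_right this hJ.le

lemma conj_deriv {γ : ℝ → ℂ} {v : ℂ} {t : ℝ} (hγ : HasDerivAt γ v t) :
    HasDerivAt (fun s => conj (γ s)) (conj v) t := by
  have := (conjCLE : ℂ ≃L[ℝ] ℂ).toContinuousLinearMap.hasFDerivAt.comp_hasDerivAt t hγ
  exact this

lemma re_deriv {γ : ℝ → ℂ} {v : ℂ} {t : ℝ} (hγ : HasDerivAt γ v t) :
    HasDerivAt (fun s => (γ s).re) v.re t := by
  have := reCLM.hasFDerivAt.comp_hasDerivAt t hγ
  exact this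

namespace SP

variable {h g : ℂ → ℂ} (H : SP h g)
include H

/-- Maximum principle along lifted segments. -/
lemma max_principle {a : ℂ} {r : ℝ} (hsub : ball a r ⊆ ball (0:ℂ) 1)
    (hQ : ∀ ζ ∈ ball a r, ζ ≠ a →
      0 < Qf (deriv h ζ) (deriv (deriv h) ζ) (deriv g ζ) (deriv (deriv g) ζ) (ζ - a))
    {γ : ℝ → ℂ} (hγ : ContinuousOn γ (Icc 0 1)) (hγb : ∀ t ∈ Icc (0:ℝ) 1, γ t ∈ ball a r)
    {p c : ℂ} (hl : ∀ s ∈ Icc (0:ℝ) 1, HF h g (γ s) = p + (s : ℂ) * c) :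
    ∀ t ∈ Icc (0:ℝ) 1, ‖γ t - a‖ ≤ max ‖γ 0 - a‖ ‖γ 1 - a‖ := by
  obtain ⟨t, ht, htmax⟩ := isCompact_Icc.exists_isMaxOn (nonempty_Icc.2 (zero_le_one (α := ℝ)))
    ((hγ.sub continuousOn_const).norm : ContinuousOn (fun s => ‖γ s - a‖) (Icc 0 1))
  suffices hs : ‖γ t - a‖ ≤ max ‖γ 0 - a‖ ‖γ 1 - a‖ from fun s hs' => (htmax hs').trans hs
  by_contra hcon
  push Not at hcon
  rw [max_lt_iff] at hcon
  have ht0 : t ≠ 0 := by rintro rfl; exact lt_irrefl _ hcon.1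
  have ht1 : t ≠ 1 := by rintro rfl; exact lt_irrefl _ hcon.2
  have htI : t ∈ Ioo (0:ℝ) 1 := ⟨lt_of_le_of_ne ht.1 ht0.symm, lt_of_le_of_ne ht.2 ht1⟩
  -- derivative on all of Icc
  choose! v hv hvc using fun s (hs : s ∈ Icc (0:ℝ) 1) =>
    H.lift_deriv hs (hγ s hs) (hsub (hγb s hs)) hl
  have hw : γ t - a ≠ 0 := by
    have := (norm_nonneg _).trans_lt hcon.1
    exact norm_pos_iff.1 this
  by_cases hc : c = 0
  · -- constant path
    have hv0 : ∀ s ∈ Icc (0:ℝ) 1, v s = 0 := by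
      intro s hs
      have := solve_v (H.hsp _ (hsub (hγb s hs))) (hvc s hs)
      simpa [hc] using this
    have := (convex_Icc (0:ℝ) 1).norm_image_sub_le_of_norm_hasDerivWithin_le (C := 0) hv
      (fun s hs => by simp [hv0 s hs]) (left_mem_Icc.2 zero_le_one) ht
    have e : γ t = γ 0 := by
      rw [zero_mul] at this
      exact sub_eq_zero.1 (norm_eq_zero.1 (le_antisymm this (norm_nonneg _)))
    rw [e] at hcon
    exact lt_irrefl _ hcon.1
  have hnear : ∀ᶠ s in 𝓝 t, s ∈ Ioo (0:ℝ) 1 := isOpen_Ioo.mem_nhds htI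
  have hd : ∀ s ∈ Ioo (0:ℝ) 1, HasDerivAt γ (v s) s := fun s hs =>
    (hv s (Ioo_subset_Icc_self hs)).hasDerivAt (Icc_mem_nhds hs.1 hs.2)
  have hzt := hsub (hγb t ht)
  have hdt := hd t htI
  -- v is differentiable at t
  have hvd : DifferentiableAt ℝ v t := by
    have e : v =ᶠ[𝓝 t] fun s => (conj (deriv h (γ s)) * c - conj (deriv g (γ s)) * conj c) /
        (deriv h (γ s) * conj (deriv h (γ s)) - deriv g (γ s) * conj (deriv g (γ s))) := by
      filter_upwards [hnear] with s hs
      have hs' := Ioo_subset_Icc_self hs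
      exact solve_v (H.hsp _ (hsub (hγb s hs'))) (hvc s hs')
    have d1 : DifferentiableAt ℝ (fun s => deriv h (γ s)) t :=
      ((H.dh2 hzt).scomp t hdt).differentiableAt
    have d2 : DifferentiableAt ℝ (fun s => deriv g (γ s)) t :=
      ((H.dg2 hzt).scomp t hdt).differentiableAt
    have d1c : DifferentiableAt ℝ (fun s => conj (deriv h (γ s))) t :=
      (conj_deriv d1.hasDerivAt).differentiableAt
    have d2c : DifferentiableAt ℝ (fun s => conj (deriv g (γ s))) t :=
      (conj_deriv d2.hasDerivAt).differentiableAt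
    have hne : deriv h (γ t) * conj (deriv h (γ t)) - deriv g (γ t) * conj (deriv g (γ t)) ≠ 0 := by
      rw [mul_conj, mul_conj]; exact_mod_cast (normSq_lt_of_norm_lt (H.hsp _ hzt)).ne'
    refine DifferentiableAt.congr_of_eventuallyEq ?_ e
    exact ((d1c.mul_const c).sub (d2c.mul_const _)).div ((d1.mul d1c).sub (d2.mul d2c)) hne
  have hv2 := hvd.hasDerivAt
  set v2 := deriv v t
  have hv2eq : deriv (deriv h) (γ t) * v t * v t + deriv h (γ t) * v2
      + conj (deriv (deriv g) (γ t) * v t * v t + deriv g (γ t) * v2) = 0 := by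
    have d1 : HasDerivAt (fun s => deriv h (γ s)) (v t * deriv (deriv h) (γ t)) t :=
      ((H.dh2 hzt).scomp t hdt)
    have d2 : HasDerivAt (fun s => deriv g (γ s)) (v t * deriv (deriv g) (γ t)) t :=
      ((H.dg2 hzt).scomp t hdt)
    have d3 := (d1.mul hv2).add (conj_deriv (d2.mul hv2))
    have d4 : HasDerivAt (fun _ : ℝ => c) 0 t := hasDerivAt_const t c
    have e : (fun s => deriv h (γ s) * v s + conj (deriv g (γ s) * v s)) =ᶠ[𝓝 t] fun _ => c := by
      filter_upwards [hnear] with s hs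
      exact hvc s (Ioo_subset_Icc_self hs)
    have := (d4.congr_of_eventuallyEq e).unique d3
    rw [← sub_eq_zero] at this
    have h' := this.symm
    simp only [map_add, map_mul] at h' ⊢
    linear_combination h'
  -- the function ρ
  have hρ1 : ∀ᶠ s in 𝓝 t, HasDerivAt (fun s => normSq (γ s - a)) (2 * (conj (γ s - a) * v s).re) s := by
    filter_upwards [hnear] with s hs
    have d := (hd s hs).sub_const a
    have := re_deriv ((conj_deriv d).mul d)
    have e : (fun s => normSq (γ s - a)) = fun s => (conj (γ s - a) * (γ s - a)).re := by
      funext s; rw [mul_comm, mul_conj, ofReal_re]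
    rw [e]
    refine this.congr_deriv ?_
    simp; ring
  have hρ2 : HasDerivAt (fun s => 2 * (conj (γ s - a) * v s).re)
      (2 * (normSq (v t) + (conj (γ t - a) * v2).re)) t := by
    have d := (hdt).sub_const a
    have := (re_deriv ((conj_deriv d).mul hv2)).const_mul 2
    refine this.congr_deriv ?_
    rw [add_re, mul_comm (conj (v t)), mul_conj, ofReal_re]
  have hmax : IsLocalMax (fun s => normSq (γ s - a)) t := by
    filter_upwards [hnear] with s hs
    have := htmax (Ioo_subset_Icc_self hs)
    simp only [normSq_eq_norm_sq]
    exact pow_le_pow_left₀ (norm_nonneg _) this 2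
  obtain ⟨k1, k2⟩ := second_deriv_nonpos hρ1 hρ2 hmax
  have := key_alg (H.hsp _ hzt) hw hc (hvc t ht) hv2eq (by linarith)
    (hQ _ (hγb t ht) (sub_ne_zero.1 hw))
  linarith

end SP

/-- A lift of the segment from `f z0` to `f z`. -/
structure Lift (h g : ℂ → ℂ) (a : ℂ) (r : ℝ) (z0 z : ℂ) (γ : ℝ → ℂ) : Prop where
  cont : ContinuousOn γ (Icc 0 1)
  mem : ∀ t ∈ Icc (0:ℝ) 1, γ t ∈ ball a r
  seg : ∀ t ∈ Icc (0:ℝ) 1, HF h g (γ t) = HF h g z0 + (t : ℂ) * (HF h g z - HF h g z0)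
  zero : γ 0 = z0
  one : γ 1 = z

namespace SP

variable {h g : ℂ → ℂ} (H : SP h g)
include H

lemma isLocalHomeo {a : ℂ} {r : ℝ} (hsub : ball a r ⊆ ball (0:ℂ) 1) :
    IsLocalHomeomorph (fun x : ball a r => HF h g x) := by
  have h1 : IsLocalHomeomorphOn (HF h g) (ball a r) := by
    apply IsLocalHomeomorphOn.mk
    intro x hx
    obtain ⟨e, he, hs⟩ := H.strict (hsub hx)
    exact ⟨hs.toOpenPartialHomeomorph _, hs.mem_toOpenPartialHomeomorph_source, fun _ _ => rfl⟩
  have h2 : IsLocalHomeomorph (Subtype.val : ball a r → ℂ) :=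
    (isOpen_ball.isOpenEmbedding_subtypeVal).isLocalHomeomorph
  rw [isLocalHomeomorph_iff_isLocalHomeomorphOn_univ] at h2 ⊢
  exact h1.comp h2 (fun x _ => x.2)

lemma lift_open {a : ℂ} {r : ℝ} (hsub : ball a r ⊆ ball (0:ℂ) 1) {z0 : ℂ} (hz0 : z0 ∈ ball a r) :
    IsOpen {z | ∃ γ, Lift h g a r z0 z γ} := by
  rw [isOpen_iff_mem_nhds]
  rintro z ⟨γ, hγ⟩
  have hz : z ∈ ball a r := hγ.one ▸ hγ.mem 1 (right_mem_Icc.2 zero_le_one)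
  -- a neighbourhood whose segments are in the image
  have hU : IsOpen (HF h g '' ball a r) := H.isOpen_image isOpen_ball hsub
  have hK : IsCompact ((fun t : ℝ => HF h g z0 + (t : ℂ) * (HF h g z - HF h g z0)) '' Icc 0 1) :=
    isCompact_Icc.image (by fun_prop)
  have hKU : ((fun t : ℝ => HF h g z0 + (t : ℂ) * (HF h g z - HF h g z0)) '' Icc 0 1)
      ⊆ HF h g '' ball a r := by
    rintro _ ⟨t, ht, rfl⟩
    exact ⟨γ t, hγ.mem t ht, hγ.seg t ht⟩
  obtain ⟨ε, hε, hth⟩ := hK.exists_thickening_subset_open hU hKU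
  have hcz := H.cont (hsub hz)
  obtain ⟨δ, hδ, hδb⟩ := Metric.mem_nhds_iff.1 (Filter.inter_mem
    (hcz.eventually (Metric.ball_mem_nhds _ hε)) (isOpen_ball.mem_nhds hz))
  have hseg : ∀ t ∈ Icc (0:ℝ) 1, ∀ x ∈ ball z δ, ∃ y : ball a r,
      HF h g y = HF h g z0 + (t : ℂ) * (HF h g x - HF h g z0) := by
    intro t ht x hx
    have hx1 : dist (HF h g x) (HF h g z) < ε := (hδb hx).1
    have : HF h g z0 + (t : ℂ) * (HF h g x - HF h g z0) ∈ HF h g '' ball a r := by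
      apply hth
      rw [Metric.mem_thickening_iff]
      refine ⟨_, ⟨t, ht, rfl⟩, ?_⟩
      rw [dist_eq_norm] at hx1 ⊢
      have e : HF h g z0 + (t : ℂ) * (HF h g x - HF h g z0)
          - (HF h g z0 + (t : ℂ) * (HF h g z - HF h g z0)) = (t : ℂ) * (HF h g x - HF h g z) := by
        ring
      simp only [e]
      rw [norm_mul, norm_real, Real.norm_of_nonneg ht.1]
      nlinarith [ht.2, norm_nonneg (HF h g x - HF h g z)]
    obtain ⟨y, hy, hye⟩ := this
    exact ⟨⟨y, hy⟩, hye⟩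
  classical
  have : Nonempty (ball a r) := ⟨⟨z0, hz0⟩⟩
  choose! y hy using hseg
  let A := ball z δ
  let F : C(unitInterval × A, ℂ) :=
    { toFun := fun q => HF h g z0 + ((q.1 : ℝ) : ℂ) * (HF h g (q.2 : ℂ) - HF h g z0)
      continuous_toFun := by
        have : Continuous fun q : A => HF h g (q : ℂ) := by
          rw [continuous_iff_continuousAt]
          intro q
          have := H.cont (hsub (hδb q.2).2)
          exact this.comp continuousAt_subtype_val
        exact continuous_const.add ((continuous_ofReal.comp (continuous_subtype_val.comp continuous_fst)).mul ((this.comp continuous_snd).sub continuous_const)) }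
  let za : A := ⟨z, mem_ball_self hδ⟩
  let G : unitInterval × A → ball a r := fun q =>
    if q.1 = 0 then ⟨z0, hz0⟩ else if q.2 = za then ⟨γ q.1, hγ.mem _ q.1.2⟩ else y q.1 q.2
  have hG0 : ∀ x, G (0, x) = ⟨z0, hz0⟩ := fun x => by simp [G]
  have hGz : ∀ t : unitInterval, G (t, za) = ⟨γ t, hγ.mem _ t.2⟩ := by
    intro t
    by_cases ht : t = 0
    · subst ht
      simp [G, hγ.zero]
    · simp [G, ht]
  have hGl : (fun x : ball a r => HF h g x) ∘ G = F := by
    funext ⟨t, x⟩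
    by_cases ht : t = 0
    · subst ht
      simp [G, F]
    · by_cases hx : x = za
      · subst hx
        have := hγ.seg t t.2
        simp only [Function.comp, hGz]
        exact this
      · simp only [G, Function.comp, ht, hx, if_false]
        exact hy t t.2 x x.2
  obtain ⟨N, hN, G', hG'c, hG'l, hG'0, hG'z⟩ := (H.isLocalHomeo hsub).exists_lift_nhds hGl
    (by simp only [hG0]; exact continuous_const) za
    (by
      simp only [hGz]
      refine Continuous.subtype_mk ?_ _
      exact hγ.cont.comp_continuous continuous_subtype_val (fun t => t.2))
  obtain ⟨k, hk⟩ := H.local_inj (hsub hz)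
  have hlim : Tendsto (fun x : A => ((G' (1, x) : ball a r) : ℂ)) (𝓝 za) (𝓝 z) := by
    have h1 : ContinuousAt G' (1, za) := hG'c.continuousAt (prod_mem_nhds univ_mem hN)
    have h2 : ContinuousAt (fun x : A => G' (1, x)) za :=
      ContinuousAt.comp (g := G') (f := fun x : A => ((1 : unitInterval), x)) h1 (by fun_prop)
    have h3 := continuous_subtype_val.continuousAt.comp h2
    have h4 : ((G' (1, za) : ball a r) : ℂ) = z := by
      rw [hG'z, hGz]; exact hγ.one
    have h5 : Tendsto (fun x : A => ((G' (1, x) : ball a r) : ℂ)) (𝓝 za)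
      (𝓝 ((G' (1, za) : ball a r) : ℂ)) := h3
    rwa [h4] at h5
  have hev : ∀ᶠ x : A in 𝓝 za, ∃ γ, Lift h g a r z0 (x : ℂ) γ := by
    have hk2 : ∀ᶠ x : A in 𝓝 za, k (HF h g (x : ℂ)) = x :=
      (continuous_subtype_val.tendsto za).eventually hk
    filter_upwards [hN, hlim.eventually hk, hk2] with x hxN hx1 hx2
    refine ⟨fun t => (G' (projIcc 0 1 zero_le_one t, x) : ball a r), ?_, ?_, ?_, ?_, ?_⟩
    · apply Continuous.continuousOn
      apply continuous_subtype_val.comp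
      exact hG'c.comp_continuous (continuous_projIcc.prodMk continuous_const)
        (fun t => ⟨mem_univ _, hxN⟩)
    · intro t _; exact (G' _).2
    · intro t ht
      have := congrFun hG'l (projIcc 0 1 zero_le_one t, x)
      simp only [Function.comp] at this
      rw [this]
      simp only [F, ContinuousMap.coe_mk]
      rw [projIcc_of_mem _ ht]
    · have : projIcc (0:ℝ) 1 zero_le_one 0 = 0 := projIcc_left _
      simp only [this, hG'0, hG0]
    · have e : projIcc (0:ℝ) 1 zero_le_one 1 = 1 := projIcc_right _
      simp only [e]
      have := congrFun hG'l (1, x)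
      simp only [Function.comp] at this
      rw [this] at hx1
      rw [← hx1]
      simp only [F, ContinuousMap.coe_mk]
      simp [hx2]
  rw [nhds_subtype_eq_comap] at hev
  have h6 : Filter.map (Subtype.val : A → ℂ) (𝓝 za) = 𝓝 z :=
    (isOpen_ball.isOpenEmbedding_subtypeVal).map_nhds_eq za
  rw [← h6, nhds_subtype_eq_comap]
  exact hev

lemma lift_closed {a : ℂ} {r : ℝ} (hsub : ball a r ⊆ ball (0:ℂ) 1)
    (hQ : ∀ ζ ∈ ball a r, ζ ≠ a →
      0 < Qf (deriv h ζ) (deriv (deriv h) ζ) (deriv g ζ) (deriv (deriv g) ζ) (ζ - a))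
    {z0 : ℂ} (hz0 : z0 ∈ ball a r) :
    closure {z | ∃ γ, Lift h g a r z0 z γ} ∩ ball a r ⊆ {z | ∃ γ, Lift h g a r z0 z γ} := by
  rintro z ⟨hzc, hz⟩
  obtain ⟨u, huE, huz⟩ := mem_closure_iff_ultrafilter.1 hzc
  choose! γ hγ using fun x (hx : x ∈ {z | ∃ γ, Lift h g a r z0 z γ}) => hx
  rw [mem_ball, dist_eq_norm] at hz hz0
  set ρ : ℝ := max ‖z0 - a‖ ((‖z - a‖ + r) / 2) with hρ
  have hρr : ρ < r := max_lt hz0 (by linarith)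
  have hzρ : ‖z - a‖ < ρ := lt_of_lt_of_le (by linarith) (le_max_right _ _)
  have hKsub : closedBall a ρ ⊆ ball a r := closedBall_subset_ball hρr
  have hK : IsCompact (closedBall a ρ) := isCompact_closedBall a ρ
  have hcont : ContinuousOn (HF h g) (ball a r) := fun x hx =>
    (H.cont (hsub hx)).continuousWithinAt
  have hclose : ∀ᶠ x in (u : Filter ℂ), x ∈ closedBall a ρ := by
    have : closedBall a ρ ∈ 𝓝 z := by
      apply mem_of_superset (isOpen_ball.mem_nhds (_ : z ∈ ball a ρ)) ball_subset_closedBall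
      rwa [mem_ball, dist_eq_norm]
    exact huz this
  -- Lipschitz data
  have hJc : ContinuousOn (fun x => ‖deriv h x‖ - ‖deriv g x‖) (closedBall a ρ) := by
    intro x hx
    have hx' := hsub (hKsub hx)
    exact ((H.dh2 hx').continuousAt.norm.sub (H.dg2 hx').continuousAt.norm).continuousWithinAt
  obtain ⟨x1, hx1, hmin⟩ := hK.exists_isMinOn ⟨z, by
    rw [mem_closedBall, dist_eq_norm]; exact hzρ.le⟩ hJc
  set m := ‖deriv h x1‖ - ‖deriv g x1‖ with hm
  have hm0 : 0 < m := sub_pos.2 (H.hsp _ (hsub (hKsub hx1)))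
  obtain ⟨M, hM⟩ := hK.exists_bound_of_continuousOn
    (f := fun x => HF h g x - HF h g z0) ((hcont.mono hKsub).sub continuousOn_const)
  have hγK : ∀ᶠ x in (u : Filter ℂ), ∀ t ∈ Icc (0:ℝ) 1, γ x t ∈ closedBall a ρ := by
    filter_upwards [hclose, huE] with x hx hxE t ht
    have hL := hγ x hxE
    have := H.max_principle hsub hQ hL.cont hL.mem hL.seg t ht
    rw [hL.zero, hL.one] at this
    rw [mem_closedBall, dist_eq_norm] at hx ⊢
    exact this.trans (max_le (le_max_left _ _) hx)
  have hLip : ∀ᶠ x in (u : Filter ℂ), ∀ s ∈ Icc (0:ℝ) 1, ∀ t ∈ Icc (0:ℝ) 1,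
      dist (γ x s) (γ x t) ≤ (M / m) * dist s t := by
    filter_upwards [hclose, huE, hγK] with x hx hxE hxK s hs t ht
    have hL := hγ x hxE
    choose! v hv hvc using fun s (hs : s ∈ Icc (0:ℝ) 1) =>
      H.lift_deriv hs (hL.cont s hs) (hsub (hL.mem s hs)) hL.seg
    have := (convex_Icc (0:ℝ) 1).norm_image_sub_le_of_norm_hasDerivWithin_le (C := M / m) hv
      (fun s hs => by
        have h1 := norm_lower (deriv h (γ x s)) (deriv g (γ x s)) (v s)
        rw [hvc s hs] at h1
        have h2 : m ≤ ‖deriv h (γ x s)‖ - ‖deriv g (γ x s)‖ := hmin (hxK s hs)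
        have h3 := hM x hx
        rw [le_div_iff₀ hm0]
        nlinarith [norm_nonneg (v s)]) ht hs
    rw [dist_eq_norm, dist_eq_norm]
    exact this
  have hlim : ∀ t ∈ Icc (0:ℝ) 1, ∃ y ∈ closedBall a ρ, Tendsto (fun x => γ x t) u (𝓝 y) := by
    intro t ht
    have := hK.ultrafilter_le_nhds (u.map (fun x => γ x t))
      (by
        rw [le_principal_iff]
        exact hγK.mono fun x hx => hx t ht)
    exact this
  choose! Γ hΓK hΓ using hlim
  have h01 : (0:ℝ) ∈ Icc (0:ℝ) 1 := left_mem_Icc.2 zero_le_one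
  have h11 : (1:ℝ) ∈ Icc (0:ℝ) 1 := right_mem_Icc.2 zero_le_one
  refine ⟨Γ, ?_, fun t ht => hKsub (hΓK t ht), ?_, ?_, ?_⟩
  · have : LipschitzOnWith (Real.toNNReal (M / m)) Γ (Icc 0 1) := by
      apply LipschitzOnWith.of_dist_le_mul
      intro s hs t ht
      refine le_trans (le_of_tendsto ((hΓ s hs).dist (hΓ t ht))
        (hLip.mono fun x hx => hx s hs t ht)) ?_
      gcongr
      exact Real.le_coe_toNNReal _
    exact this.continuousOn
  · intro t ht
    have e1 : Tendsto (fun x => HF h g (γ x t)) u (𝓝 (HF h g (Γ t))) :=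
      (H.cont (hsub (hKsub (hΓK t ht)))).tendsto.comp (hΓ t ht)
    have hzb : z ∈ ball a r := by rwa [mem_ball, dist_eq_norm]
    have e2 : Tendsto (fun x => HF h g z0 + (t : ℂ) * (HF h g x - HF h g z0)) u
        (𝓝 (HF h g z0 + (t : ℂ) * (HF h g z - HF h g z0))) := by
      have : Tendsto (HF h g) u (𝓝 (HF h g z)) := (H.cont (hsub hzb)).tendsto.mono_left huz
      exact ((this.sub_const _).const_mul _).const_add _
    refine tendsto_nhds_unique (e1.congr' ?_) e2
    filter_upwards [huE] with x hx
    exact (hγ x hx).seg t ht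
  · refine tendsto_nhds_unique (hΓ 0 h01) (tendsto_const_nhds.congr' ?_)
    filter_upwards [huE] with x hx
    exact (hγ x hx).zero.symm
  · refine tendsto_nhds_unique (hΓ 1 h11) (Tendsto.congr' ?_ (tendsto_id.mono_left huz))
    filter_upwards [huE] with x hx
    exact (hγ x hx).one.symm

lemma convex_of_Q {a : ℂ} {r : ℝ} (hsub : ball a r ⊆ ball (0:ℂ) 1)
    (hQ : ∀ ζ ∈ ball a r, ζ ≠ a →
      0 < Qf (deriv h ζ) (deriv (deriv h) ζ) (deriv g ζ) (deriv (deriv g) ζ) (ζ - a)) :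
    Convex ℝ (HF h g '' ball a r) := by
  rw [convex_iff_segment_subset]
  rintro _ ⟨z0, hz0, rfl⟩ _ ⟨z, hz, rfl⟩
  have hsubE : ball a r ⊆ {z | ∃ γ, Lift h g a r z0 z γ} :=
    (convex_ball a r).isPreconnected.subset_of_closure_inter_subset (H.lift_open hsub hz0)
      ⟨z0, hz0, fun _ => z0, continuousOn_const, fun _ _ => hz0, fun t _ => by simp, rfl, rfl⟩
      (H.lift_closed hsub hQ hz0)
  obtain ⟨γ, hγ⟩ := hsubE hz
  rw [segment_eq_image']
  rintro _ ⟨t, ht, rfl⟩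
  refine ⟨γ t, hγ.mem t ht, ?_⟩
  rw [hγ.seg t ht]
  simp

end SP

lemma pos_right {φ : ℝ → ℝ} {D : ℝ} (hφ : HasDerivAt φ D 0) (hD : 0 < D) :
    ∀ᶠ s in 𝓝[>] (0:ℝ), φ 0 < φ s := by
  have h1 := (hasDerivWithinAt_iff_tendsto_slope' (s := Ioi (0:ℝ)) (by simp)).1
    hφ.hasDerivWithinAt
  filter_upwards [h1.eventually (lt_mem_nhds hD), self_mem_nhdsWithin] with s hs hs0
  rw [slope_def_field, sub_zero] at hs
  have hs0' : 0 < s := hs0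
  have : 0 < φ s - φ 0 := by
    by_contra hc
    push Not at hc
    have := div_nonpos_of_nonpos_of_nonneg hc hs0'.le
    linarith
  linarith

lemma neg_right {φ : ℝ → ℝ} {D : ℝ} (hφ : HasDerivAt φ D 0) (hD : D < 0) :
    ∀ᶠ s in 𝓝[>] (0:ℝ), φ s < φ 0 := by
  have := pos_right hφ.neg (by linarith)
  filter_upwards [this] with s hs
  simp only [Pi.neg_apply] at hs
  linarith

lemma normSq_deriv {γ : ℝ → ℂ} {v : ℂ} {s : ℝ} (hγ : HasDerivAt γ v s) :
    HasDerivAt (fun s => normSq (γ s)) (2 * (conj (γ s) * v).re) s := by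
  have := re_deriv ((conj_deriv hγ).mul hγ)
  have e : (fun s => normSq (γ s)) = fun s => (conj (γ s) * (γ s)).re := by
    funext s; rw [mul_comm, mul_conj, ofReal_re]
  rw [e]
  refine this.congr_deriv ?_
  simp; ring

lemma inward_ball {γ : ℝ → ℂ} {v a : ℂ} (hγ : HasDerivAt γ v 0)
    (hv : (conj (γ 0 - a) * v).re < 0) :
    ∀ᶠ s in 𝓝[>] (0:ℝ), γ s ∈ ball a ‖γ 0 - a‖ := by
  have := neg_right (normSq_deriv (hγ.sub_const a)) (by linarith)
  filter_upwards [this] with s hs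
  rw [mem_ball, dist_eq_norm]
  rw [normSq_eq_norm_sq, normSq_eq_norm_sq] at hs
  exact lt_of_pow_lt_pow_left₀ 2 (norm_nonneg _) hs

lemma dual_deriv (l : StrongDual ℝ ℂ) {γ : ℝ → ℂ} {v : ℂ} {s : ℝ} (hγ : HasDerivAt γ v s) :
    HasDerivAt (fun s => l (γ s)) (l v) s :=
  l.hasFDerivAt.comp_hasDerivAt s hγ

/-- final algebra of the necessity direction -/
lemma necess_alg {p p2 q q2 w : ℂ} (hpq : ‖q‖ < ‖p‖) (hw : w ≠ 0) (l : StrongDual ℝ ℂ)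
    (hl : ∃ x, l x ≠ 0)
    (h1 : l (p * (I * w) + conj (q * (I * w))) = 0)
    (h2 : l (I * w * p2 * (I * w) + p * (I * (I * w))
      + conj (I * w * q2 * (I * w) + q * (I * (I * w)))) ≤ 0)
    (h3 : 0 ≤ l (p * w + conj (q * w))) : 0 ≤ Qf p p2 q q2 w := by
  obtain ⟨ξ, hξ⟩ : ∃ ξ : ℂ, ∀ X, l X = (conj ξ * X).re := by
    refine ⟨⟨l 1, l I⟩, fun X => ?_⟩
    have e : X = X.re • (1 : ℂ) + X.im • I := by
      rw [real_smul, real_smul, mul_one, re_add_im]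
    conv_lhs => rw [e]
    rw [map_add, map_smul, map_smul]
    simp [mul_re]; ring
  have hξ0 : ξ ≠ 0 := by
    rintro rfl
    obtain ⟨x, hx⟩ := hl
    apply hx; rw [hξ]; simp
  have hJ := normSq_lt_of_norm_lt hpq
  have hN := normSq_pos.2 hw
  rw [hξ] at h1 h2 h3
  set W := w * p - conj (w * q) with hW
  have hW0 : W ≠ 0 := by
    intro h0
    have e : ‖w * p‖ = ‖w * q‖ := by
      rw [sub_eq_zero.1 h0, norm_conj]
    rw [norm_mul, norm_mul] at e
    have := norm_pos_iff.2 hw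
    nlinarith
  have hWN := normSq_pos.2 hW0
  have e1 : p * (I * w) + conj (q * (I * w)) = I * W := by
    rw [hW]; simp only [map_mul, conj_I]; ring
  rw [e1] at h1
  obtain ⟨lam, hlam⟩ : ∃ lam : ℝ, ξ = (lam : ℂ) * W := by
    refine ⟨(conj ξ * W).re / normSq W, ?_⟩
    have him : (conj ξ * W).im = 0 := by
      have : conj ξ * (I * W) = I * (conj ξ * W) := by ring
      rw [this, I_mul_re] at h1
      linarith
    have e2 : conj ξ * W = ((conj ξ * W).re : ℂ) := by
      apply Complex.ext
      · simp
      · rw [him]; simp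
    obtain ⟨μ, hμ⟩ : ∃ μ : ℝ, μ = (conj ξ * W).re := ⟨_, rfl⟩
    rw [← hμ] at e2 ⊢
    have e3 := congrArg conj e2
    simp only [map_mul, conj_conj, conj_ofReal] at e3
    have hNc : (normSq W : ℂ) ≠ 0 := by exact_mod_cast hWN.ne'
    rw [ofReal_div]
    field_simp
    rw [← mul_conj]
    linear_combination W * e3
  have e4 : (conj ξ * (p * w + conj (q * w))).re = lam * (normSq w * (normSq p - normSq q)) := by
    rw [hlam, map_mul, conj_ofReal, mul_assoc, re_ofReal_mul]
    congr 1
    rw [hW]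
    simp [normSq_apply]; ring
  have e5 : (conj ξ * (I * w * p2 * (I * w) + p * (I * (I * w))
      + conj (I * w * q2 * (I * w) + q * (I * (I * w))))).re = - (lam * Qf p p2 q q2 w) := by
    have : I * w * p2 * (I * w) + p * (I * (I * w))
      + conj (I * w * q2 * (I * w) + q * (I * (I * w)))
      = -(w ^ 2 * p2 + p * w + conj (w ^ 2 * q2 + q * w)) := by
      simp only [map_add, map_mul, conj_I, map_pow]
      linear_combination (w ^ 2 * p2 + p * w + conj w ^ 2 * conj q2 + conj q * conj w) * I_sq
    rw [this, hlam, map_mul, conj_ofReal, mul_assoc, re_ofReal_mul, ← mul_neg]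
    congr 1
    rw [hW]; unfold Qf
    simp [normSq_apply, pow_succ]; ring
  rw [e4] at h3
  rw [e5] at h2
  have hlam0 : lam ≠ 0 := by
    rintro rfl
    apply hξ0; rw [hlam]; simp
  have hlp : 0 < lam := by
    by_contra hc
    have : lam < 0 := lt_of_le_of_ne (not_lt.1 hc) hlam0
    have : 0 < normSq w * (normSq p - normSq q) := mul_pos hN hJ
    nlinarith
  by_contra hc
  push Not at hc
  nlinarith

namespace SP

variable {h g : ℂ → ℂ} (H : SP h g)
include H

lemma support_inward {a x : ℂ} (hx : x ∈ ball (0:ℂ) 1) (l : StrongDual ℝ ℂ)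
    (hl : ∀ z ∈ ball a ‖x - a‖, l (HF h g z) ≤ l (HF h g x)) {d : ℂ}
    (hd : (conj (x - a) * d).re < 0) :
    l (deriv h x * d + conj (deriv g x * d)) ≤ 0 := by
  by_contra hc
  push Not at hc
  have hγ : HasDerivAt (fun s : ℝ => x + (s : ℂ) * d) d 0 := by
    simpa using ((ofRealCLM.hasDerivAt (x := (0:ℝ))).mul_const d).const_add x
  have e0 : x + ((0 : ℝ) : ℂ) * d = x := by simp
  have h1 := inward_ball (a := a) hγ (by rw [e0]; exact hd)
  have h2 := dual_deriv l (H.comp_deriv hγ (by rw [e0]; exact hx))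
  rw [e0] at h2
  have h3 := pos_right h2 hc
  obtain ⟨s, hs1, hs2⟩ := (h1.and h3).exists
  simp only [e0] at hs1 hs2
  exact absurd (hl _ hs1) (not_le.2 hs2)

lemma support_lift {a x : ℂ} (hx : x ∈ ball (0:ℂ) 1) (hxa : x ≠ a) (l : StrongDual ℝ ℂ)
    (hl : ∀ z ∈ ball a ‖x - a‖, l (HF h g z) ≤ l (HF h g x)) {d : ℂ} (hd : l d < 0) :
    ∃ k : ℝ → ℂ, Tendsto k (𝓝[>] 0) (𝓝 x) ∧
      ∀ᶠ s in 𝓝[>] (0:ℝ), k s ∈ ball a ‖x - a‖ ∧ HF h g (k s) = HF h g x + (s : ℂ) * d := by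
  obtain ⟨e, he, hs⟩ := H.strict hx
  have hline : HasDerivAt (fun s : ℝ => HF h g x + (s : ℂ) * d) d 0 := by
    simpa using ((ofRealCLM.hasDerivAt (x := (0:ℝ))).mul_const d).const_add (HF h g x)
  have e0 : HF h g x + ((0 : ℝ) : ℂ) * d = HF h g x := by simp
  have hk := hs.to_localInverse.hasFDerivAt
  rw [← e0] at hk
  have hkd := hk.comp_hasDerivAt (0:ℝ) hline
  set k : ℝ → ℂ := hs.localInverse (HF h g) e x ∘ fun s : ℝ => HF h g x + (s : ℂ) * d with hkdef
  have hk0 : k 0 = x := by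
    simp [hkdef]
  have hv : (conj (x - a) * (e.symm d)).re < 0 := by
    by_contra hc
    push Not at hc
    have hdel : ∀ δ : ℝ, 0 < δ → l (-d) ≤ δ * l (e (x - a)) := by
      intro δ hδ
      have h1 := H.support_inward hx l hl (d := -(e.symm d) - (δ : ℂ) * (x - a)) (by
        have : conj (x - a) * (-(e.symm d) - (δ : ℂ) * (x - a))
          = -(conj (x - a) * e.symm d) - ((δ * normSq (x - a) : ℝ) : ℂ) := by
          push_cast
          rw [← mul_conj]; ring
        rw [this, sub_re, neg_re, ofReal_re]
        have := normSq_pos.2 (sub_ne_zero.2 hxa)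
        nlinarith [mul_pos hδ this])
      rw [← he] at h1
      have e1 : (δ : ℂ) * (x - a) = δ • (x - a) := by rw [real_smul]
      rw [e1, map_sub, map_neg, map_smul, e.apply_symm_apply, map_sub, map_smul, smul_eq_mul] at h1
      linarith
    have hlim : Tendsto (fun δ : ℝ => δ * l (e (x - a))) (𝓝[>] 0) (𝓝 0) := by
      have : Tendsto (fun δ : ℝ => δ * l (e (x - a))) (𝓝 0) (𝓝 (0 * l (e (x - a)))) :=
        tendsto_id.mul_const _
      rw [zero_mul] at this
      exact this.mono_left nhdsWithin_le_nhds
    have := ge_of_tendsto hlim (by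
      filter_upwards [self_mem_nhdsWithin] with δ hδ
      exact hdel δ hδ)
    rw [map_neg] at this
    linarith
  refine ⟨k, ?_, ?_⟩
  · have := hkd.continuousAt.tendsto
    rw [hk0] at this
    exact this.mono_left nhdsWithin_le_nhds
  · have h1 := inward_ball (a := a) hkd (by rw [hk0]; exact hv)
    rw [hk0] at h1
    have h2 : ∀ᶠ s in 𝓝[>] (0:ℝ), HF h g (k s) = HF h g x + (s : ℂ) * d := by
      have h3 := hline.continuousAt.tendsto
      rw [e0] at h3
      exact (h3.mono_left nhdsWithin_le_nhds).eventually hs.eventually_right_inverse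
    exact h1.and h2

/-- Convexity of the image of all concentric discs forces injectivity. -/
lemma injOn (hC : ∀ r : ℝ, 0 < r → r < 1 → Convex ℝ (HF h g '' ball 0 r)) :
    InjOn (HF h g) (ball 0 1) := by
  intro x hx y hy hxy
  by_contra hne
  rw [mem_ball_zero_iff] at hx hy
  set R := max ‖x‖ ‖y‖ with hR
  have hR1 : R < 1 := max_lt hx hy
  have hRsub : closedBall (0:ℂ) R ⊆ ball 0 1 := closedBall_subset_ball hR1
  let N : Set (ℂ × ℂ) := {q | q ∈ closedBall (0:ℂ) R ×ˢ closedBall (0:ℂ) R ∧ q.1 ≠ q.2 ∧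
    HF h g q.1 = HF h g q.2}
  have hKc : IsCompact (closedBall (0:ℂ) R ×ˢ closedBall (0:ℂ) R) :=
    (isCompact_closedBall _ _).prod (isCompact_closedBall _ _)
  have hNcl : IsClosed N := by
    rw [isClosed_iff_ultrafilter]
    intro q u huq huN
    have hqK : q ∈ closedBall (0:ℂ) R ×ˢ closedBall (0:ℂ) R :=
      isClosed_iff_ultrafilter.1 hKc.isClosed q u huq (mem_of_superset huN fun _ hq => hq.1)
    have t1 : Tendsto (fun q : ℂ × ℂ => q.1) u (𝓝 q.1) :=
      continuous_fst.continuousAt.tendsto.mono_left huq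
    have t2 : Tendsto (fun q : ℂ × ℂ => q.2) u (𝓝 q.2) :=
      continuous_snd.continuousAt.tendsto.mono_left huq
    refine ⟨hqK, ?_, ?_⟩
    · intro heq
      obtain ⟨k, hk⟩ := H.local_inj (hRsub hqK.1)
      have k1 := t1.eventually hk
      rw [← heq] at t2
      have k2 := t2.eventually hk
      have huN' : ∀ᶠ q in (u : Filter (ℂ × ℂ)), q ∈ N := huN
      obtain ⟨q', ⟨a1, a2⟩, a3⟩ := ((k1.and k2).and huN').exists
      apply a3.2.1
      rw [← a1, ← a2, a3.2.2]
    · have f1 := (H.cont (hRsub hqK.1)).tendsto.comp t1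
      have f2 := (H.cont (hRsub hqK.2)).tendsto.comp t2
      refine tendsto_nhds_unique f1 (f2.congr' ?_)
      filter_upwards [huN] with q' hq'
      exact hq'.2.2.symm
  have hNc : IsCompact N := hKc.of_isClosed_subset hNcl fun _ hq => hq.1
  have hNne : N.Nonempty := ⟨(x, y), ⟨by
    rw [mem_closedBall_zero_iff]; exact le_max_left _ _, by
    rw [mem_closedBall_zero_iff]; exact le_max_right _ _⟩, hne, hxy⟩
  obtain ⟨q, hqN, hqmin⟩ := hNc.exists_isMinOn hNne
    (f := fun q : ℂ × ℂ => max ‖q.1‖ ‖q.2‖) (by fun_prop)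
  obtain ⟨⟨hq1, hq2⟩, hqne, hqeq⟩ := hqN
  rw [mem_closedBall_zero_iff] at hq1 hq2
  set ρ := max ‖q.1‖ ‖q.2‖ with hρ
  have hρR : ρ ≤ R := max_le hq1 hq2
  have hρ1 : ρ < 1 := hρR.trans_lt hR1
  have hρ0 : 0 < ρ := by
    by_contra hc
    push Not at hc
    apply hqne
    have a1 : ‖q.1‖ ≤ 0 := (le_max_left _ _).trans hc
    have a2 : ‖q.2‖ ≤ 0 := (le_max_right _ _).trans hc
    rw [norm_le_zero_iff.1 a1, norm_le_zero_iff.1 a2]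
  have hinj : ∀ x ∈ ball (0:ℂ) ρ, ∀ y ∈ ball (0:ℂ) ρ, HF h g x = HF h g y → x = y := by
    intro x hx y hy hxy
    by_contra hne
    rw [mem_ball_zero_iff] at hx hy
    have hm : ((x, y) : ℂ × ℂ) ∈ N := ⟨⟨by
      rw [mem_closedBall_zero_iff]; exact hx.le.trans hρR, by
      rw [mem_closedBall_zero_iff]; exact hy.le.trans hρR⟩, hne, hxy⟩
    have := hqmin hm
    have h2 : ρ ≤ max ‖x‖ ‖y‖ := this
    exact absurd (max_lt hx hy) (not_lt.2 h2)
  have claim1 : ∀ x y : ℂ, ‖x‖ < ρ → ‖y‖ = ρ → HF h g x ≠ HF h g y := by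
    intro x y hx hy hxy
    have hx1 : x ∈ ball (0:ℂ) 1 := by rw [mem_ball_zero_iff]; linarith
    have hy1 : y ∈ ball (0:ℂ) 1 := by rw [mem_ball_zero_iff]; linarith
    obtain ⟨e, he, hs⟩ := H.strict hx1
    have hnb : (𝓝[ball (0:ℂ) ρ] y).NeBot := by
      rw [← mem_closure_iff_nhdsWithin_neBot, closure_ball _ hρ0.ne', mem_closedBall_zero_iff]
      exact hy.le
    have t1 : Tendsto (HF h g) (𝓝[ball (0:ℂ) ρ] y) (𝓝 (HF h g x)) := by
      rw [hxy]; exact (H.cont hy1).tendsto.mono_left nhdsWithin_le_nhds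
    have t2 := hs.localInverse_tendsto.comp t1
    have hxb : ball (0:ℂ) ρ ∈ 𝓝 x := isOpen_ball.mem_nhds (by rwa [mem_ball_zero_iff])
    have : Tendsto (fun z : ℂ => z) (𝓝[ball (0:ℂ) ρ] y) (𝓝 x) := by
      refine t2.congr' ?_
      filter_upwards [t2.eventually hxb, t1.eventually hs.eventually_right_inverse,
        self_mem_nhdsWithin] with z a1 a2 a3
      exact hinj _ a1 _ a3 a2
    have e2 := tendsto_nhds_unique this (tendsto_id.mono_left nhdsWithin_le_nhds)
    rw [e2] at hx
    change ‖y‖ < ρ at hx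
    linarith
  have n1 : ‖q.1‖ = ρ := by
    rcases lt_or_eq_of_le (le_max_left ‖q.1‖ ‖q.2‖) with hlt | heq
    · have : ‖q.2‖ = ρ := by
        rw [hρ]; rw [max_def] at hlt ⊢; split_ifs at hlt ⊢ <;> simp_all
      exact absurd hqeq (claim1 _ _ hlt this)
    · exact heq
  have n2 : ‖q.2‖ = ρ := by
    rcases lt_or_eq_of_le (le_max_right ‖q.1‖ ‖q.2‖) with hlt | heq
    · exact absurd hqeq.symm (claim1 _ _ hlt n1)
    · exact heq
  have hρsub : ball (0:ℂ) ρ ⊆ ball 0 1 := ball_subset_ball hρ1.le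
  have hnot : HF h g q.1 ∉ HF h g '' ball 0 ρ := by
    rintro ⟨z, hz, hze⟩
    exact claim1 z q.1 (by rwa [mem_ball_zero_iff] at hz) n1 hze
  obtain ⟨l, hl⟩ := geometric_hahn_banach_open_point (hC ρ hρ0 hρ1)
    (H.isOpen_image isOpen_ball hρsub) hnot
  have hl' : ∀ z ∈ ball (0:ℂ) ρ, l (HF h g z) < l (HF h g q.1) := fun z hz =>
    hl _ (mem_image_of_mem _ hz)
  set d := HF h g 0 - HF h g q.1 with hd
  have hld : l d < 0 := by
    rw [hd, map_sub]; have := hl' 0 (mem_ball_self hρ0); linarith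
  have z1 : q.1 ≠ 0 := by rintro h0; rw [h0, norm_zero] at n1; linarith
  have z2 : q.2 ≠ 0 := by rintro h0; rw [h0, norm_zero] at n2; linarith
  have q1b : q.1 ∈ ball (0:ℂ) 1 := by rw [mem_ball_zero_iff]; linarith
  have q2b : q.2 ∈ ball (0:ℂ) 1 := by rw [mem_ball_zero_iff]; linarith
  obtain ⟨k1, tk1, hk1⟩ := H.support_lift (a := 0) q1b z1 l
    (by rw [sub_zero, n1]; exact fun z hz => (hl' z hz).le) hld
  obtain ⟨k2, tk2, hk2⟩ := H.support_lift (a := 0) q2b z2 l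
    (by rw [sub_zero, n2, ← hqeq]; exact fun z hz => (hl' z hz).le) hld
  rw [sub_zero, n1] at hk1
  rw [sub_zero, n2, ← hqeq] at hk2
  apply hqne
  refine tendsto_nhds_unique tk1 (tk2.congr' ?_)
  filter_upwards [hk1, hk2] with s a1 a2
  exact hinj _ a2.1 _ a1.1 (a2.2.trans a1.2.symm)

/-- Necessity of the curvature inequality. -/
lemma Q_of_convex (hC : ∀ a ∈ ball (0:ℂ) 1, ∀ r : ℝ, 0 < r → r < 1 - ‖a‖ →
      Convex ℝ (HF h g '' ball a r)) (ζ w : ℂ) (hw : w ≠ 0) (hlt : ‖ζ - w‖ + ‖w‖ < 1) :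
    0 ≤ Qf (deriv h ζ) (deriv (deriv h) ζ) (deriv g ζ) (deriv (deriv g) ζ) w := by
  have hinj : InjOn (HF h g) (ball 0 1) := H.injOn fun r h0 h1 =>
    hC 0 (mem_ball_self one_pos) r h0 (by simpa using h1)
  have hwp : 0 < ‖w‖ := norm_pos_iff.2 hw
  obtain ⟨a, ha⟩ : ∃ a, a = ζ - w := ⟨_, rfl⟩
  have hζ : ζ = a + w := by rw [ha]; ring
  rw [← ha] at hlt
  have hcb : closedBall a ‖w‖ ⊆ ball (0:ℂ) 1 := by
    intro z hz
    rw [mem_closedBall, dist_eq_norm] at hz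
    rw [mem_ball_zero_iff]
    calc ‖z‖ = ‖(z - a) + a‖ := by ring_nf
      _ ≤ ‖z - a‖ + ‖a‖ := norm_add_le _ _
      _ < 1 := by linarith
  have hζw : ζ - a = w := by rw [hζ]; ring
  have hζb : ζ ∈ ball (0:ℂ) 1 := hcb (by rw [mem_closedBall, dist_eq_norm, hζw])
  have hbb : ball a ‖w‖ ⊆ ball (0:ℂ) 1 := ball_subset_closedBall.trans hcb
  have hnot : HF h g ζ ∉ HF h g '' ball a ‖w‖ := by
    rintro ⟨z, hz, hze⟩
    have := hinj (hbb hz) hζb hze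
    rw [this, mem_ball, dist_eq_norm, hζw] at hz
    exact lt_irrefl _ hz
  obtain ⟨l, hl⟩ := geometric_hahn_banach_open_point
    (hC a (by rw [mem_ball_zero_iff]; linarith) ‖w‖ hwp (by linarith))
    (H.isOpen_image isOpen_ball hbb) hnot
  have hl' : ∀ z ∈ ball a ‖w‖, l (HF h g z) ≤ l (HF h g ζ) := fun z hz =>
    (hl _ (mem_image_of_mem _ hz)).le
  have hlc : ∀ z ∈ closedBall a ‖w‖, l (HF h g z) ≤ l (HF h g ζ) := by
    intro z hz
    have hz1 := hcb hz
    have hnb : (𝓝[ball a ‖w‖] z).NeBot := by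
      rw [← mem_closure_iff_nhdsWithin_neBot, closure_ball _ hwp.ne']
      exact hz
    have t : Tendsto (fun y => l (HF h g y)) (𝓝[ball a ‖w‖] z) (𝓝 (l (HF h g z))) :=
      (l.continuous.continuousAt.tendsto.comp (H.cont hz1).tendsto).mono_left nhdsWithin_le_nhds
    refine le_of_tendsto t ?_
    filter_upwards [self_mem_nhdsWithin] with y hy
    exact hl' y hy
  -- the circle
  have hW : ∀ t : ℝ, HasDerivAt (fun t : ℝ => w * exp (I * (t : ℂ)))
      (I * (w * exp (I * (t : ℂ)))) t := by
    intro t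
    have h1 : HasDerivAt (fun t : ℝ => I * (t : ℂ)) I t := by
      simpa using (ofRealCLM.hasDerivAt (x := t)).const_mul I
    have := (h1.cexp).const_mul w
    refine this.congr_deriv ?_
    ring
  set W : ℝ → ℂ := fun t : ℝ => w * exp (I * (t : ℂ)) with hWdef
  have hW0 : W 0 = w := by simp [hWdef]
  have hWn : ∀ t, ‖W t‖ = ‖w‖ := by
    intro t
    rw [hWdef]; simp only
    rw [norm_mul, mul_comm I, norm_exp_ofReal_mul_I, mul_one]
  have hzc : ∀ t, a + W t ∈ closedBall a ‖w‖ := by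
    intro t
    rw [mem_closedBall, dist_eq_norm, add_sub_cancel_left, hWn]
  have hz : ∀ t, HasDerivAt (fun t => a + W t) (I * W t) t := fun t => (hW t).const_add a
  have hu1 : ∀ t, HasDerivAt (fun t => l (HF h g (a + W t)))
      (l (deriv h (a + W t) * (I * W t) + conj (deriv g (a + W t) * (I * W t)))) t := fun t =>
    dual_deriv l (H.comp_deriv (hz t) (hcb (hzc t)))
  have z0 : a + W 0 = ζ := by rw [hW0, hζ]
  have hu2 : HasDerivAt (fun t => l (deriv h (a + W t) * (I * W t)
      + conj (deriv g (a + W t) * (I * W t))))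
      (l (I * w * deriv (deriv h) ζ * (I * w) + deriv h ζ * (I * (I * w))
      + conj (I * w * deriv (deriv g) ζ * (I * w) + deriv g ζ * (I * (I * w))))) 0 := by
    have d1 : HasDerivAt (fun s => deriv h (a + W s)) (I * W 0 * deriv (deriv h) (a + W 0)) 0 :=
      HasDerivAt.scomp (h := fun t => a + W t) (g₁ := deriv h) (0:ℝ) (H.dh2 (hcb (hzc 0))) (hz 0)
    have d2 : HasDerivAt (fun s => deriv g (a + W s)) (I * W 0 * deriv (deriv g) (a + W 0)) 0 :=
      HasDerivAt.scomp (h := fun t => a + W t) (g₁ := deriv g) (0:ℝ) (H.dg2 (hcb (hzc 0))) (hz 0)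
    have d3 := (hW 0).const_mul I
    have d4 := dual_deriv l ((d1.mul d3).add (conj_deriv (d2.mul d3)))
    rw [z0] at d4
    have e : w * exp (I * ((0 : ℝ) : ℂ)) = w := by simp
    rw [e, hW0] at d4
    exact d4
  have hmax : IsLocalMax (fun t => l (HF h g (a + W t))) 0 := by
    refine Filter.Eventually.of_forall fun t => ?_
    simp only [z0]
    exact hlc _ (hzc t)
  obtain ⟨k1, k2⟩ := second_deriv_nonpos (Filter.Eventually.of_forall hu1) hu2 hmax
  rw [z0, hW0] at k1
  have k3 := H.support_inward (a := a) hζb l (by rw [hζw]; exact hl') (d := -w) (by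
    rw [hζw, mul_neg, neg_re, mul_comm, mul_conj, ofReal_re]
    have := normSq_pos.2 hw
    linarith)
  refine necess_alg (H.hsp _ hζb) hw l ⟨HF h g a - HF h g ζ, ?_⟩ k1 k2 ?_
  · rw [map_sub]
    have := hl _ (mem_image_of_mem _ (mem_ball_self hwp))
    exact (sub_neg.2 this).ne
  · have e : deriv h ζ * -w + conj (deriv g ζ * -w) = -(deriv h ζ * w + conj (deriv g ζ * w)) := by
      rw [mul_neg, mul_neg, map_neg]; ring
    rw [e, map_neg] at k3
    linarith

end SP


end Aux

/-- For a sense-preserving harmonic function `f = h + conj g` on the unit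
disk, absolute convexity (condition (i)) is equivalent to the analytic condition (iii). -/
theorem absolutelyConvex_iff (h g : ℂ → ℂ)
    (hh : DifferentiableOn ℂ h (ball (0:ℂ) 1))
    (hg : DifferentiableOn ℂ g (ball (0:ℂ) 1))
    (hsp : ∀ z ∈ ball (0:ℂ) 1, ‖deriv g z‖ < ‖deriv h z‖) :
    (∀ a ∈ ball (0:ℂ) 1, ∀ r : ℝ, 0 < r → r < 1 - ‖a‖ →
        Convex ℝ ((fun z => h z + conj (g z)) '' ball a r))
    ↔
    (∀ ζ ∈ ball (0:ℂ) 1, ∀ b ∈ ball (0:ℂ) 1,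
      ‖ζ - b‖ ^ 2 * ‖1 - ζ * conj b‖ ^ 2 * ‖deriv g ζ‖ ^ 2
          * (1 + ‖b‖ ^ 2 - 2 * (conj b * ζ).re)
        + ‖ζ - b‖ ^ 2 * ‖1 - ζ * conj b‖ ^ 2
          * ((ζ - b) * (1 - ζ * conj b) * deriv (deriv g) ζ * conj (deriv g ζ)).re
        + ((ζ - b) ^ 3 * (1 - ζ * conj b) ^ 3
          * (deriv (deriv h) ζ * deriv g ζ - deriv h ζ * deriv (deriv g) ζ)).re
      ≤ ‖ζ - b‖ ^ 2 * ‖1 - ζ * conj b‖ ^ 2 * ‖deriv h ζ‖ ^ 2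
          * (1 + ‖b‖ ^ 2 - 2 * (conj b * ζ).re)
        + ‖ζ - b‖ ^ 2 * ‖1 - ζ * conj b‖ ^ 2
          * ((ζ - b) * (1 - ζ * conj b) * deriv (deriv h) ζ * conj (deriv h ζ)).re) := by
  have H : SP h g := ⟨hh, hg, hsp⟩
  rw [iii_iff_iv]
  constructor
  · intro hC ζ w hw hlt
    exact H.Q_of_convex hC ζ w hw hlt
  · intro hQ a ha r hr0 hr1
    have hS := strict_of_nonstrict h g hsp hQ
    refine H.convex_of_Q (a := a) (r := r) ?_ ?_
    · intro z hz
      rw [mem_ball, dist_eq_norm] at hz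
      rw [mem_ball_zero_iff]
      have := norm_add_le (z - a) a
      rw [sub_add_cancel] at this
      linarith
    · intro ζ hζ hne
      rw [mem_ball, dist_eq_norm] at hζ
      refine hS ζ (ζ - a) (sub_ne_zero.2 hne) ?_
      rw [sub_sub_cancel]
      linarith
end
end

section
/- Let f = h + \overline{g} \in \mathcal{AK}^0_H, where h(z) = z + \sum_{n=2}^{\infty} a_n z^n and g(z) = \sum_{n=2}^{\infty} b_n z^n on \mathbb{D}. Then the second Taylor coefficient satisfies |a_2| \leq 2/\sqrt{3}. -/
open Complex Metric ComplexConjugate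

noncomputable section

open Filter Topology

lemma aux_decr {φ : ℝ → ℝ} {d : ℝ} (hφ : HasDerivAt φ d 0) (hd : d < 0) :
    ∀ᶠ t in 𝓝[>] (0:ℝ), φ t < φ 0 := by
  have h1 := (hasDerivAt_iff_tendsto_slope.1 hφ)
  have h2 : ∀ᶠ t in 𝓝[≠] (0:ℝ), slope φ 0 t < 0 := h1.eventually_lt_const hd
  have h3 : ∀ᶠ t in 𝓝[>] (0:ℝ), slope φ 0 t < 0 :=
    h2.filter_mono (nhdsWithin_mono _ (fun x hx => ne_of_gt hx))
  filter_upwards [h3, self_mem_nhdsWithin] with t ht ht0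
  have ht0 : 0 < t := ht0
  rw [slope_def_field, sub_zero, div_neg_iff] at ht
  rcases ht with ht | ht <;> linarith [ht.1, ht.2]

lemma aux_enter {γ : ℝ → ℂ} {x c q : ℂ} {r : ℝ} (hγ : HasDerivAt γ q 0) (h0 : γ 0 = x)
    (hx : ‖x - c‖ = r) (hq : inner ℝ (x - c) q < 0) :
    ∀ᶠ t in 𝓝[>] (0:ℝ), γ t ∈ ball c r := by
  have h1 := (hγ.sub_const c).norm_sq
  rw [h0] at h1
  have h2 := aux_decr h1 (by linarith)
  filter_upwards [h2] with t ht
  rw [mem_ball_iff_norm]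
  rw [h0, hx] at ht
  have : 0 ≤ r := hx ▸ norm_nonneg _
  exact lt_of_pow_lt_pow_left₀ 2 this ht

lemma aux_dir {f : ℂ → ℂ} {x c q : ℂ} {r : ℝ} {L : ℂ →L[ℝ] ℂ} (hf : HasFDerivAt f L x)
    (l : ℂ →L[ℝ] ℝ) (hx : ‖x - c‖ = r) (hl : ∀ z ∈ ball c r, l (f z) ≤ l (f x))
    (hq : inner ℝ (x - c) q < 0) : l (L q) ≤ 0 := by
  by_contra hcon
  push Not at hcon
  have hγ : HasDerivAt (fun t : ℝ => x + t • q) q 0 := by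
    simpa using ((hasDerivAt_id (0:ℝ)).smul_const q).const_add x
  have h1 := aux_enter hγ (by simp) hx hq
  have h2 : HasDerivAt (fun t : ℝ => f (x + t • q)) (L q) 0 := by
    refine HasFDerivAt.comp_hasDerivAt (0:ℝ) ?_ hγ
    simpa using hf
  have h3 : HasDerivAt (fun t : ℝ => - l (f (x + t • q))) (-l (L q)) 0 :=
    (l.hasFDerivAt.comp_hasDerivAt (0:ℝ) h2).neg
  have h4 := aux_decr h3 (by linarith)
  obtain ⟨t, ht1, ht2⟩ := (h1.and h4).exists
  have := hl _ ht1
  simp at ht2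
  simp at this
  linarith

lemma aux_path {f : ℂ → ℂ} {x c v : ℂ} {r : ℝ} {L : ℂ ≃L[ℝ] ℂ}
    (hf : HasStrictFDerivAt f (L : ℂ →L[ℝ] ℂ) x)
    (l : ℂ →L[ℝ] ℝ) (hr : 0 < r) (hx : ‖x - c‖ = r) (hl : ∀ z ∈ ball c r, l (f z) ≤ l (f x))
    (hv : l v < 0) :
    ∃ γ : ℝ → ℂ, Tendsto γ (𝓝[>] 0) (𝓝 x) ∧
      ∀ᶠ t in 𝓝[>] (0:ℝ), γ t ∈ ball c r ∧ f (γ t) = f x + t • v := by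
  have hp : inner ℝ (x - c) (L.symm v) < 0 := by
    by_contra hcon
    push Not at hcon
    have key : ∀ δ : ℝ, 0 < δ → -l v - δ * l (L (x - c)) ≤ 0 := by
      intro δ hδ
      have := aux_dir (q := -(L.symm v) - δ • (x - c)) hf.hasFDerivAt l hx hl (by
        rw [inner_sub_right, inner_neg_right, inner_smul_right, real_inner_self_eq_norm_sq, hx]
        have : 0 < δ * r ^ 2 := by positivity
        linarith)
      have e : l (L (-(L.symm v) - δ • (x - c))) = -l v - δ * l (L (x - c)) := by
        rw [map_sub, map_neg, map_smul, map_sub, map_neg, map_smul, smul_eq_mul,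
          L.apply_symm_apply]
      rw [← e]
      exact this
    have h1 := key (-l v / (2 * (|l (L (x-c))| + 1))) (by
      have := abs_nonneg (l (L (x-c)))
      apply div_pos <;> linarith)
    set m := l (L (x-c))
    have hm : m ≤ |m| := le_abs_self m
    have hm0 := abs_nonneg m
    have h2 : -l v / (2 * (|m| + 1)) * m ≤ -l v / 2 := by
      rw [div_mul_eq_mul_div, div_le_div_iff₀ (by linarith) (by norm_num)]
      nlinarith
    linarith
  have hγ0 : HasDerivAt (fun t : ℝ => f x + t • v) v 0 := by
    simpa using ((hasDerivAt_id (0:ℝ)).smul_const v).const_add (f x)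
  have hc : Tendsto (fun t : ℝ => f x + t • v) (𝓝 0) (𝓝 (f x)) := by
    simpa using hγ0.continuousAt.tendsto
  refine ⟨fun t => hf.localInverse f L x (f x + t • v), ?_, ?_⟩
  · exact (hf.localInverse_tendsto.comp hc).mono_left nhdsWithin_le_nhds
  · have hγ : HasDerivAt (fun t : ℝ => hf.localInverse f L x (f x + t • v)) (L.symm v) 0 := by
      have h5 : HasFDerivAt (hf.localInverse f L x) (L.symm : ℂ →L[ℝ] ℂ)
          ((fun t : ℝ => f x + t • v) 0) := by
        simpa using hf.to_localInverse.hasFDerivAt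
      exact h5.comp_hasDerivAt (0:ℝ) hγ0
    have h1 := aux_enter hγ (by simp) hx hp
    have h2 := (hc.eventually hf.eventually_right_inverse).filter_mono
      (nhdsWithin_le_nhds (s := Set.Ioi 0))
    filter_upwards [h1, h2] with t a b using ⟨a, b⟩

lemma aux_open {f : ℂ → ℂ} {s : Set ℂ} (hs : IsOpen s)
    (hf : ∀ z ∈ s, ∃ L : ℂ ≃L[ℝ] ℂ, HasStrictFDerivAt f (L : ℂ →L[ℝ] ℂ) z) :
    IsOpen (f '' s) := by
  rw [isOpen_iff_mem_nhds]
  rintro _ ⟨z, hz, rfl⟩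
  obtain ⟨L, hL⟩ := hf z hz
  rw [← hL.map_nhds_eq_of_equiv]
  exact image_mem_map (hs.mem_nhds hz)

lemma aux_closed {f : ℂ → ℂ} {r : ℝ} (hr : 0 < r)
    (hf : ∀ z ∈ closedBall (0:ℂ) r, ∃ L : ℂ ≃L[ℝ] ℂ, HasStrictFDerivAt f (L : ℂ →L[ℝ] ℂ) z)
    (hconv : Convex ℝ (f '' ball 0 r)) (hinj : Set.InjOn f (ball 0 r)) :
    Set.InjOn f (closedBall 0 r) := by
  have hsub : ball (0:ℂ) r ⊆ closedBall 0 r := ball_subset_closedBall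
  -- no boundary point is mapped to the image of an interior point
  have hA : ∀ x ∈ closedBall (0:ℂ) r, ∀ z ∈ ball (0:ℂ) r, f x = f z → x = z := by
    intro x hx z hz hxz
    by_contra hne
    obtain ⟨U, V, hU, hV, hxU, hzV, hd⟩ := t2_separation hne
    obtain ⟨L, hL⟩ := hf z (hsub hz)
    obtain ⟨L', hL'⟩ := hf x hx
    have h1 : f '' (V ∩ ball 0 r) ∈ 𝓝 (f x) := by
      rw [hxz, ← hL.map_nhds_eq_of_equiv]
      exact image_mem_map (inter_mem (hV.mem_nhds hzV) (isOpen_ball.mem_nhds hz))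
    have h2 : f ⁻¹' (f '' (V ∩ ball 0 r)) ∩ U ∈ 𝓝 x :=
      inter_mem (hL'.continuousAt h1) (hU.mem_nhds hxU)
    rw [← closure_ball (0:ℂ) hr.ne'] at hx
    obtain ⟨y, ⟨⟨w, hw, hwy⟩, hyU⟩, hyb⟩ := mem_closure_iff_nhds.1 hx _ h2
    have := hinj hw.2 hyb hwy
    subst this
    exact Set.disjoint_left.1 hd hyU hw.1
  intro x hx y hy hxy
  by_cases hw : f x ∈ f '' ball 0 r
  · obtain ⟨z, hz, hzx⟩ := hw
    rw [hA x hx z hz hzx.symm, hA y hy z hz (by rw [hzx, hxy])]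
  · have hop := aux_open isOpen_ball (fun z hz => hf z (hsub hz))
    obtain ⟨l, hl⟩ := geometric_hahn_banach_open_point hconv hop hw
    have hnx : ‖x - 0‖ = r := by
      rw [sub_zero]
      refine le_antisymm (by simpa using hx) ?_
      by_contra hc
      exact hw ⟨x, by simpa using hc, rfl⟩
    have hny : ‖y - 0‖ = r := by
      rw [sub_zero]
      refine le_antisymm (by simpa using hy) ?_
      by_contra hc
      exact hw ⟨y, by simpa using hc, hxy.symm⟩
    have hv : l (f 0 - f x) < 0 := by
      have := hl (f 0) ⟨0, by simpa using hr, rfl⟩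
      rw [map_sub]; linarith
    obtain ⟨L, hL⟩ := hf x hx
    obtain ⟨L', hL'⟩ := hf y hy
    obtain ⟨γ, hγ, hγ'⟩ := aux_path hL l hr hnx (fun z hz => (hl _ ⟨z, hz, rfl⟩).le) hv
    obtain ⟨η, hη, hη'⟩ := aux_path hL' l hr hny
      (fun z hz => by rw [← hxy]; exact (hl _ ⟨z, hz, rfl⟩).le) hv
    have : γ =ᶠ[𝓝[>] 0] η := by
      filter_upwards [hγ', hη'] with t h1 h2
      exact hinj h1.1 h2.1 (by rw [h1.2, h2.2, hxy])
    exact tendsto_nhds_unique (hγ.congr' this) hη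

lemma aux_inj {f : ℂ → ℂ}
    (hf : ∀ z ∈ ball (0:ℂ) 1, ∃ L : ℂ ≃L[ℝ] ℂ, HasStrictFDerivAt f (L : ℂ →L[ℝ] ℂ) z)
    (hconv : ∀ r : ℝ, 0 < r → r < 1 → Convex ℝ (f '' ball 0 r)) :
    Set.InjOn f (ball 0 1) := by
  have hstep : ∀ r : ℝ, 0 ≤ r → r < 1 → Set.InjOn f (ball 0 r) →
      ∃ ε, 0 < ε ∧ Set.InjOn f (ball 0 (ε + r)) := by
    intro r hr hr1 hi
    have hsub : closedBall (0:ℂ) r ⊆ ball 0 1 := closedBall_subset_ball hr1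
    have hc : Set.InjOn f (closedBall 0 r) := by
      rcases hr.eq_or_lt with h | h
      · subst h; simp
      · exact aux_closed h (fun z hz => hf z (hsub hz)) (hconv r h hr1) hi
    obtain ⟨t, ht, hti⟩ := hc.exists_mem_nhdsSet (isCompact_closedBall _ _)
      (fun x hx => by
        obtain ⟨L, hL⟩ := hf x (hsub hx)
        exact hL.continuousAt)
      (fun x hx => by
        obtain ⟨L, hL⟩ := hf x (hsub hx)
        refine ⟨(hL.toOpenPartialHomeomorph f).source, ?_, ?_⟩
        · exact (hL.toOpenPartialHomeomorph f).open_source.mem_nhds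
            hL.mem_toOpenPartialHomeomorph_source
        · exact (hL.toOpenPartialHomeomorph f).injOn)
    obtain ⟨U, hU, hsU, hUt⟩ := mem_nhdsSet_iff_exists.1 ht
    obtain ⟨δ, hδ, hδU⟩ := (isCompact_closedBall (0:ℂ) r).exists_thickening_subset_open hU hsU
    rw [thickening_closedBall hδ hr] at hδU
    exact ⟨δ, hδ, hti.mono (hδU.trans hUt)⟩
  let S : Set ℝ := {r | 0 ≤ r ∧ r ≤ 1 ∧ Set.InjOn f (ball 0 r)}
  have hS0 : (0:ℝ) ∈ S := ⟨le_rfl, zero_le_one, by simp⟩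
  have hSb : BddAbove S := ⟨1, fun r hr => hr.2.1⟩
  have hs0 : 0 ≤ sSup S := le_csSup hSb hS0
  have hs1 : sSup S ≤ 1 := csSup_le ⟨0, hS0⟩ (fun r hr => hr.2.1)
  have hsi : Set.InjOn f (ball 0 (sSup S)) := by
    intro x hx y hy hxy
    rw [mem_ball_zero_iff] at hx hy
    obtain ⟨r, hr, hlt⟩ := exists_lt_of_lt_csSup ⟨0, hS0⟩ (max_lt hx hy)
    exact hr.2.2 (mem_ball_zero_iff.2 ((le_max_left _ _).trans_lt hlt))
      (mem_ball_zero_iff.2 ((le_max_right _ _).trans_lt hlt)) hxy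
  rcases hs1.eq_or_lt with h | h
  · rwa [h] at hsi
  · exfalso
    obtain ⟨ε, hε, hi⟩ := hstep _ hs0 h hsi
    have : min 1 (ε + sSup S) ∈ S :=
      ⟨le_min zero_le_one (by linarith), min_le_left _ _,
        hi.mono (ball_subset_ball (min_le_right _ _))⟩
    have h2 := le_csSup hSb this
    rcases min_le_iff.1 h2 with h3 | h3 <;> linarith

lemma aux_strict {h g : ℂ → ℂ} {z : ℂ} (hh : AnalyticAt ℂ h z) (hg : AnalyticAt ℂ g z)
    (hsp : ‖deriv g z‖ < ‖deriv h z‖) :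
    ∃ L : ℂ ≃L[ℝ] ℂ, HasStrictFDerivAt (fun z => h z + conj (g z)) (L : ℂ →L[ℝ] ℂ) z ∧
      ∀ v, L v = deriv h z * v + conj (deriv g z * v) := by
  have h1 := hh.hasStrictDerivAt.complexToReal_fderiv
  have h2 := hg.hasStrictDerivAt.complexToReal_fderiv
  have h3 := h1.add ((conjCLE : ℂ →L[ℝ] ℂ).hasStrictFDerivAt.comp z h2)
  set T : ℂ →L[ℝ] ℂ := deriv h z • (1 : ℂ →L[ℝ] ℂ) +
    (conjCLE : ℂ →L[ℝ] ℂ).comp (deriv g z • (1 : ℂ →L[ℝ] ℂ)) with hT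
  have hTv : ∀ v, T v = deriv h z * v + conj (deriv g z * v) := by
    intro v; simp [hT]
  have hinj : Function.Injective (T : ℂ →ₗ[ℝ] ℂ) := by
    rw [← LinearMap.ker_eq_bot, LinearMap.ker_eq_bot']
    intro v hv
    have hv : T v = 0 := hv
    rw [hTv] at hv
    by_contra hne
    have h5 : ‖deriv h z * v‖ = ‖deriv g z * v‖ := by
      rw [eq_neg_of_add_eq_zero_left hv, norm_neg, RCLike.norm_conj]
    rw [norm_mul, norm_mul] at h5
    have := mul_lt_mul_of_pos_right hsp (norm_pos_iff.2 hne)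
    linarith
  refine ⟨(LinearEquiv.ofInjectiveEndo (T : ℂ →ₗ[ℝ] ℂ) hinj).toContinuousLinearEquiv, ?_, ?_⟩
  · have : (((LinearEquiv.ofInjectiveEndo (T : ℂ →ₗ[ℝ] ℂ) hinj).toContinuousLinearEquiv :
      ℂ ≃L[ℝ] ℂ) : ℂ →L[ℝ] ℂ) = T := by
      ext v <;> rfl
    rw [this]
    exact h3
  · intro v
    exact hTv v

lemma aux_taylor {h : ℂ → ℂ} (hh : AnalyticAt ℂ h 0) :
    (fun z => h z - (h 0 + deriv h 0 * z + deriv (deriv h) 0 / 2 * z ^ 2))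
      =O[𝓝 0] fun z => ‖z‖ ^ 3 := by
  have h1 := hh.hasFPowerSeriesAt.isBigO_sub_partialSum_pow 3
  refine h1.congr_left ?_
  intro z
  simp [FormalMultilinearSeries.partialSum, Finset.sum_range_succ, iteratedDeriv_succ,
    iteratedDeriv_zero]
  ring

/-- curvature condition at the origin -/
lemma aux_curv {h g : ℂ → ℂ} {a : ℂ} (hh : AnalyticAt ℂ h 0) (hg : AnalyticAt ℂ g 0)
    (h0 : h 0 = 0) (g0 : g 0 = 0) (hd1 : deriv h 0 = 1) (gd1 : deriv g 0 = 0) (ha : a ≠ 0)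
    (hop : IsOpen ((fun z => h z + conj (g z)) '' ball a ‖a‖))
    (hconv : Convex ℝ ((fun z => h z + conj (g z)) '' ball a ‖a‖))
    (h0n : (0:ℂ) ∉ (fun z => h z + conj (g z)) '' ball a ‖a‖) :
    (conj a * (deriv (deriv h) 0 / 2 * a ^ 2 + conj (deriv (deriv g) 0 / 2 * a ^ 2))).re
      ≤ ‖a‖ ^ 2 / 2 := by
  obtain ⟨l, hl⟩ := geometric_hahn_banach_open_point hconv hop h0n
  rw [map_zero] at hl
  obtain ⟨L, hL, hLv⟩ := aux_strict hh hg (by simp [hd1, gd1])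
  have hLid : ∀ v, L v = v := by intro v; simp [hLv, hd1, gd1]
  have hdir : ∀ q : ℂ, 0 < inner ℝ a q → l q ≤ 0 := by
    intro q hq
    have := aux_dir (c := a) (r := ‖a‖) (q := q) hL.hasFDerivAt l (by simp)
      (fun z hz => by simpa [h0, g0] using (hl _ ⟨z, hz, rfl⟩).le)
      (by rw [zero_sub, inner_neg_left]; linarith)
    simpa [hLid] using this
  have hapos : 0 < ‖a‖ := norm_pos_iff.2 ha
  have hl1 : l a ≤ 0 := hdir a (by rw [real_inner_self_eq_norm_sq]; positivity)
  have hl2 : l (I * a) = 0 := by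
    have hi : ∀ s δ : ℝ, 0 < δ → s * l (I * a) + δ * l a ≤ 0 := by
      intro s δ hδ
      have := hdir (s • (I * a) + δ • a) (by
        rw [inner_add_right, inner_smul_right, inner_smul_right, real_inner_self_eq_norm_sq]
        have : inner ℝ a (I * a) = 0 := by simp [Complex.inner]; ring
        rw [this]
        have : 0 < δ * ‖a‖ ^ 2 := by positivity
        linarith)
      rw [map_add, map_smul, map_smul] at this
      exact this
    have lim : ∀ s : ℝ, s * l (I * a) ≤ 0 := by
      intro s
      have ht : Tendsto (fun δ : ℝ => s * l (I * a) + δ * l a) (𝓝[>] 0)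
          (𝓝 (s * l (I * a) + 0 * l a)) :=
        Tendsto.mono_left (Continuous.tendsto (by fun_prop) 0) nhdsWithin_le_nhds
      have := le_of_tendsto ht (by
        filter_upwards [self_mem_nhdsWithin] with δ hδ using hi s δ hδ)
      linarith
    have h1 := lim 1
    have h2 := lim (-1)
    linarith
  have hlz : ∀ z : ℂ, l z = (conj a * z).re / ‖a‖ ^ 2 * l a := by
    intro z
    have hz : z = ((conj a * z).re / ‖a‖ ^ 2) • a + ((conj a * z).im / ‖a‖ ^ 2) • (I * a) := by
      have hn : (‖a‖:ℂ) ^ 2 ≠ 0 := by exact_mod_cast (by positivity : ‖a‖ ^ 2 ≠ 0)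
      have e1 : ((conj a * z).re : ℂ) + (conj a * z).im * I = conj a * z := re_add_im _
      have e2 : conj a * a = (‖a‖:ℂ) ^ 2 := conj_mul' a
      simp only [real_smul]
      generalize (conj a * z).re = p at *
      generalize (conj a * z).im = p' at *
      push_cast
      rw [div_mul_eq_mul_div, div_mul_eq_mul_div, ← add_div, eq_div_iff hn]
      linear_combination (-a) * e1 - z * e2
    conv_lhs => rw [hz]
    rw [map_add, map_smul, map_smul, hl2, smul_zero, add_zero, smul_eq_mul]
  have hla : l a < 0 := by
    refine lt_of_le_of_ne hl1 ?_
    intro hc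
    have h1 := hl _ ⟨a, by simpa using ha, rfl⟩
    rw [hlz, hc] at h1
    simp at h1
  have hpos : ∀ z ∈ ball a ‖a‖, 0 < (conj a * (h z + conj (g z))).re := by
    intro z hz
    have h1 := hl _ ⟨z, hz, rfl⟩
    rw [hlz] at h1
    have h2 := pos_of_mul_neg_left h1 hla.le
    by_contra hc
    push Not at hc
    have : (conj a * (h z + conj (g z))).re / ‖a‖ ^ 2 ≤ 0 :=
      div_nonpos_of_nonpos_of_nonneg hc (by positivity)
    linarith
  set A := deriv (deriv h) 0 / 2 with hA
  set B := deriv (deriv g) 0 / 2 with hB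
  have hTh := aux_taylor hh
  have hTg := aux_taylor hg
  simp only [h0, hd1, g0, gd1, zero_add, one_mul, zero_mul, ← hA, ← hB] at hTh hTg
  -- the curve
  have hk : ∀ k : ℝ, 1 / 2 < k →
      (conj a * (A * a ^ 2 + conj (B * a ^ 2))).re ≤ k * ‖a‖ ^ 2 := by
    intro k hk
    let γ : ℝ → ℂ := fun t => t * (a * (I + k * t))
    have hγc : Continuous γ := by fun_prop
    have hγ0 : Tendsto γ (𝓝[>] 0) (𝓝 0) := by
      have : Tendsto γ (𝓝 0) (𝓝 (γ 0)) := hγc.tendsto 0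
      simp only [γ, ofReal_zero, zero_mul] at this
      exact this.mono_left nhdsWithin_le_nhds
    have hγO : (fun t : ℝ => ‖γ t‖ ^ 3) =O[𝓝[>] 0] fun t : ℝ => t ^ 3 := by
      have : γ =O[𝓝[>] 0] fun t : ℝ => t := by
        have h1 : (fun t : ℝ => a * (I + k * t)) =O[𝓝[>] (0:ℝ)] fun t : ℝ => (1:ℝ) := by
          have : Tendsto (fun t : ℝ => a * (I + k * t)) (𝓝[>] 0) (𝓝 (a * (I + k * (0:ℝ)))) :=
            (Continuous.tendsto (by fun_prop) 0).mono_left nhdsWithin_le_nhds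
          exact this.isBigO_one ℝ
        have h2 : (fun t : ℝ => (t:ℂ)) =O[𝓝[>] (0:ℝ)] fun t : ℝ => t :=
          Asymptotics.IsBigO.of_bound 1 (by simp)
        simpa using h2.mul h1
      exact this.norm_left.pow 3
    have hlo : (fun t : ℝ => t ^ 3) =o[𝓝[>] 0] fun t : ℝ => t ^ 2 :=
      (Asymptotics.isLittleO_pow_pow (by norm_num)).mono nhdsWithin_le_nhds
    have hE1 : (fun t : ℝ => h (γ t) - (γ t + A * γ t ^ 2)) =o[𝓝[>] 0] fun t : ℝ => t ^ 2 :=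
      ((hTh.comp_tendsto hγ0).trans hγO).trans_isLittleO hlo
    have hE2 : (fun t : ℝ => g (γ t) - (B * γ t ^ 2)) =o[𝓝[>] 0] fun t : ℝ => t ^ 2 :=
      ((hTg.comp_tendsto hγ0).trans hγO).trans_isLittleO hlo
    have hF1 : Tendsto (fun t : ℝ => (h (γ t) - (γ t + A * γ t ^ 2)) / (t:ℂ) ^ 2)
        (𝓝[>] 0) (𝓝 0) := by
      have : (fun t : ℝ => h (γ t) - (γ t + A * γ t ^ 2)) =o[𝓝[>] 0] fun t : ℝ => (t:ℂ) ^ 2 := by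
        refine hE1.trans_isBigO (Asymptotics.IsBigO.of_bound 1 (by simp))
      exact this.tendsto_div_nhds_zero
    have hF2 : Tendsto (fun t : ℝ => (g (γ t) - (B * γ t ^ 2)) / (t:ℂ) ^ 2)
        (𝓝[>] 0) (𝓝 0) := by
      have : (fun t : ℝ => g (γ t) - (B * γ t ^ 2)) =o[𝓝[>] 0] fun t : ℝ => (t:ℂ) ^ 2 := by
        refine hE2.trans_isBigO (Asymptotics.IsBigO.of_bound 1 (by simp))
      exact this.tendsto_div_nhds_zero
    have hm : ∀ C : ℂ, Tendsto (fun t : ℝ => C * (a * (I + k * t)) ^ 2) (𝓝[>] 0)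
        (𝓝 (C * (a * (I + k * (0:ℝ))) ^ 2)) := fun C =>
      (Continuous.tendsto (by fun_prop) 0).mono_left nhdsWithin_le_nhds
    have hG := (((hF1.add (hm A)).add
      ((continuous_conj.tendsto _).comp (hF2.add (hm B)))).const_mul (conj a))
    have hG' := ((continuous_re.tendsto _).comp hG).add_const (k * ‖a‖ ^ 2)
    have hmem : ∀ᶠ t : ℝ in 𝓝[>] 0, γ t ∈ ball a ‖a‖ := by
      have hsm : ∀ᶠ t : ℝ in 𝓝[>] 0, k ^ 2 * t ^ 2 < 2 * k - 1 := by
        have : Tendsto (fun t : ℝ => k ^ 2 * t ^ 2) (𝓝[>] 0) (𝓝 (k ^ 2 * 0 ^ 2)) :=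
          (Continuous.tendsto (by fun_prop) 0).mono_left nhdsWithin_le_nhds
        exact this.eventually_lt_const (by linarith)
      filter_upwards [hsm, self_mem_nhdsWithin] with t ht ht0
      have ht0 : 0 < t := ht0
      rw [mem_ball_iff_norm]
      have e : γ t - a = a * (((k * t ^ 2 - 1 : ℝ) : ℂ) + (t : ℝ) * I) := by
        simp only [γ]; push_cast; ring
      rw [e, norm_mul]
      have : ‖(((k * t ^ 2 - 1 : ℝ) : ℂ) + (t : ℝ) * I)‖ < 1 := by
        rw [← sq_lt_one_iff₀ (norm_nonneg _), ← normSq_eq_norm_sq, normSq_add_mul_I]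
        have := mul_lt_mul_of_pos_right ht (pow_pos ht0 2)
        nlinarith
      nlinarith
    have hge := ge_of_tendsto hG' (b := 0) (by
      filter_upwards [hmem, self_mem_nhdsWithin] with t ht ht0
      have ht0 : 0 < t := ht0
      have h1 := hpos _ ht
      have htc : (t:ℂ) ≠ 0 := by exact_mod_cast ht0.ne'
      have e2 : conj a * a = (‖a‖:ℂ) ^ 2 := conj_mul' a
      have e : conj a * (h (γ t) + conj (g (γ t))) = ((t ^ 2 : ℝ) : ℂ) *
          (conj a * ((h (γ t) - (γ t + A * γ t ^ 2)) / (t:ℂ) ^ 2 + A * (a * (I + k * t)) ^ 2 +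
            conj ((g (γ t) - (B * γ t ^ 2)) / (t:ℂ) ^ 2 + B * (a * (I + k * t)) ^ 2))) +
          ((t ^ 2 * (k * ‖a‖ ^ 2) : ℝ) : ℂ) + ((t * ‖a‖ ^ 2 : ℝ) : ℂ) * I := by
        have e3 : (h (γ t) - (γ t + A * γ t ^ 2)) / (t:ℂ) ^ 2 + A * (a * (I + k * t)) ^ 2
            = (h (γ t) - γ t) / (t:ℂ) ^ 2 := by
          simp only [γ]; field_simp; ring
        have e4 : (g (γ t) - (B * γ t ^ 2)) / (t:ℂ) ^ 2 + B * (a * (I + k * t)) ^ 2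
            = g (γ t) / (t:ℂ) ^ 2 := by
          simp only [γ]; field_simp; ring
        rw [e3, e4, map_div₀, map_pow, conj_ofReal]
        push_cast
        rw [← e2]
        field_simp
        simp only [γ]
        ring
      rw [e] at h1
      simp only [add_re, re_ofReal_mul, ofReal_re, I_re, mul_zero, add_zero] at h1
      have h2 : 0 < t ^ 2 := by positivity
      simp only [Function.comp_apply]
      rw [← mul_add] at h1
      exact (pos_of_mul_pos_right h1 h2.le).le)
    have e5 : conj a * (0 + A * (a * (I + k * (0:ℝ))) ^ 2 + conj (0 + B * (a * (I + k * (0:ℝ))) ^ 2))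
        = -(conj a * (A * a ^ 2 + conj (B * a ^ 2))) := by
      have : (a * (I + k * ((0:ℝ):ℂ))) ^ 2 = - a ^ 2 := by
        simp [mul_pow]
      rw [this]
      simp only [zero_add, mul_neg, map_neg]; ring
    rw [e5, neg_re] at hge
    linarith
  have ht : Tendsto (fun k : ℝ => k * ‖a‖ ^ 2) (𝓝[>] (1/2)) (𝓝 (1 / 2 * ‖a‖ ^ 2)) :=
    (Continuous.tendsto (by fun_prop) _).mono_left nhdsWithin_le_nhds
  have := ge_of_tendsto ht (by
    filter_upwards [self_mem_nhdsWithin] with k hk' using hk k hk')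
  linarith

/-- If `f = h + conj g ∈ 𝒜𝒦⁰_H` (sense-preserving, normalized
`h(0) = g(0) = 0`, `h'(0) = 1`, `g'(0) = 0`, and `f(𝔻(a,r))` convex for all `a ∈ 𝔻`,
`0 < r < 1 - |a|`), then the second Taylor coefficient `a₂ = h''(0)/2` satisfies
`|a₂| ≤ 2/√3`. -/
theorem AK0_second_coeff_bound (h g : ℂ → ℂ)
    (hh : DifferentiableOn ℂ h (ball (0:ℂ) 1))
    (hg : DifferentiableOn ℂ g (ball (0:ℂ) 1))
    (hsp : ∀ z ∈ ball (0:ℂ) 1, ‖deriv g z‖ < ‖deriv h z‖)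
    (h0 : h 0 = 0) (g0 : g 0 = 0) (hd1 : deriv h 0 = 1) (gd1 : deriv g 0 = 0)
    (hconv : ∀ a ∈ ball (0:ℂ) 1, ∀ r : ℝ, 0 < r → r < 1 - ‖a‖ →
        Convex ℝ ((fun z => h z + conj (g z)) '' ball a r)) :
    ‖deriv (deriv h) 0 / 2‖ ≤ 2 / Real.sqrt 3 := by
  have hha : ∀ z ∈ ball (0:ℂ) 1, AnalyticAt ℂ h z :=
    fun z hz => hh.analyticAt (isOpen_ball.mem_nhds hz)
  have hga : ∀ z ∈ ball (0:ℂ) 1, AnalyticAt ℂ g z :=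
    fun z hz => hg.analyticAt (isOpen_ball.mem_nhds hz)
  have hst : ∀ z ∈ ball (0:ℂ) 1, ∃ L : ℂ ≃L[ℝ] ℂ,
      HasStrictFDerivAt (fun z => h z + conj (g z)) (L : ℂ →L[ℝ] ℂ) z := by
    intro z hz
    obtain ⟨L, hL, -⟩ := aux_strict (hha z hz) (hga z hz) (hsp z hz)
    exact ⟨L, hL⟩
  have hm0 : (0:ℂ) ∈ ball (0:ℂ) 1 := by simp
  have hinj := aux_inj hst (fun r hr hr1 => hconv 0 hm0 r hr (by simpa using hr1))
  set A := deriv (deriv h) 0 / 2 with hA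
  set B := deriv (deriv g) 0 / 2 with hB
  have key : ∀ a : ℂ, a ≠ 0 → ‖a‖ < 1 / 2 →
      (A * a).re * ‖a‖ ^ 2 + (B * a ^ 3).re ≤ ‖a‖ ^ 2 / 2 := by
    intro a ha ha2
    have hsub : ball a ‖a‖ ⊆ ball (0:ℂ) 1 :=
      ball_subset_ball' (by rw [dist_zero_right]; linarith)
    have := aux_curv (hha 0 hm0) (hga 0 hm0) h0 g0 hd1 gd1 ha
      (aux_open isOpen_ball (fun z hz => hst z (hsub hz)))
      (hconv a (mem_ball_zero_iff.2 (by linarith)) ‖a‖ (norm_pos_iff.2 ha) (by linarith))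
      (by
        rintro ⟨z, hz, hz0⟩
        have : z = 0 := hinj (hsub hz) hm0 (by simpa [h0, g0] using hz0)
        subst this
        simp at hz)
    rw [← hA, ← hB] at this
    have e2 : conj a * a = (‖a‖:ℂ) ^ 2 := conj_mul' a
    have e : conj a * (A * a ^ 2 + conj (B * a ^ 2)) =
        ((‖a‖ ^ 2 : ℝ) : ℂ) * (A * a) + conj (B * a ^ 3) := by
      push_cast
      rw [← e2]
      simp only [map_mul, map_pow]
      ring
    rw [e, add_re, re_ofReal_mul, conj_re] at this
    linarith
  by_cases hA0 : A = 0
  · rw [hA0, norm_zero]; positivity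
  have hAn : 0 < ‖A‖ := norm_pos_iff.2 hA0
  have hs3 : Real.sqrt 3 ^ 2 = 3 := Real.sq_sqrt (by norm_num)
  have hs3p : 0 < Real.sqrt 3 := by positivity
  have hs3c : ((Real.sqrt 3 : ℝ) : ℂ) ^ 2 = 3 := by exact_mod_cast hs3
  set s := Real.sqrt 3
  let u : ℂ := conj A / ‖A‖
  have hAc : (‖A‖ : ℂ) ≠ 0 := by exact_mod_cast hAn.ne'
  have hun : ‖u‖ = 1 := by simp [u, hAn.ne']
  have hAu : A * u = ‖A‖ := by
    have : A * conj A = (‖A‖:ℂ) ^ 2 := mul_conj' A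
    simp only [u]
    field_simp
    exact this
  have hρ : ∀ ρ : ℝ, 0 < ρ → ρ < 1 / 2 → ρ * (s * ‖A‖) ≤ 1 := by
    intro ρ hρ hρ2
    have hep : ∀ σ : ℝ, σ ^ 2 = 1 → ‖((s / 2 : ℝ) : ℂ) + ((σ / 2 : ℝ) : ℂ) * I‖ = 1 := by
      intro σ hσ
      rw [← sq_eq_sq₀ (norm_nonneg _) zero_le_one, ← normSq_eq_norm_sq, normSq_add_mul_I]
      nlinarith
    have hk : ∀ σ : ℝ, σ ^ 2 = 1 →
        ρ ^ 3 * (‖A‖ * (s / 2)) + σ * (ρ ^ 3 * (B * u ^ 3 * I).re) ≤ ρ ^ 2 / 2 := by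
      intro σ hσ
      have hσc : (σ:ℂ) ^ 2 = 1 := by exact_mod_cast hσ
      let a : ℂ := ρ * u * (((s / 2 : ℝ) : ℂ) + ((σ / 2 : ℝ) : ℂ) * I)
      have hn : ‖a‖ = ρ := by
        simp only [a]
        rw [norm_mul, norm_mul, hep σ hσ, hun, norm_real, Real.norm_of_nonneg hρ.le]; ring
      have h1 := key a (norm_pos_iff.1 (by rw [hn]; exact hρ)) (by rw [hn]; exact hρ2)
      rw [hn] at h1
      have e1 : A * a = ((ρ * ‖A‖ * (s / 2) : ℝ) : ℂ) + ((ρ * ‖A‖ * (σ / 2) : ℝ) : ℂ) * I := by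
        simp only [a]; push_cast
        linear_combination (ρ * ((s:ℂ) / 2 + σ / 2 * I)) * hAu
      have e2 : B * a ^ 3 = ((σ * ρ ^ 3 : ℝ) : ℂ) * (B * u ^ 3 * I) := by
        have : (((s / 2 : ℝ) : ℂ) + ((σ / 2 : ℝ) : ℂ) * I) ^ 3 = σ * I := by
          push_cast
          have hI : I ^ 2 = -1 := I_sq
          linear_combination (1/8 * (s:ℂ) + 3/8 * σ * I) * hs3c
            + (3/8 * s * σ ^ 2 + σ ^ 3 * I / 8) * hI - (3/8 * s + σ * I/8) * hσc
        simp only [a]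
        rw [mul_pow, this]; push_cast; ring
      rw [e1, e2, re_ofReal_mul] at h1
      simp only [add_re, re_ofReal_mul, ofReal_re, I_re, mul_zero, add_zero] at h1
      linarith
    have h1 := hk 1 (by norm_num)
    have h2 := hk (-1) (by norm_num)
    have h3 : ρ ^ 2 * (ρ * (s * ‖A‖)) ≤ ρ ^ 2 * 1 := by nlinarith
    exact le_of_mul_le_mul_left h3 (by positivity)
  have ht : Tendsto (fun ρ : ℝ => ρ * (s * ‖A‖)) (𝓝[<] (1/2)) (𝓝 (1 / 2 * (s * ‖A‖))) :=
    (Continuous.tendsto (by fun_prop) _).mono_left nhdsWithin_le_nhds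
  have hfin := le_of_tendsto ht (b := 1) (by
    have hpos : ∀ᶠ ρ : ℝ in 𝓝[<] (1/2), 0 < ρ :=
      (eventually_gt_nhds (by norm_num)).filter_mono nhdsWithin_le_nhds
    filter_upwards [hpos, self_mem_nhdsWithin] with ρ h1 h2 using hρ ρ h1 h2)
  rw [le_div_iff₀ hs3p]
  linarith
end
end

section
/- Every function f \in \mathcal{AK}^0_H satisfies, for 0 < |z| = r < 1, the growth inequalities (\sqrt{3}/(\sqrt{3}+4)) [1 - ((1-r)/(1+r))^{(\sqrt{3}+4)/(2\sqrt{3})}] \leq |f(z)| \leq (\sqrt{3}/(\sqrt{3}+4)) [((1+r)/(1-r))^{(\sqrt{3}+4)/(2\sqrt{3})} - 1]. -/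
open Complex Metric ComplexConjugate

noncomputable section

open Set Filter Topology

/-- The harmonic map `h + conj g`. -/
def hm (h g : ℂ → ℂ) (z : ℂ) : ℂ := h z + conj (g z)

/-- The hypotheses of the growth theorem without the normalization. -/
structure AKH (h g : ℂ → ℂ) : Prop where
  hh : DifferentiableOn ℂ h (ball (0:ℂ) 1)
  hg : DifferentiableOn ℂ g (ball (0:ℂ) 1)
  hsp : ∀ z ∈ ball (0:ℂ) 1, ‖deriv g z‖ < ‖deriv h z‖
  hconv : ∀ a ∈ ball (0:ℂ) 1, ∀ r : ℝ, 0 < r → r < 1 - ‖a‖ → Convex ℝ (hm h g '' ball a r)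

lemma hol_strict {h : ℂ → ℂ} (hh : DifferentiableOn ℂ h (ball (0:ℂ) 1)) {x : ℂ}
    (hx : x ∈ ball (0:ℂ) 1) : HasStrictDerivAt h (deriv h x) x := by
  have := (hh.analyticAt (isOpen_ball.mem_nhds hx))
  exact this.hasStrictDerivAt

lemma hol_deriv {h : ℂ → ℂ} (hh : DifferentiableOn ℂ h (ball (0:ℂ) 1)) :
    DifferentiableOn ℂ (deriv h) (ball (0:ℂ) 1) := hh.deriv isOpen_ball

/-- The real derivative of `h + conj g`. -/
def Lmap (p q : ℂ) : ℂ →L[ℝ] ℂ :=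
  (ContinuousLinearMap.toSpanSingleton ℂ p).restrictScalars ℝ +
    (conjCLE : ℂ →L[ℝ] ℂ).comp ((ContinuousLinearMap.toSpanSingleton ℂ q).restrictScalars ℝ)

lemma Lmap_apply (p q v : ℂ) : Lmap p q v = p * v + conj (q * v) := by
  simp [Lmap, mul_comm]

lemma Lmap_inj {p q : ℂ} (hpq : ‖q‖ < ‖p‖) : Function.Injective (Lmap p q) := by
  intro a b hab
  have h1 : Lmap p q (a - b) = 0 := by rw [map_sub, hab, sub_self]
  rw [Lmap_apply] at h1
  have h2 : ‖p * (a-b)‖ = ‖conj (q * (a - b))‖ := by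
    rw [eq_neg_of_add_eq_zero_left h1, norm_neg]
  rw [Complex.norm_conj, norm_mul, norm_mul] at h2
  by_contra hne
  have : 0 < ‖a - b‖ := norm_pos_iff.2 (sub_ne_zero.2 hne)
  nlinarith

lemma hm_strict {h g : ℂ → ℂ} (H : AKH h g) {x : ℂ} (hx : x ∈ ball (0:ℂ) 1) :
    ∃ e : ℂ ≃L[ℝ] ℂ, (∀ v, e v = deriv h x * v + conj (deriv g x * v)) ∧
      HasStrictFDerivAt (hm h g) (e : ℂ →L[ℝ] ℂ) x := by
  have h1 := (hol_strict H.hh hx).hasStrictFDerivAt.restrictScalars ℝ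
  have h2 := (hol_strict H.hg hx).hasStrictFDerivAt.restrictScalars ℝ
  have h3 := h1.add ((conjCLE : ℂ →L[ℝ] ℂ).hasStrictFDerivAt.comp x h2)
  let e := (LinearEquiv.ofInjectiveEndo (Lmap (deriv h x) (deriv g x)).toLinearMap
    (Lmap_inj (H.hsp x hx))).toContinuousLinearEquiv
  have he : ∀ v, e v = Lmap (deriv h x) (deriv g x) v := fun v => rfl
  refine ⟨e, fun v => by rw [he, Lmap_apply], ?_⟩
  convert! h3 using 1

lemma hm_curve {h g : ℂ → ℂ} (H : AKH h g) {x : ℂ} (hx : x ∈ ball (0:ℂ) 1) (c : ℂ) :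
    ∃ v, deriv h x * v + conj (deriv g x * v) = c ∧ ∃ γ : ℝ → ℂ, γ 0 = x ∧ HasDerivAt γ v 0 ∧
      ∀ᶠ ε in 𝓝 (0:ℝ), hm h g (γ ε) = hm h g x + ε * c := by
  obtain ⟨e, he, hs⟩ := hm_strict H hx
  refine ⟨e.symm c, by rw [← he]; simp, fun ε => hs.localInverse _ _ _ (hm h g x + ε * c), by simp, ?_, ?_⟩
  · have h1 : HasDerivAt (fun ε : ℝ => hm h g x + ε * c) c 0 := by
      have := ((hasDerivAt_id (0:ℝ)).ofReal_comp.mul_const c).const_add (hm h g x)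
      simpa using this
    have h2 := hs.to_localInverse.hasFDerivAt
    have h3 : hm h g x = hm h g x + ((0:ℝ):ℂ) * c := by simp
    rw [h3] at h2
    exact h2.comp_hasDerivAt (0:ℝ) h1
  · have h1 : Tendsto (fun ε : ℝ => hm h g x + ε * c) (𝓝 0) (𝓝 (hm h g x)) := by
      have : Continuous (fun ε : ℝ => hm h g x + ε * c) := by fun_prop
      simpa using this.tendsto 0
    exact h1.eventually hs.eventually_right_inverse

lemma hm_contOn {h g : ℂ → ℂ} (H : AKH h g) : ContinuousOn (hm h g) (ball (0:ℂ) 1) :=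
  H.hh.continuousOn.add (continuous_conj.comp_continuousOn H.hg.continuousOn)

lemma hm_open {h g : ℂ → ℂ} (H : AKH h g) {s : Set ℂ} (hs : IsOpen s) (hsub : s ⊆ ball (0:ℂ) 1) :
    IsOpen (hm h g '' s) := by
  rw [isOpen_iff_mem_nhds]
  rintro _ ⟨x, hx, rfl⟩
  obtain ⟨e, he, hst⟩ := hm_strict H (hsub hx)
  rw [← hst.map_nhds_eq_of_equiv]
  exact image_mem_map (hs.mem_nhds hx)

/-- First and second order conditions for the maximum of `Re F` on a closed disc. -/
lemma jack {F : ℂ → ℂ} (hF : DifferentiableOn ℂ F (ball (0:ℂ) 1)) {a ζ : ℂ}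
    (haz : ‖a‖ + ‖ζ‖ < 1)
    (hmax : ∀ y ∈ closedBall a ‖ζ‖, (F y).re ≤ (F (a + ζ)).re) :
    (ζ * deriv F (a + ζ)).im = 0 ∧ 0 ≤ (ζ * deriv F (a + ζ)).re ∧
      0 ≤ (ζ * deriv F (a + ζ) + ζ ^ 2 * deriv (deriv F) (a + ζ)).re := by
  have hmem : ∀ t : ℝ, a + ζ * cexp (t * I) ∈ closedBall a ‖ζ‖ := by
    intro t
    simp [mem_closedBall, dist_eq_norm, Complex.norm_exp_ofReal_mul_I]
  have hsub : closedBall a ‖ζ‖ ⊆ ball (0:ℂ) 1 := by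
    intro y hy
    rw [mem_closedBall, dist_eq_norm] at hy
    rw [mem_ball_zero_iff]
    have : ‖y‖ ≤ ‖y - a‖ + ‖a‖ := by simpa using norm_add_le (y - a) a
    linarith
  have hc : ∀ t : ℝ, HasDerivAt (fun t : ℝ => a + ζ * cexp (t * I)) (ζ * (cexp (t * I) * I)) t := by
    intro t
    have h1 : HasDerivAt (fun t : ℝ => (t:ℂ) * I) I t := by
      simpa using (hasDerivAt_id t).ofReal_comp.mul_const I
    exact (h1.cexp.const_mul ζ).const_add a
  have hd : ∀ t : ℝ, HasDerivAt (fun t : ℝ => (F (a + ζ * cexp (t * I))).re)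
      (deriv F (a + ζ * cexp (t * I)) * (ζ * (cexp (t * I) * I))).re t := by
    intro t
    have h1 := (hF.differentiableAt (isOpen_ball.mem_nhds (hsub (hmem t)))).hasDerivAt
    have h2 := h1.comp t (hc t)
    exact (reCLM.hasFDerivAt.comp_hasDerivAt t h2)
  have hd2 : HasDerivAt (fun t : ℝ => (deriv F (a + ζ * cexp (t * I)) * (ζ * (cexp (t * I) * I))).re)
      (-(ζ * deriv F (a + ζ) + ζ ^ 2 * deriv (deriv F) (a + ζ)).re) 0 := by
    have h0 := ((hF.deriv isOpen_ball).differentiableAt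
      (isOpen_ball.mem_nhds (hsub (hmem 0)))).hasDerivAt
    have h2 := h0.comp (0:ℝ) (hc 0)
    have h3 : HasDerivAt (fun t : ℝ => ζ * (cexp (t * I) * I)) (ζ * (cexp ((0:ℝ) * I) * I * I)) 0 := by
      have h1 : HasDerivAt (fun t : ℝ => (t:ℂ) * I) I 0 := by
        simpa using (hasDerivAt_id (0:ℝ)).ofReal_comp.mul_const I
      exact ((h1.cexp.mul_const I).const_mul ζ)
    have h4 := reCLM.hasFDerivAt.comp_hasDerivAt (0:ℝ) (h2.mul h3)
    convert! h4 using 1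
    simp only [ofReal_zero, zero_mul, Complex.exp_zero, mul_one, one_mul, Function.comp, reCLM_apply]
    rw [← neg_re]
    congr 1
    linear_combination (-(ζ ^ 2 * deriv (deriv F) (a + ζ)) - ζ * deriv F (a + ζ)) * I_mul_I
  have hmaxt : IsLocalMax (fun t : ℝ => (F (a + ζ * cexp (t * I))).re) 0 := by
    refine Eventually.of_forall fun t => ?_
    simpa using hmax _ (hmem t)
  have hfirst : deriv F (a + ζ) * (ζ * I) = deriv F (a + ζ) * (ζ * I) ∧
      (deriv F (a + ζ) * (ζ * I)).re = 0 := by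
    refine ⟨rfl, ?_⟩
    have := hmaxt.hasDerivAt_eq_zero (hd 0)
    simpa using this
  refine ⟨?_, ?_, ?_⟩
  · have := hfirst.2
    have e : (deriv F (a + ζ) * (ζ * I)) = (ζ * deriv F (a + ζ)) * I := by ring
    rw [e, mul_I_re] at this
    linarith
  · skip
    by_contra hneg
    push Not at hneg
    have hr : HasDerivAt (fun s : ℝ => (F (a + ζ * s)).re) (ζ * deriv F (a + ζ)).re 1 := by
      have h1 : HasDerivAt (fun s : ℝ => a + ζ * (s:ℂ)) ζ 1 := by
        simpa using ((hasDerivAt_id (1:ℝ)).ofReal_comp.const_mul ζ).const_add a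
      have h0 := (hF.differentiableAt (isOpen_ball.mem_nhds (hsub (hmem 0)))).hasDerivAt
      have h0' : HasDerivAt F (deriv F (a + ζ)) (a + ζ * ((1:ℝ):ℂ)) := by simpa using h0
      have h2 := reCLM.hasFDerivAt.comp_hasDerivAt (1:ℝ) (h0'.comp (1:ℝ) h1)
      convert! h2 using 1
      simp [mul_comm]
    have h5 := hr.hasDerivWithinAt (s := Iio 1)
    have h6 := (hasDerivWithinAt_iff_tendsto_slope' (by simp)).1 h5
    have h7 : 0 ≤ (ζ * deriv F (a + ζ)).re := by
      refine ge_of_tendsto h6 ?_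
      have : Ioo (0:ℝ) 1 ∈ 𝓝[<] (1:ℝ) := Ioo_mem_nhdsLT (by norm_num)
      filter_upwards [this] with s hs
      have hle : (F (a + ζ * s)).re ≤ (F (a + ζ)).re := by
        apply hmax
        rw [mem_closedBall, dist_eq_norm]
        simp only [add_sub_cancel_left, norm_mul, norm_real, Real.norm_eq_abs, abs_of_pos hs.1]
        nlinarith [norm_nonneg ζ, hs.2]
      rw [slope_def_field]
      apply div_nonneg_of_nonpos
      · simpa using hle
      · linarith [hs.2]
    linarith
  · by_contra hneg
    push Not at hneg
    have hdd : deriv (fun t : ℝ => (F (a + ζ * cexp (t * I))).re) =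
        fun t : ℝ => (deriv F (a + ζ * cexp (t * I)) * (ζ * (cexp (t * I) * I))).re :=
      funext fun t => (hd t).deriv
    have hmin := isLocalMin_of_deriv_deriv_pos
      (f := fun t : ℝ => (F (a + ζ * cexp (t * I))).re) (x₀ := 0)
      (by rw [hdd, hd2.deriv]; linarith) (hmaxt.deriv_eq_zero) (hd 0).continuousAt
    have hconst : (fun t : ℝ => (F (a + ζ * cexp (t * I))).re) =ᶠ[𝓝 0] fun _ => (F (a + ζ * cexp ((0:ℝ) * I))).re := by
      filter_upwards [hmin, hmaxt] with t h1 h2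
      exact le_antisymm h2 h1
    have h8 := hconst.deriv.deriv.eq_of_nhds
    rw [hdd, hd2.deriv] at h8
    simp at h8
    simp at hneg
    linarith

lemma support_ex {h g : ℂ → ℂ} (H : AKH h g) {a ζ : ℂ} (hζ : ζ ≠ 0) (haz : ‖a‖ + ‖ζ‖ < 1)
    (hout : hm h g (a + ζ) ∉ hm h g '' ball a ‖ζ‖) :
    ∃ c : ℂ, ∀ y ∈ ball a ‖ζ‖, (conj c * hm h g y).re < (conj c * hm h g (a + ζ)).re := by
  have hpos : 0 < ‖ζ‖ := norm_pos_iff.2 hζ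
  have hsub : closedBall a ‖ζ‖ ⊆ ball (0:ℂ) 1 := by
    intro y hy
    rw [mem_closedBall, dist_eq_norm] at hy
    rw [mem_ball_zero_iff]
    have : ‖y‖ ≤ ‖y - a‖ + ‖a‖ := by simpa using norm_add_le (y - a) a
    linarith
  have haD : a ∈ ball (0:ℂ) 1 := hsub (mem_closedBall_self hpos.le)
  have hzC : a + ζ ∈ closedBall a ‖ζ‖ := by simp [mem_closedBall, dist_eq_norm]
  have hzD := hsub hzC
  obtain ⟨L, hL⟩ := geometric_hahn_banach_open_point
    (H.hconv a haD ‖ζ‖ hpos (by linarith)) (hm_open H isOpen_ball (ball_subset_closedBall.trans hsub)) hout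
  set c : ℂ := ⟨L 1, L I⟩ with hc
  have hLc : ∀ w, L w = (conj c * w).re := by
    intro w
    have : w = w.re • (1:ℂ) + w.im • I := by simp
    conv_lhs => rw [this]
    rw [map_add, map_smul, map_smul]
    simp [hc, mul_comm]
  have hlt : ∀ y ∈ ball a ‖ζ‖, (conj c * hm h g y).re < (conj c * hm h g (a + ζ)).re := by
    intro y hy
    rw [← hLc, ← hLc]
    exact hL _ (mem_image_of_mem _ hy)
  exact ⟨c, hlt⟩

lemma support_pt {h g : ℂ → ℂ} (H : AKH h g) {a ζ : ℂ} (hζ : ζ ≠ 0) (haz : ‖a‖ + ‖ζ‖ < 1) {c : ℂ}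
    (hlt : ∀ y ∈ ball a ‖ζ‖, (conj c * hm h g y).re < (conj c * hm h g (a + ζ)).re) :
    c ≠ 0 ∧ ∃ m : ℝ, 0 < m ∧
      conj c * (ζ * deriv h (a+ζ)) + c * (ζ * deriv g (a+ζ)) = m ∧
      0 ≤ m + (ζ ^ 2 * (conj c * deriv (deriv h) (a+ζ) + c * deriv (deriv g) (a+ζ))).re := by
  have hpos : 0 < ‖ζ‖ := norm_pos_iff.2 hζ
  have hsub : closedBall a ‖ζ‖ ⊆ ball (0:ℂ) 1 := by
    intro y hy
    rw [mem_closedBall, dist_eq_norm] at hy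
    rw [mem_ball_zero_iff]
    have : ‖y‖ ≤ ‖y - a‖ + ‖a‖ := by simpa using norm_add_le (y - a) a
    linarith
  have hzC : a + ζ ∈ closedBall a ‖ζ‖ := by simp [mem_closedBall, dist_eq_norm]
  have hzD := hsub hzC
  have hc0 : c ≠ 0 := by
    intro h0
    have := hlt a (mem_ball_self hpos)
    simp [h0] at this
  set F : ℂ → ℂ := fun z => conj c * h z + c * g z with hFdef
  have hF : DifferentiableOn ℂ F (ball (0:ℂ) 1) := (H.hh.const_mul _).add (H.hg.const_mul _)
  have hre : ∀ y, (F y).re = (conj c * hm h g y).re := by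
    intro y
    simp [hFdef, hm]
    ring
  have hle : ∀ y ∈ closedBall a ‖ζ‖, (F y).re ≤ (F (a + ζ)).re := by
    rw [← closure_ball a hpos.ne']
    have hcont : ContinuousOn (fun y => (F y).re) (closure (ball a ‖ζ‖)) := by
      rw [closure_ball a hpos.ne']
      exact continuous_re.comp_continuousOn (hF.continuousOn.mono hsub)
    intro y hy
    refine le_on_closure (fun x hx => ?_) hcont continuousOn_const hy
    rw [hre, hre]
    exact (hlt x hx).le
  have hdF : ∀ z ∈ ball (0:ℂ) 1, deriv F z = conj c * deriv h z + c * deriv g z := by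
    intro z hz
    exact (((hol_strict H.hh hz).hasDerivAt.const_mul _).add
      ((hol_strict H.hg hz).hasDerivAt.const_mul _)).deriv
  have hddF : deriv (deriv F) (a+ζ) = conj c * deriv (deriv h) (a+ζ) + c * deriv (deriv g) (a+ζ) := by
    have : deriv F =ᶠ[𝓝 (a+ζ)] fun z => conj c * deriv h z + c * deriv g z := by
      filter_upwards [isOpen_ball.mem_nhds hzD] with z hz using hdF z hz
    rw [this.deriv_eq]
    exact (((hol_strict (hol_deriv H.hh) hzD).hasDerivAt.const_mul _).add
      ((hol_strict (hol_deriv H.hg) hzD).hasDerivAt.const_mul _)).deriv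
  obtain ⟨j1, j2, j3⟩ := jack hF haz hle
  have hm_eq : ζ * deriv F (a+ζ) = ((ζ * deriv F (a+ζ)).re : ℂ) := by
    apply Complex.ext <;> simp [-mul_re, -mul_im, j1]
  have hne : ζ * deriv F (a+ζ) ≠ 0 := by
    refine mul_ne_zero hζ ?_
    rw [hdF _ hzD]
    intro h0
    have h2 : ‖conj c * deriv h (a+ζ)‖ = ‖c * deriv g (a+ζ)‖ := by
      rw [eq_neg_of_add_eq_zero_left h0, norm_neg]
    rw [norm_mul, norm_mul, Complex.norm_conj] at h2
    have := H.hsp _ hzD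
    have := norm_pos_iff.2 hc0
    nlinarith
  refine ⟨hc0, (ζ * deriv F (a+ζ)).re, ?_, ?_, ?_⟩
  · refine lt_of_le_of_ne j2 fun h0 => hne ?_
    rw [hm_eq, ← h0]; simp
  · rw [← hm_eq, hdF _ hzD]; ring
  · rw [← hddF, ← add_re]; exact j3

lemma hm_locinj {h g : ℂ → ℂ} (H : AKH h g) {x : ℂ} (hx : x ∈ ball (0:ℂ) 1) :
    ∃ U ∈ 𝓝 x, InjOn (hm h g) U := by
  obtain ⟨e, he, hst⟩ := hm_strict H hx
  exact ⟨_, (hst.toOpenPartialHomeomorph _).open_source.mem_nhds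
    hst.mem_toOpenPartialHomeomorph_source, (hst.toOpenPartialHomeomorph _).injOn⟩

/-- Moving in the direction `-c` in the image means moving inwards in the disc. -/
lemma inward {h g : ℂ → ℂ} (H : AKH h g) {x c : ℂ} (hx : x ∈ ball (0:ℂ) 1) (hx0 : x ≠ 0)
    (hlt : ∀ y ∈ ball (0:ℂ) ‖x‖, (conj c * hm h g y).re < (conj c * hm h g x).re) :
    ∃ γ : ℝ → ℂ, Tendsto γ (𝓝[>] 0) (𝓝 x) ∧
      ∀ᶠ ε in 𝓝[>] (0:ℝ), γ ε ∈ ball (0:ℂ) ‖x‖ ∧ hm h g (γ ε) = hm h g x + ε * (-c) := by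
  have hx1 : ‖x‖ < 1 := by simpa using hx
  obtain ⟨hc0, m, hm0, hm1, -⟩ := support_pt H (a := 0) hx0 (by simpa using hx1) (by simpa using hlt)
  rw [zero_add] at hm1
  obtain ⟨v, hv, γ, γ0, hγ, hev⟩ := hm_curve H hx (-c)
  have hcont : Tendsto γ (𝓝 0) (𝓝 x) := by
    have := hγ.continuousAt.tendsto
    rwa [γ0] at this
  refine ⟨γ, hcont.mono_left nhdsWithin_le_nhds, ?_⟩
  have h1 : (m * v * conj x).re = - ‖c‖ ^ 2 * ‖x‖ ^ 2 := by
    have e1 : (conj c * deriv h x * v + c * (deriv g x * v)).re = -‖c‖^2 := by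
      have : (conj c * deriv h x * v + c * (deriv g x * v)).re = (conj c * (deriv h x * v + conj (deriv g x * v))).re := by
        simp; ring
      rw [this, hv]
      have : conj c * -c = ((-‖c‖^2 : ℝ) : ℂ) := by
        rw [mul_neg, ← normSq_eq_conj_mul_self, normSq_eq_norm_sq]; simp
      rw [this, ofReal_re]
    have e2 : (m * v * conj x : ℂ) = (conj c * deriv h x * v + c * (deriv g x * v)) * ((‖x‖ ^ 2 : ℝ) : ℂ) := by
      rw [← hm1]
      have : ((‖x‖ ^ 2 : ℝ) : ℂ) = conj x * x := by
        rw [← normSq_eq_conj_mul_self, normSq_eq_norm_sq]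
      rw [this]; ring
    rw [e2, re_mul_ofReal, e1]
  have h2 : (v * conj x).re < 0 := by
    rw [mul_assoc, re_ofReal_mul] at h1
    have := norm_pos_iff.2 hc0
    have := norm_pos_iff.2 hx0
    have h3 : 0 < ‖c‖ ^ 2 * ‖x‖ ^ 2 := by positivity
    by_contra h4
    push Not at h4
    nlinarith [mul_nonneg hm0.le h4]
  have h3 : HasDerivAt (fun ε => ‖γ ε‖ ^ 2) (2 * (v * conj x).re) 0 := by
    have := hγ.norm_sq
    rw [γ0] at this
    convert! this using 2
  have h4 := (hasDerivWithinAt_iff_tendsto_slope' (s := Ioi (0:ℝ)) (by simp)).1 (h3.hasDerivWithinAt (s := Ioi 0))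
  have h5 : ∀ᶠ ε in 𝓝[>] (0:ℝ), slope (fun ε => ‖γ ε‖ ^ 2) 0 ε < 0 :=
    h4.eventually_lt_const (by linarith)
  filter_upwards [h5, self_mem_nhdsWithin, hev.filter_mono nhdsWithin_le_nhds] with ε a1 a2 a3
  refine ⟨?_, a3⟩
  rw [slope_def_field, γ0, sub_zero, div_neg_iff] at a1
  have a2' : 0 < ε := a2
  rw [mem_ball_zero_iff]
  refine lt_of_pow_lt_pow_left₀ 2 (norm_nonneg _) ?_
  rcases a1 with a1 | a1 <;> linarith [a1.1, a1.2]

theorem hm_inj {h g : ℂ → ℂ} (H : AKH h g) : InjOn (hm h g) (ball (0:ℂ) 1) := by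
  intro z1 hz1 z2 hz2 hzz
  by_contra hne
  rw [mem_ball_zero_iff] at hz1 hz2
  set R1 := max ‖z1‖ ‖z2‖ with hR1
  have hR1' : R1 < 1 := max_lt hz1 hz2
  have hsub1 : closedBall (0:ℂ) R1 ⊆ ball (0:ℂ) 1 := closedBall_subset_ball hR1'
  set C : Set (ℂ × ℂ) := closedBall (0:ℂ) R1 ×ˢ closedBall (0:ℂ) R1 with hC
  have hCc : IsCompact C := (isCompact_closedBall _ _).prod (isCompact_closedBall _ _)
  have hfc : ContinuousOn (fun p : ℂ × ℂ => hm h g p.1 - hm h g p.2) C := by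
    have hf := (hm_contOn H).mono hsub1
    exact (hf.comp continuous_fst.continuousOn (fun p hp => hp.1)).sub
      (hf.comp continuous_snd.continuousOn (fun p hp => hp.2))
  have hE : IsClosed (C ∩ (fun p : ℂ × ℂ => hm h g p.1 - hm h g p.2) ⁻¹' {0}) :=
    hfc.preimage_isClosed_of_isClosed hCc.isClosed isClosed_singleton
  set K : Set (ℂ × ℂ) := {p | p ∈ C ∧ hm h g p.1 = hm h g p.2 ∧ p.1 ≠ p.2} with hK
  have hKE : K ⊆ C ∩ (fun p : ℂ × ℂ => hm h g p.1 - hm h g p.2) ⁻¹' {0} := by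
    rintro p ⟨a, b, c⟩
    exact ⟨a, by simp [b]⟩
  have hKclosed : IsClosed K := by
    refine isClosed_of_closure_subset fun p hp => ?_
    have hpE := hE.closure_subset_iff.2 hKE hp
    refine ⟨hpE.1, sub_eq_zero.1 hpE.2, fun heq => ?_⟩
    obtain ⟨U, hU, hinj⟩ := hm_locinj H (hsub1 hpE.1.1)
    have hUU : U ×ˢ U ∈ 𝓝 p := by
      have : p = (p.1, p.1) := Prod.ext rfl heq.symm
      rw [this]
      exact prod_mem_nhds hU hU
    obtain ⟨q, hq1, hq2⟩ := mem_closure_iff_nhds.1 hp _ hUU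
    exact hq2.2.2 (hinj hq1.1 hq1.2 hq2.2.1)
  have hKc : IsCompact K := hCc.of_isClosed_subset hKclosed fun p hp => hp.1
  have hKn : K.Nonempty := ⟨(z1, z2), ⟨by simp [hC, hR1], hzz, hne⟩⟩
  obtain ⟨p, hpK, hpmin⟩ := hKc.exists_isMinOn hKn
    (f := fun p => max ‖p.1‖ ‖p.2‖) (by fun_prop)
  obtain ⟨x, y, hx1, hxy, hne', hyx, hmin⟩ : ∃ x y : ℂ, ‖x‖ ≤ R1 ∧ hm h g x = hm h g y ∧ x ≠ y ∧
      ‖y‖ ≤ ‖x‖ ∧ ∀ q ∈ K, ‖x‖ ≤ max ‖q.1‖ ‖q.2‖ := by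
    rcases le_total ‖p.2‖ ‖p.1‖ with hle | hle
    · exact ⟨p.1, p.2, by simpa using hpK.1.1, hpK.2.1, hpK.2.2, hle, fun q hq => by
        have := hpmin hq
        simp only [mem_ofPred_eq] at this
        exact (le_max_left _ _).trans this⟩
    · exact ⟨p.2, p.1, by simpa using hpK.1.2, hpK.2.1.symm, hpK.2.2.symm, hle, fun q hq => by
        have := hpmin hq
        simp only [mem_ofPred_eq] at this
        exact (le_max_right _ _).trans this⟩
  have hx0 : x ≠ 0 := by
    rintro rfl
    simp at hyx
    exact hne' hyx.symm
  have hxD : x ∈ ball (0:ℂ) 1 := hsub1 (by simpa using hx1)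
  have hyD : y ∈ ball (0:ℂ) 1 := hsub1 (by simpa using hyx.trans hx1)
  have hinjR : InjOn (hm h g) (ball (0:ℂ) ‖x‖) := by
    intro a ha b hb hab
    by_contra hab'
    rw [mem_ball_zero_iff] at ha hb
    have := hmin (a, b) ⟨⟨by simpa using (ha.le.trans hx1), by simpa using (hb.le.trans hx1)⟩, hab, hab'⟩
    exact absurd (max_lt ha hb) (not_lt.2 this)
  have hsubR : ball (0:ℂ) ‖x‖ ⊆ ball (0:ℂ) 1 := ball_subset_ball (hx1.trans hR1'.le)
  have hA : hm h g x ∉ hm h g '' ball (0:ℂ) ‖x‖ := by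
    rintro ⟨q, hq, hqx⟩
    have hqx' : q ≠ x := by
      rintro rfl
      simp at hq
    obtain ⟨U, V, hUo, hVo, hqU, hxV, hUV⟩ := t2_separation hqx'
    have hop : hm h g '' (U ∩ ball (0:ℂ) ‖x‖) ∈ 𝓝 (hm h g x) :=
      (hm_open H (hUo.inter isOpen_ball) (inter_subset_right.trans hsubR)).mem_nhds ⟨q, ⟨hqU, hq⟩, hqx⟩
    have hs : Tendsto (fun s : ℝ => (s:ℂ) * x) (𝓝[<] 1) (𝓝 x) := by
      have : Continuous (fun s : ℝ => (s:ℂ) * x) := by fun_prop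
      have := this.tendsto 1
      simp only [ofReal_one, one_mul] at this
      exact this.mono_left nhdsWithin_le_nhds
    have hfs := ((hm_contOn H).continuousAt (isOpen_ball.mem_nhds hxD)).tendsto.comp hs
    have hI : Ioo (0:ℝ) 1 ∈ 𝓝[<] (1:ℝ) := Ioo_mem_nhdsLT (by norm_num)
    obtain ⟨s, hs1, hs2, hs3⟩ := ((hfs.eventually_mem hop).and
      ((hs.eventually_mem (hVo.mem_nhds hxV)).and hI)).exists
    obtain ⟨q', ⟨hq'U, hq'R⟩, hq'⟩ := hs1
    have hsx : (s:ℂ) * x ∈ ball (0:ℂ) ‖x‖ := by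
      rw [mem_ball_zero_iff, norm_mul, norm_real, Real.norm_eq_abs, abs_of_pos hs3.1]
      nlinarith [norm_pos_iff.2 hx0, hs3.2]
    have := hinjR hq'R hsx hq'
    rw [this] at hq'U
    exact Set.disjoint_left.1 hUV hq'U hs2
  have hyx' : ‖y‖ = ‖x‖ := by
    refine le_antisymm hyx (not_lt.1 fun hlt => hA ⟨y, by simpa using hlt, hxy.symm⟩)
  have hy0 : y ≠ 0 := by
    rw [← norm_pos_iff, hyx', norm_pos_iff]; exact hx0
  obtain ⟨c, hc⟩ := support_ex H (a := 0) hx0 (by simpa using hx1.trans_lt hR1') (by simpa using hA)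
  rw [zero_add] at hc
  obtain ⟨γ, hγ1, hγ2⟩ := inward H hxD hx0 hc
  obtain ⟨δ, hδ1, hδ2⟩ := inward H hyD hy0 (c := c) (by rw [hyx', ← hxy]; exact hc)
  obtain ⟨U, V, hUo, hVo, hxU, hyV, hUV⟩ := t2_separation hne'
  obtain ⟨ε, ⟨e1, e2⟩, ⟨e3, e4⟩, e5, e6⟩ := (hγ2.and (hδ2.and
    ((hγ1.eventually_mem (hUo.mem_nhds hxU)).and (hδ1.eventually_mem (hVo.mem_nhds hyV))))).exists
  rw [hyx'] at e3
  have := hinjR e1 e3 (by rw [e2, e4, hxy])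
  rw [this] at e5
  exact Set.disjoint_left.1 hUV e5 e6

/-- The Jacobian. -/
def Jac (h g : ℂ → ℂ) (z : ℂ) : ℝ := ‖deriv h z‖ ^ 2 - ‖deriv g z‖ ^ 2

/-- The derivative `∂ J`. -/
def Acf (h g : ℂ → ℂ) (z : ℂ) : ℂ :=
  conj (deriv h z) * deriv (deriv h) z - conj (deriv g z) * deriv (deriv g) z

/-- The coefficient of the third harmonic. -/
def Bcf (h g : ℂ → ℂ) (z : ℂ) : ℂ :=
  deriv h z * deriv (deriv g) z - deriv g z * deriv (deriv h) z

lemma Jac_pos {h g : ℂ → ℂ} (H : AKH h g) {z : ℂ} (hz : z ∈ ball (0:ℂ) 1) : 0 < Jac h g z := by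
  have := H.hsp z hz
  unfold Jac
  nlinarith [norm_nonneg (deriv g z), norm_nonneg (deriv h z)]

lemma conj_mul_self' (w : ℂ) : conj w * w = ((‖w‖ ^ 2 : ℝ) : ℂ) := by
  rw [← normSq_eq_conj_mul_self, normSq_eq_norm_sq]

lemma conv_cond {h g : ℂ → ℂ} (H : AKH h g) {z e : ℂ} (hz : z ∈ ball (0:ℂ) 1) (he : ‖e‖ = 1)
    {ρ : ℝ} (hρ : 0 < ρ) (hρ1 : ‖z - ρ * e‖ + ρ < 1) :
    0 ≤ Jac h g z + ρ * (e * Acf h g z + e ^ 3 * Bcf h g z).re := by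
  have hζn : ‖(ρ:ℂ) * e‖ = ρ := by simp [he, abs_of_pos hρ]
  have hζ0 : (ρ:ℂ) * e ≠ 0 := by rw [← norm_pos_iff, hζn]; exact hρ
  have hsum : (z - ρ * e) + ρ * e = z := by ring
  have hsubs : ball (z - ρ * e) ρ ⊆ ball (0:ℂ) 1 := by
    intro y hy
    rw [mem_ball, dist_eq_norm] at hy
    rw [mem_ball_zero_iff]
    have : ‖y‖ ≤ ‖y - (z - ρ * e)‖ + ‖z - ρ * e‖ := by simpa using norm_add_le (y - (z - ρ * e)) (z - ρ * e)
    linarith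
  have hout : hm h g ((z - ρ * e) + ρ * e) ∉ hm h g '' ball (z - ρ * e) ‖(ρ:ℂ) * e‖ := by
    rw [hsum, hζn]
    rintro ⟨y, hy, hyz⟩
    have := hm_inj H (hsubs hy) hz hyz
    rw [this, mem_ball, dist_eq_norm] at hy
    rw [sub_sub_cancel, hζn] at hy
    exact lt_irrefl _ hy
  obtain ⟨c, hc⟩ := support_ex H hζ0 (by rw [hζn]; exact hρ1) hout
  obtain ⟨hc0, m, hm0, h1, h2⟩ := support_pt H hζ0 (by rw [hζn]; exact hρ1) hc
  rw [hsum] at h1 h2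
  have hJ := Jac_pos H hz
  set p := deriv h z with hp
  set q := deriv g z with hq
  set p2 := deriv (deriv h) z with hp2
  set q2 := deriv (deriv g) z with hq2
  have h1c : c * (ρ * conj e * conj p) + conj c * (ρ * conj e * conj q) = m := by
    have := congrArg conj h1
    simpa using this
  have hee : conj e * e = 1 := by rw [conj_mul_self', he]; simp
  have hJc : ((Jac h g z : ℝ) : ℂ) = conj p * p - conj q * q := by
    rw [conj_mul_self', conj_mul_self']; simp [Jac, hp, hq]
  have k1 : conj c * (ρ * (Jac h g z : ℝ)) = m * (conj e * conj p - e * q) := by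
    rw [hJc]
    linear_combination (conj e * conj p) * h1 - (e * q) * h1c - ρ * conj c * (conj p * p - conj q * q) * hee
  have k2 : c * (ρ * (Jac h g z : ℝ)) = m * (e * p - conj e * conj q) := by
    have := congrArg conj k1
    simpa using this
  have k3 : (((ρ:ℂ) * e) ^ 2 * (conj c * p2 + c * q2)) * (ρ * (Jac h g z : ℝ))
      = (m * ρ^2 : ℝ) * (e * Acf h g z + e ^ 3 * Bcf h g z) := by
    have : (((ρ:ℂ) * e) ^ 2 * (conj c * p2 + c * q2)) * (ρ * (Jac h g z : ℝ))
      = ((ρ:ℂ) * e) ^ 2 * ((conj c * (ρ * (Jac h g z : ℝ))) * p2 + (c * (ρ * (Jac h g z : ℝ))) * q2) := by ring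
    rw [this, k1, k2]
    simp only [Acf, Bcf, ← hp, ← hq, ← hp2, ← hq2]
    push_cast
    linear_combination (ρ^2 * m * e * (conj p * p2 - conj q * q2)) * hee
  have k4 := congrArg Complex.re k3
  have e1 : ((ρ:ℂ) * (Jac h g z : ℝ)) = ((ρ * Jac h g z : ℝ) : ℂ) := by push_cast; rfl
  rw [e1, re_mul_ofReal, re_ofReal_mul] at k4
  set X := (e * Acf h g z + e ^ 3 * Bcf h g z).re
  set Y := (((ρ:ℂ) * e) ^ 2 * (conj c * p2 + c * q2)).re
  have k5 : 0 ≤ (m + Y) * (ρ * Jac h g z) := by positivity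
  have k6 : (m + Y) * (ρ * Jac h g z) = (m * ρ) * (Jac h g z + ρ * X) := by
    linear_combination k4
  rw [k6] at k5
  exact nonneg_of_mul_nonneg_right k5 (by positivity)

lemma conv_cond' {h g : ℂ → ℂ} (H : AKH h g) {z e : ℂ} (hz : z ∈ ball (0:ℂ) 1) (he : ‖e‖ = 1) :
    0 ≤ 2 * (1 - (conj z * e).re) * Jac h g z +
      (1 - ‖z‖ ^ 2) * (e * Acf h g z + e ^ 3 * Bcf h g z).re := by
  have hJ := Jac_pos H hz
  have hz1 : ‖z‖ < 1 := by simpa using hz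
  have hz0 := norm_nonneg z
  set X := (e * Acf h g z + e ^ 3 * Bcf h g z).re
  set d := (conj z * e).re with hd
  have hdz : d ≤ ‖z‖ := by
    have := re_le_norm (conj z * e)
    rw [norm_mul, he, Complex.norm_conj, mul_one] at this
    exact this
  have key : ∀ s : ℝ, 0 < s → s < 1 → 0 ≤ 2 * (1 - d) * Jac h g z + s * ((1 - ‖z‖ ^ 2) * X) := by
    intro s hs0 hs1
    set ρ := s * (1 - ‖z‖ ^ 2) / (2 * (1 - d)) with hρ
    have hd1 : 0 < 1 - d := by linarith
    have hw : 0 < 1 - ‖z‖ ^ 2 := by nlinarith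
    have hρ0 : 0 < ρ := by positivity
    have hρe : ρ * (2 * (1 - d)) = s * (1 - ‖z‖ ^ 2) := by rw [hρ]; field_simp
    have hρ1 : ρ < 1 := by
      rw [hρ, div_lt_one (by positivity)]
      nlinarith
    have hn : ‖z - ρ * e‖ ^ 2 = ‖z‖ ^ 2 - 2 * ρ * d + ρ ^ 2 := by
      have he2 : e.re * e.re + e.im * e.im = 1 := by
        rw [← normSq_apply, normSq_eq_norm_sq, he]; norm_num
      rw [← normSq_eq_norm_sq, ← normSq_eq_norm_sq, normSq_apply, normSq_apply, hd]
      simp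
      linear_combination ρ ^ 2 * he2
    have hlt : ‖z - ρ * e‖ < 1 - ρ := by
      refine lt_of_pow_lt_pow_left₀ 2 (by linarith) ?_
      rw [hn]
      nlinarith
    have := conv_cond H hz he hρ0 (by linarith)
    have h3 : 2 * (1 - d) * Jac h g z + s * ((1 - ‖z‖ ^ 2) * X) = 2 * (1 - d) * (Jac h g z + ρ * X) := by
      linear_combination -X * hρe
    rw [h3]
    positivity
  have ht : Tendsto (fun s : ℝ => 2 * (1 - d) * Jac h g z + s * ((1 - ‖z‖ ^ 2) * X)) (𝓝[<] 1)
      (𝓝 (2 * (1 - d) * Jac h g z + 1 * ((1 - ‖z‖ ^ 2) * X))) := by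
    have : Continuous (fun s : ℝ => 2 * (1 - d) * Jac h g z + s * ((1 - ‖z‖ ^ 2) * X)) := by fun_prop
    exact (this.tendsto 1).mono_left nhdsWithin_le_nhds
  rw [one_mul] at ht
  refine ge_of_tendsto ht ?_
  filter_upwards [Ioo_mem_nhdsLT (show (0:ℝ) < 1 by norm_num)] with s hs using key s hs.1 hs.2

lemma preS {h g : ℂ → ℂ} (H : AKH h g) {z u : ℂ} (hz : z ∈ ball (0:ℂ) 1) (hu : ‖u‖ = 1) :
    0 ≤ 4 * Jac h g z + √3 * ((1 - ‖z‖ ^ 2) * (u * Acf h g z).re - 2 * (conj z * u).re * Jac h g z) := by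
  have s3 : (√3:ℝ) ^ 2 = 3 := Real.sq_sqrt (by norm_num)
  have s3c : ((√3:ℝ):ℂ) ^ 2 = 3 := by exact_mod_cast s3
  have hw : ∀ ε : ℝ, ε ^ 2 = 1 → ‖((√3 / 2 : ℝ) : ℂ) + (ε / 2 : ℝ) * I‖ = 1 := by
    intro ε hε
    rw [← sq_eq_sq₀ (norm_nonneg _) zero_le_one, ← normSq_eq_norm_sq, normSq_apply]
    simp
    linear_combination s3 / 4 + hε / 4
  have c1 := conv_cond' H hz (e := u * (((√3 / 2 : ℝ) : ℂ) + ((1:ℝ) / 2 : ℝ) * I))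
    (by rw [norm_mul, hu, hw 1 (by norm_num), one_mul])
  have c2 := conv_cond' H hz (e := u * (((√3 / 2 : ℝ) : ℂ) + ((-1:ℝ) / 2 : ℝ) * I))
    (by rw [norm_mul, hu, hw (-1) (by norm_num), one_mul])
  set w1 := (((√3 / 2 : ℝ) : ℂ) + ((1:ℝ) / 2 : ℝ) * I) with hw1
  set w2 := (((√3 / 2 : ℝ) : ℂ) + ((-1:ℝ) / 2 : ℝ) * I) with hw2
  have a1 : w1 + w2 = ((√3:ℝ):ℂ) := by rw [hw1, hw2]; push_cast; ring
  have a2 : w1 ^ 3 + w2 ^ 3 = 0 := by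
    rw [hw1, hw2]; push_cast
    linear_combination (√3 / 4 : ℂ) * s3c + (3 * √3 / 4 : ℂ) * I_sq
  have b1 : (conj z * (u * w1)).re + (conj z * (u * w2)).re = √3 * (conj z * u).re := by
    rw [← add_re, ← re_ofReal_mul, ← a1]; congr 1; ring
  have b2 : (u * w1 * Acf h g z + (u * w1) ^ 3 * Bcf h g z).re +
      (u * w2 * Acf h g z + (u * w2) ^ 3 * Bcf h g z).re = √3 * (u * Acf h g z).re := by
    rw [← add_re, ← re_ofReal_mul, ← a1]; congr 1
    linear_combination u ^ 3 * Bcf h g z * a2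
  have hfin : 4 * Jac h g z + √3 * ((1 - ‖z‖ ^ 2) * (u * Acf h g z).re - 2 * (conj z * u).re * Jac h g z)
     = (2 * (1 - (conj z * (u * w1)).re) * Jac h g z +
      (1 - ‖z‖ ^ 2) * (u * w1 * Acf h g z + (u * w1) ^ 3 * Bcf h g z).re) +
      (2 * (1 - (conj z * (u * w2)).re) * Jac h g z +
      (1 - ‖z‖ ^ 2) * (u * w2 * Acf h g z + (u * w2) ^ 3 * Bcf h g z).re) := by
    linear_combination 2 * Jac h g z * b1 - (1 - ‖z‖ ^ 2) * b2
  rw [hfin]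
  exact add_nonneg c1 c2

/-- `log ((1+t)/(1-t))`. -/
def Lg (t : ℝ) : ℝ := Real.log (1 + t) - Real.log (1 - t)

lemma Lg_deriv {t : ℝ} (h1 : -1 < t) (h2 : t < 1) : HasDerivAt Lg (2 / (1 - t ^ 2)) t := by
  have a1 : (1 + t) ≠ 0 := by linarith
  have a2 : (1 - t) ≠ 0 := by linarith
  have a3 : 1 - t ^ 2 ≠ 0 := by
    have : 1 - t ^ 2 = (1 + t) * (1 - t) := by ring
    rw [this]; exact mul_ne_zero a1 a2
  have d1 := (((hasDerivAt_id t).const_add 1).log a1).sub (((hasDerivAt_id t).const_sub 1).log a2)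
  convert! d1 using 1
  simp only [id]
  field_simp
  ring

lemma Jac_ray {h g : ℂ → ℂ} (H : AKH h g) {e : ℂ} (he : ‖e‖ = 1) {t : ℝ} (h0 : -1 < t) (h1 : t < 1) :
    HasDerivAt (fun t : ℝ => Jac h g (t * e)) (2 * (e * Acf h g (t * e)).re) t := by
  have hmem : (t:ℂ) * e ∈ ball (0:ℂ) 1 := by
    rw [mem_ball_zero_iff, norm_mul, he, norm_real, Real.norm_eq_abs, mul_one]
    exact abs_lt.2 ⟨h0, h1⟩
  have hr : HasDerivAt (fun s : ℝ => (s:ℂ) * e) e t := by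
    simpa using (hasDerivAt_id t).ofReal_comp.mul_const e
  have d1 := ((hol_strict (hol_deriv H.hh) hmem).hasDerivAt.comp t hr).norm_sq
  have d2 := ((hol_strict (hol_deriv H.hg) hmem).hasDerivAt.comp t hr).norm_sq
  convert! d1.sub d2 using 1
  simp [Acf, Complex.inner]
  ring

lemma logJ_bounds {h g : ℂ → ℂ} (H : AKH h g) (hd1 : deriv h 0 = 1) (gd1 : deriv g 0 = 0)
    {e : ℂ} (he : ‖e‖ = 1) {t : ℝ} (h0 : 0 ≤ t) (h1 : t < 1) :
    Real.log (Jac h g (t * e)) + 2 * Real.log (1 - t ^ 2) ≤ 4 / √3 * Lg t ∧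
    -(4 / √3 * Lg t) ≤ Real.log (Jac h g (t * e)) + 2 * Real.log (1 - t ^ 2) := by
  have s3 : (√3:ℝ) ^ 2 = 3 := Real.sq_sqrt (by norm_num)
  have s3p : (0:ℝ) < √3 := by positivity
  have hee : conj e * e = 1 := by rw [conj_mul_self', he]; simp
  have hder : ∀ s ∈ Ico (0:ℝ) 1, HasDerivAt
      (fun t : ℝ => Real.log (Jac h g (t * e)) + 2 * Real.log (1 - t ^ 2))
      (2 * (e * Acf h g (s * e)).re / Jac h g (s * e) + 2 * (-(2 * s) / (1 - s ^ 2))) s ∧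
      |2 * (e * Acf h g (s * e)).re / Jac h g (s * e) + 2 * (-(2 * s) / (1 - s ^ 2))| ≤
        4 / √3 * (2 / (1 - s ^ 2)) := by
    intro s hs
    have hmem : (s:ℂ) * e ∈ ball (0:ℂ) 1 := by
      rw [mem_ball_zero_iff, norm_mul, he, norm_real, Real.norm_eq_abs, mul_one]
      exact abs_lt.2 ⟨by linarith [hs.1], hs.2⟩
    have hJ := Jac_pos H hmem
    have hw : 0 < 1 - s ^ 2 := by nlinarith [hs.1, hs.2]
    constructor
    · have d2 : HasDerivAt (fun t : ℝ => 1 - t ^ 2) (-(2 * s)) s := by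
        simpa using (hasDerivAt_pow 2 s).const_sub 1
      exact ((Jac_ray H he (by linarith [hs.1]) hs.2).log hJ.ne').add ((d2.log hw.ne').const_mul 2)
    · have hn : ‖(s:ℂ) * e‖ = s := by
        rw [norm_mul, he, norm_real, Real.norm_eq_abs, mul_one, abs_of_nonneg hs.1]
      have q1 := preS H hmem (u := e) he
      have q2 := preS H hmem (u := -e) (by rw [norm_neg, he])
      have r1 : (conj ((s:ℂ) * e) * e).re = s := by
        rw [map_mul, conj_ofReal, mul_assoc, hee]; simp
      have r2 : (conj ((s:ℂ) * e) * -e).re = -s := by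
        rw [mul_neg, neg_re, r1]
      rw [r1, hn] at q1
      rw [r2, hn, neg_mul, neg_re] at q2
      set J := Jac h g (s * e)
      set A := (e * Acf h g (s * e)).re
      have hE : 2 * A / J + 2 * (-(2 * s) / (1 - s ^ 2)) = (2 * ((1 - s ^ 2) * A - 2 * s * J)) / (J * (1 - s ^ 2)) := by
        field_simp
        ring
      have hE2 : 4 / √3 * (2 / (1 - s ^ 2)) = (8 * J / √3) / (J * (1 - s ^ 2)) := by
        field_simp
        norm_num
      rw [hE, hE2, abs_div, abs_of_pos (mul_pos hJ hw)]
      gcongr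
      rw [abs_le, neg_le, le_div_iff₀ s3p, le_div_iff₀ s3p]
      constructor <;> linarith
  have hLd : ∀ s ∈ Ico (0:ℝ) 1, HasDerivAt (fun s => 4 / √3 * Lg s) (4 / √3 * (2 / (1 - s ^ 2))) s :=
    fun s hs => (Lg_deriv (by linarith [hs.1]) hs.2).const_mul _
  have hJ0 : Jac h g ((0:ℝ) * e) = 1 := by simp [Jac, hd1, gd1]
  have hz0 : (0:ℝ) ∈ Ico (0:ℝ) 1 := by simp
  have ht : t ∈ Ico (0:ℝ) 1 := ⟨h0, h1⟩
  have hintr : interior (Ico (0:ℝ) 1) ⊆ Ico 0 1 := interior_subset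
  constructor
  · have hanti : AntitoneOn (fun t : ℝ => (Real.log (Jac h g (t * e)) + 2 * Real.log (1 - t ^ 2)) - 4 / √3 * Lg t) (Ico 0 1) := by
      refine antitoneOn_of_deriv_nonpos (convex_Ico 0 1)
        (fun s hs => (((hder s hs).1.sub (hLd s hs)).continuousAt).continuousWithinAt)
        (fun s hs => (((hder s (hintr hs)).1.sub (hLd s (hintr hs))).differentiableAt).differentiableWithinAt) ?_
      intro s hs
      refine (((hder s (hintr hs)).1.sub (hLd s (hintr hs))).deriv).le.trans ?_
      have := (abs_le.1 (hder s (hintr hs)).2).2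
      linarith
    have := hanti hz0 ht h0
    simp only [hJ0] at this
    simp [Lg] at this
    simp [Lg]
    linarith
  · have hmono : MonotoneOn (fun t : ℝ => (Real.log (Jac h g (t * e)) + 2 * Real.log (1 - t ^ 2)) + 4 / √3 * Lg t) (Ico 0 1) := by
      refine monotoneOn_of_deriv_nonneg (convex_Ico 0 1)
        (fun s hs => (((hder s hs).1.add (hLd s hs)).continuousAt).continuousWithinAt)
        (fun s hs => (((hder s (hintr hs)).1.add (hLd s (hintr hs))).differentiableAt).differentiableWithinAt) ?_
      intro s hs
      refine le_trans ?_ (((hder s (hintr hs)).1.add (hLd s (hintr hs))).deriv).ge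
      have := (abs_le.1 (hder s (hintr hs)).2).1
      linarith
    have := hmono hz0 ht h0
    simp only [hJ0] at this
    simp [Lg] at this
    simp [Lg]
    linarith

lemma schwarz_dil {h g : ℂ → ℂ} (H : AKH h g) (gd1 : deriv g 0 = 0) {z : ℂ}
    (hz : z ∈ ball (0:ℂ) 1) : ‖deriv g z‖ ≤ ‖z‖ * ‖deriv h z‖ := by
  have hp : ∀ w ∈ ball (0:ℂ) 1, 0 < ‖deriv h w‖ := fun w hw =>
    (norm_nonneg _).trans_lt (H.hsp w hw)
  have hd : DifferentiableOn ℂ (fun w => deriv g w / deriv h w) (ball (0:ℂ) 1) :=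
    (hol_deriv H.hg).div (hol_deriv H.hh) fun w hw => norm_pos_iff.1 (hp w hw)
  have := norm_le_norm_of_mapsTo_ball hd (fun w hw => by
    rw [mem_closedBall_zero_iff, norm_div, div_le_one (hp w hw)]
    exact (H.hsp w hw).le) (by simp [gd1]) (mem_ball_zero_iff.1 hz)
  rwa [norm_div, div_le_iff₀ (hp z hz)] at this

/-- The order of the family. -/
def al : ℝ := (4 / √3 + 1) / 2

lemma al_pos : 0 < al := by unfold al; positivity

lemma pq_bounds {h g : ℂ → ℂ} (H : AKH h g) (hd1 : deriv h 0 = 1) (gd1 : deriv g 0 = 0)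
    {z : ℂ} (hz : z ∈ ball (0:ℂ) 1) :
    ‖deriv h z‖ + ‖deriv g z‖ ≤ Real.exp (al * Lg ‖z‖) / (1 - ‖z‖ ^ 2) ∧
    Real.exp (-(al * Lg ‖z‖)) / (1 - ‖z‖ ^ 2) ≤ ‖deriv h z‖ - ‖deriv g z‖ := by
  obtain ⟨e, he, hze⟩ : ∃ e : ℂ, ‖e‖ = 1 ∧ (‖z‖ : ℂ) * e = z := by
    by_cases h0 : z = 0
    · exact ⟨1, by simp, by simp [h0]⟩
    · have : (‖z‖ : ℂ) ≠ 0 := by simpa using h0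
      refine ⟨z / ‖z‖, ?_, by field_simp⟩
      simp [h0]
  have hz1 : ‖z‖ < 1 := by simpa using hz
  have hS := schwarz_dil H gd1 hz
  have hpq := H.hsp z hz
  obtain ⟨b1, b2⟩ := logJ_bounds H hd1 gd1 he (norm_nonneg z) hz1
  rw [hze] at b1 b2
  have hq0 := norm_nonneg (deriv g z)
  have ht0 := norm_nonneg z
  set p := ‖deriv h z‖
  set q := ‖deriv g z‖
  set t := ‖z‖
  have hw : 0 < 1 - t ^ 2 := by nlinarith
  have hJ : Jac h g z = (p + q) * (p - q) := by unfold Jac; ring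
  have hp1 : 0 < p + q := by linarith
  have hp2 : 0 < p - q := by linarith
  rw [hJ, Real.log_mul hp1.ne' hp2.ne'] at b1 b2
  have hL : Real.log (p + q) - Real.log (p - q) ≤ Lg t := by
    unfold Lg
    have : Real.log ((p + q) * (1 - t)) ≤ Real.log ((p - q) * (1 + t)) := by
      apply Real.log_le_log
      · exact mul_pos hp1 (by linarith)
      · nlinarith
    rw [Real.log_mul hp1.ne' (by linarith), Real.log_mul hp2.ne' (by linarith)] at this
    linarith
  have hal : al * Lg t = (4 / √3 * Lg t + Lg t) / 2 := by unfold al; ring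
  constructor
  · rw [le_div_iff₀ hw]
    rw [← Real.log_le_iff_le_exp (mul_pos hp1 hw), Real.log_mul hp1.ne' hw.ne', hal]
    linarith
  · rw [div_le_iff₀ hw]
    rw [← Real.le_log_iff_exp_le (mul_pos hp2 hw), Real.log_mul hp2.ne' hw.ne', hal]
    linarith

lemma Lg_zero : Lg 0 = 0 := by simp [Lg]

lemma upper {h g : ℂ → ℂ} (H : AKH h g) (hd1 : deriv h 0 = 1) (gd1 : deriv g 0 = 0)
    (f0 : hm h g 0 = 0) {e : ℂ} (he : ‖e‖ = 1) {r : ℝ} (hr0 : 0 ≤ r) (hr : r < 1) :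
    ‖hm h g (r * e)‖ ≤ 1 / (2 * al) * (Real.exp (al * Lg r) - 1) := by
  have hap := al_pos
  have hmem : ∀ t ∈ Icc (0:ℝ) r, (t:ℂ) * e ∈ ball (0:ℂ) 1 ∧ ‖(t:ℂ) * e‖ = t := by
    intro t ht
    have hn : ‖(t:ℂ) * e‖ = t := by
      rw [norm_mul, he, norm_real, Real.norm_eq_abs, mul_one, abs_of_nonneg ht.1]
    exact ⟨by rw [mem_ball_zero_iff, hn]; linarith [ht.2], hn⟩
  have hfd : ∀ t ∈ Icc (0:ℝ) r, HasDerivAt (fun t : ℝ => hm h g (t * e))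
      (deriv h (t * e) * e + conj (deriv g (t * e) * e)) t := by
    intro t ht
    obtain ⟨L, hL, hst⟩ := hm_strict H (hmem t ht).1
    have hr : HasDerivAt (fun s : ℝ => (s:ℂ) * e) e t := by
      simpa using (hasDerivAt_id t).ofReal_comp.mul_const e
    have := hst.hasFDerivAt.comp_hasDerivAt t hr
    rw [← hL]
    exact this
  have hBd : ∀ t ∈ Icc (0:ℝ) r, HasDerivAt (fun t => 1 / (2 * al) * (Real.exp (al * Lg t) - 1))
      (Real.exp (al * Lg t) / (1 - t ^ 2)) t := by
    intro t ht
    have hw : 0 < 1 - t ^ 2 := by nlinarith [ht.1, ht.2]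
    have := ((((Lg_deriv (by linarith [ht.1]) (by linarith [ht.2] : t < 1)).const_mul al).exp).sub_const 1).const_mul (1 / (2 * al))
    convert! this using 1
    field_simp
  refine image_norm_le_of_norm_deriv_right_le_deriv_boundary' (a := 0) (b := r)
    (f := fun t : ℝ => hm h g (t * e))
    (f' := fun t : ℝ => deriv h (t * e) * e + conj (deriv g (t * e) * e))
    (B := fun t => 1 / (2 * al) * (Real.exp (al * Lg t) - 1))
    (B' := fun t => Real.exp (al * Lg t) / (1 - t ^ 2))
    (fun t ht => (hfd t ht).continuousAt.continuousWithinAt)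
    (fun t ht => (hfd t (Ico_subset_Icc_self ht)).hasDerivWithinAt)
    (by simp [f0, Lg_zero])
    (fun t ht => (hBd t ht).continuousAt.continuousWithinAt)
    (fun t ht => (hBd t (Ico_subset_Icc_self ht)).hasDerivWithinAt) ?_ ⟨hr0, le_rfl⟩
  intro t ht
  obtain ⟨m1, m2⟩ := hmem t (Ico_subset_Icc_self ht)
  have := (pq_bounds H hd1 gd1 m1).1
  rw [m2] at this
  refine le_trans ?_ this
  refine (norm_add_le _ _).trans ?_
  rw [Complex.norm_conj, norm_mul, norm_mul, he, mul_one, mul_one]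

/-- The lower growth function. -/
def ph (s : ℝ) : ℝ := 1 / (2 * al) * (1 - Real.exp (-(al * Lg s)))

lemma ph_zero : ph 0 = 0 := by simp [ph, Lg_zero]

lemma ph_deriv {t : ℝ} (h0 : 0 ≤ t) (h1 : t < 1) :
    HasDerivAt ph (Real.exp (-(al * Lg t)) / (1 - t ^ 2)) t := by
  have hap := al_pos
  have hw : 0 < 1 - t ^ 2 := by nlinarith
  have := (((((Lg_deriv (by linarith) h1).const_mul al).neg).exp).const_sub 1).const_mul (1 / (2 * al))
  convert! this using 1
  field_simp
  rfl

lemma lower_aux {h g : ℂ → ℂ} (H : AKH h g) (hd1 : deriv h 0 = 1) (gd1 : deriv g 0 = 0)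
    (f0 : hm h g 0 = 0) {δ : ℝ} (hδ0 : 0 < δ) (hδ1 : δ < 1) {z : ℂ} (hz : z ∈ ball (0:ℂ) 1) :
    δ * ph ‖z‖ ≤ ‖hm h g z‖ := by
  have hz1 : ‖z‖ < 1 := by simpa using hz
  have hsub : closedBall (0:ℂ) ‖z‖ ⊆ ball (0:ℂ) 1 := closedBall_subset_ball hz1
  have hcont : ContinuousOn (fun y => ‖hm h g y‖ - δ * ph ‖y‖) (closedBall (0:ℂ) ‖z‖) := by
    refine ((hm_contOn H).mono hsub).norm.sub (continuousOn_const.mul ?_)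
    intro y hy
    have hy1 : ‖y‖ < 1 := by simpa using hsub hy
    exact ((ph_deriv (norm_nonneg y) hy1).continuousAt.comp
      (continuous_norm.continuousAt (x := y))).continuousWithinAt
  obtain ⟨x, hx, hmin⟩ := (isCompact_closedBall (0:ℂ) ‖z‖).exists_isMinOn
    ⟨0, by simp⟩ hcont
  have hzx : ‖hm h g x‖ - δ * ph ‖x‖ ≤ ‖hm h g z‖ - δ * ph ‖z‖ :=
    hmin (show z ∈ closedBall (0:ℂ) ‖z‖ by simp)
  by_cases hx0 : x = 0
  · rw [hx0, f0, norm_zero, ph_zero] at hzx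
    linarith
  exfalso
  have hxD := hsub hx
  have hx1 : ‖x‖ < 1 := by simpa using hxD
  have hxz : ‖x‖ ≤ ‖z‖ := by simpa using hx
  have hxp : 0 < ‖x‖ := norm_pos_iff.2 hx0
  have h0D : (0:ℂ) ∈ ball (0:ℂ) 1 := by simp
  have hfx : hm h g x ≠ 0 := by
    intro h0
    exact hx0 (hm_inj H hxD h0D (by rw [h0, f0]))
  obtain ⟨v, hv, γ, γ0, hγ, hev⟩ := hm_curve H hxD (-hm h g x)
  have hcontγ : Tendsto γ (𝓝 0) (𝓝 x) := by
    have := hγ.continuousAt.tendsto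
    rwa [γ0] at this
  obtain ⟨n, hn, hnv⟩ : ∃ n : ℝ, HasDerivAt (fun ε => ‖γ ε‖) n 0 ∧ |n| ≤ ‖v‖ := by
    have h3 := hγ.norm_sq
    have h4 := h3.sqrt (by rw [γ0]; positivity)
    rw [γ0, Real.sqrt_sq hxp.le] at h4
    refine ⟨_, h4.congr_of_eventuallyEq (Eventually.of_forall fun ε => by simp), ?_⟩
    rw [mul_div_mul_left _ _ two_ne_zero, abs_div, abs_of_pos hxp, div_le_iff₀ hxp, mul_comm]
    exact abs_real_inner_le_norm x v
  set D := Real.exp (-(al * Lg ‖x‖)) / (1 - ‖x‖ ^ 2) with hD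
  have hDpos : 0 < D := by
    have : 0 < 1 - ‖x‖ ^ 2 := by nlinarith
    positivity
  have hψ : HasDerivAt (fun ε : ℝ => (1 - ε) * ‖hm h g x‖ - δ * ph ‖γ ε‖)
      (-1 * ‖hm h g x‖ - δ * (D * n)) 0 := by
    have h1 := ((hasDerivAt_id (0:ℝ)).const_sub 1).mul_const ‖hm h g x‖
    have h2 : HasDerivAt ph D ‖γ 0‖ := by rw [γ0]; exact ph_deriv hxp.le hx1
    have h3 : HasDerivAt (fun ε : ℝ => ph ‖γ ε‖) (D * n) 0 :=
      HasDerivAt.comp (h₂ := ph) (h := fun ε : ℝ => ‖γ ε‖) (0:ℝ) h2 hn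
    exact h1.sub (h3.const_mul δ)
  have hslope := (hasDerivWithinAt_iff_tendsto_slope' (s := Ioi (0:ℝ)) (by simp)).1
    (hψ.hasDerivWithinAt (s := Ioi 0))
  have hsubs : ball (0:ℂ) ‖x‖ ⊆ ball (0:ℂ) 1 := ball_subset_ball hx1.le
  have hop : IsOpen (hm h g '' ball (0:ℂ) ‖x‖) := hm_open H isOpen_ball hsubs
  have hcv : Convex ℝ (hm h g '' ball (0:ℂ) ‖x‖) := H.hconv 0 h0D ‖x‖ hxp (by simpa using hx1)
  have hcl : hm h g x ∈ closure (hm h g '' ball (0:ℂ) ‖x‖) := by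
    have hc : ContinuousOn (hm h g) (closure (ball (0:ℂ) ‖x‖)) := by
      rw [closure_ball _ hxp.ne']
      exact (hm_contOn H).mono (closedBall_subset_ball hx1)
    refine hc.image_closure ⟨x, ?_, rfl⟩
    rw [closure_ball _ hxp.ne']; simp
  have h0im : (0:ℂ) ∈ interior (hm h g '' ball (0:ℂ) ‖x‖) := by
    rw [hop.interior_eq]
    exact ⟨0, by simpa using hx0, f0⟩
  have hge : 0 ≤ -1 * ‖hm h g x‖ - δ * (D * n) := by
    refine ge_of_tendsto hslope ?_
    have hI : Ioo (0:ℝ) 1 ∈ 𝓝[>] (0:ℝ) := Ioo_mem_nhdsGT (by norm_num)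
    have hγD := (hcontγ.eventually_mem (isOpen_ball.mem_nhds hxD)).filter_mono
      (nhdsWithin_le_nhds (s := Ioi (0:ℝ)))
    filter_upwards [hI, hγD, hev.filter_mono nhdsWithin_le_nhds] with ε hε hγε hfε
    have hfε' : hm h g (γ ε) = (1 - ε : ℝ) * hm h g x := by rw [hfε]; push_cast; ring
    have hseg : hm h g (γ ε) ∈ hm h g '' ball (0:ℂ) ‖x‖ := by
      have := hcv.combo_interior_closure_mem_interior h0im hcl hε.1 (sub_nonneg.2 hε.2.le) (by ring)
      rw [hop.interior_eq] at this
      rw [hfε']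
      simpa using this
    obtain ⟨y, hy, hyγ⟩ := hseg
    have hyeq := hm_inj H (hsubs hy) hγε hyγ
    rw [hyeq, mem_ball_zero_iff] at hy
    have hm' : ‖hm h g x‖ - δ * ph ‖x‖ ≤ ‖hm h g (γ ε)‖ - δ * ph ‖γ ε‖ :=
      hmin (show γ ε ∈ closedBall (0:ℂ) ‖z‖ by simpa using hy.le.trans hxz)
    rw [hfε', norm_mul, norm_real, Real.norm_eq_abs, abs_of_nonneg (sub_nonneg.2 hε.2.le)] at hm'
    rw [slope_def_field]
    refine div_nonneg ?_ (by linarith [hε.1])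
    simp only [γ0]
    linarith
  have hb := (pq_bounds H hd1 gd1 hxD).2
  rw [← hD] at hb
  have hvn : (‖deriv h x‖ - ‖deriv g x‖) * ‖v‖ ≤ ‖hm h g x‖ := by
    have : ‖deriv h x * v‖ - ‖conj (deriv g x * v)‖ ≤ ‖deriv h x * v + conj (deriv g x * v)‖ := by
      simpa using norm_sub_norm_le (deriv h x * v) (-conj (deriv g x * v))
    rw [hv, norm_neg, Complex.norm_conj, norm_mul, norm_mul] at this
    linarith
  have hfp : 0 < ‖hm h g x‖ := norm_pos_iff.2 hfx
  have h1 : D * ‖v‖ ≤ ‖hm h g x‖ := (mul_le_mul_of_nonneg_right hb (norm_nonneg v)).trans hvn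
  have h2 : -(D * n) ≤ D * ‖v‖ := by
    have := (abs_le.1 hnv).1
    nlinarith
  nlinarith

lemma lower {h g : ℂ → ℂ} (H : AKH h g) (hd1 : deriv h 0 = 1) (gd1 : deriv g 0 = 0)
    (f0 : hm h g 0 = 0) {z : ℂ} (hz : z ∈ ball (0:ℂ) 1) : ph ‖z‖ ≤ ‖hm h g z‖ := by
  have ht : Tendsto (fun s : ℝ => s * ph ‖z‖) (𝓝[<] 1) (𝓝 (1 * ph ‖z‖)) := by
    have : Continuous (fun s : ℝ => s * ph ‖z‖) := by fun_prop
    exact (this.tendsto 1).mono_left nhdsWithin_le_nhds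
  rw [one_mul] at ht
  refine le_of_tendsto ht ?_
  filter_upwards [Ioo_mem_nhdsLT (show (0:ℝ) < 1 by norm_num)] with s hs
  exact lower_aux H hd1 gd1 f0 hs.1 hs.2 hz

/-- Growth theorem: every `f = h + conj g ∈ 𝒜𝒦⁰_H` satisfies, for
`0 < |z| = r < 1`,
`(√3/(√3+4)) [1 - ((1-r)/(1+r))^{(√3+4)/(2√3)}] ≤ |f(z)|
  ≤ (√3/(√3+4)) [((1+r)/(1-r))^{(√3+4)/(2√3)} - 1]`. -/
theorem AK0_growth (h g : ℂ → ℂ)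
    (hh : DifferentiableOn ℂ h (ball (0:ℂ) 1))
    (hg : DifferentiableOn ℂ g (ball (0:ℂ) 1))
    (hsp : ∀ z ∈ ball (0:ℂ) 1, ‖deriv g z‖ < ‖deriv h z‖)
    (h0 : h 0 = 0) (g0 : g 0 = 0) (hd1 : deriv h 0 = 1) (gd1 : deriv g 0 = 0)
    (hconv : ∀ a ∈ ball (0:ℂ) 1, ∀ r : ℝ, 0 < r → r < 1 - ‖a‖ →
        Convex ℝ ((fun z => h z + conj (g z)) '' ball a r)) :
    ∀ z : ℂ, 0 < ‖z‖ → ‖z‖ < 1 →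
      (Real.sqrt 3 / (Real.sqrt 3 + 4)) *
          (1 - ((1 - ‖z‖) / (1 + ‖z‖)) ^ ((Real.sqrt 3 + 4) / (2 * Real.sqrt 3)))
        ≤ ‖h z + conj (g z)‖ ∧
      ‖h z + conj (g z)‖
        ≤ (Real.sqrt 3 / (Real.sqrt 3 + 4)) *
          (((1 + ‖z‖) / (1 - ‖z‖)) ^ ((Real.sqrt 3 + 4) / (2 * Real.sqrt 3)) - 1) := by
  intro z hz0 hz1
  have H : AKH h g := ⟨hh, hg, hsp, hconv⟩
  have f0 : hm h g 0 = 0 := by simp [hm, h0, g0]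
  have hzD : z ∈ ball (0:ℂ) 1 := by simpa using hz1
  have s3p : (0:ℝ) < √3 := by positivity
  have hal : (√3 + 4) / (2 * √3) = al := by
    unfold al; field_simp; ring
  have hc : √3 / (√3 + 4) = 1 / (2 * al) := by
    unfold al; field_simp; ring
  have hp1 : 0 < 1 + ‖z‖ := by linarith
  have hp2 : 0 < 1 - ‖z‖ := by linarith
  have e1 : ((1 + ‖z‖) / (1 - ‖z‖)) ^ al = Real.exp (al * Lg ‖z‖) := by
    rw [Real.rpow_def_of_pos (by positivity), Real.log_div hp1.ne' hp2.ne', mul_comm]; rfl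
  have e2 : ((1 - ‖z‖) / (1 + ‖z‖)) ^ al = Real.exp (-(al * Lg ‖z‖)) := by
    rw [Real.rpow_def_of_pos (by positivity), Real.log_div hp2.ne' hp1.ne']
    congr 1; unfold Lg; ring
  rw [hal, hc, e1, e2]
  refine ⟨lower H hd1 gd1 f0 hzD, ?_⟩
  have hzn : (‖z‖ : ℂ) ≠ 0 := by exact_mod_cast hz0.ne'
  have he : ‖z / (‖z‖ : ℂ)‖ = 1 := by
    simp [norm_pos_iff.1 hz0]
  have := upper H hd1 gd1 f0 he hz0.le hz1
  rw [mul_div_cancel₀ _ hzn] at this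
  exact this
end
end

section
/- Let f = h + \overline{g} \in \mathcal{AK}^0_H with Taylor coefficients a_2 = h''(0)/2 and b_2 = g''(0)/2. If a_2 is a nonnegative real number, then a_2 + \mathrm{Re}\, b_2 \leq 1. -/
open Complex Metric ComplexConjugate

noncomputable section

open Filter Topology

lemma slope_neg_aux {u : ℝ → ℝ} {u' : ℝ} (hu : HasDerivAt u u' 0) (hneg : u' < 0) :
    ∀ᶠ s in 𝓝[>] (0:ℝ), u s < u 0 := by
  have h1 : Tendsto (slope u 0) (𝓝[>] 0) (𝓝 u') :=
    (hasDerivAt_iff_tendsto_slope.1 hu).mono_left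
      (nhdsWithin_mono _ (fun x hx => ne_of_gt hx))
  filter_upwards [h1.eventually (gt_mem_nhds hneg), self_mem_nhdsWithin] with s hs hs0
  have hs0' : (0:ℝ) < s := hs0
  rw [slope_def_field, sub_zero, div_lt_iff₀ hs0', zero_mul] at hs
  linarith

lemma inward_aux {γ : ℝ → ℂ} {v a : ℂ} {t : ℝ} (ht : 0 < t) (hγ : HasDerivAt γ v 0)
    (hs : ‖γ 0 - a‖ = t) (hv : inner ℝ (γ 0 - a) v < 0) :
    ∀ᶠ s in 𝓝[>] (0:ℝ), γ s ∈ ball a t := by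
  have h1 : HasDerivAt (fun s => ‖γ s - a‖ ^ 2) (2 * inner ℝ (γ 0 - a) v) 0 :=
    (hγ.sub_const a).norm_sq
  filter_upwards [slope_neg_aux h1 (by linarith)] with s h2
  rw [mem_ball, dist_eq_norm]
  simp only [hs] at h2
  exact lt_of_pow_lt_pow_left₀ 2 ht.le h2

lemma line_deriv (z v : ℂ) : HasDerivAt (fun s : ℝ => z + s • v) v 0 := by
  have := ((hasDerivAt_id (0:ℝ)).smul_const v).const_add z
  simpa using this

lemma tangent_aux {f : ℂ → ℂ} {L : ℂ →L[ℝ] ℂ} {z a v : ℂ} {t : ℝ} (ht : 0 < t)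
    (hf : HasFDerivAt f L z) (hz : ‖z - a‖ = t) (hv : inner ℝ (z - a) v < 0)
    (φ : ℂ →L[ℝ] ℝ) (hφ : ∀ x ∈ ball a t, φ (f x) < φ (f z)) : φ (L v) ≤ 0 := by
  by_contra hcon
  push Not at hcon
  have hl := line_deriv z v
  have e0 : (fun s : ℝ => z + s • v) 0 = z := by simp
  have h1 := inward_aux (a := a) ht hl (by simpa using hz) (by simpa using hv)
  have hf' : HasFDerivAt f L ((fun s : ℝ => z + s • v) 0) := by rw [e0]; exact hf
  have h2 := (hf'.comp_hasDerivAt (0:ℝ) hl)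
  have h3 := (φ.hasFDerivAt.comp_hasDerivAt (0:ℝ) h2).neg
  have h4 := slope_neg_aux h3 (by linarith)
  obtain ⟨s, hs1, hs2⟩ := (h1.and h4).exists
  have := hφ _ hs1
  simp at hs2 this
  linarith

lemma open_contra {f : ℂ → ℂ} {L : ℂ ≃L[ℝ] ℂ} {z y a : ℂ} {t : ℝ} (ht : 0 < t)
    (hz : ‖z - a‖ = t) (hy : y ∈ ball a t) (hfz : ContinuousAt f z)
    (hfy : HasStrictFDerivAt f (L : ℂ →L[ℝ] ℂ) y) (hzy : f z = f y)
    (hinj : Set.InjOn f (ball a t)) : False := by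
  have hne : z ≠ y := by
    rintro rfl
    rw [mem_ball, dist_eq_norm] at hy
    linarith
  obtain ⟨N, M, hN, hM, hzN, hyM, hd⟩ := t2_separation hne
  have hM' : M ∩ ball a t ∈ 𝓝 y := (hM.inter isOpen_ball).mem_nhds ⟨hyM, hy⟩
  have hI : f '' (M ∩ ball a t) ∈ 𝓝 (f y) := by
    rw [← hfy.map_nhds_eq_of_equiv]; exact image_mem_map hM'
  have h1 : ∀ᶠ x in 𝓝 z, x ∈ N ∧ f x ∈ f '' (M ∩ ball a t) := by
    refine Filter.Eventually.and (hN.mem_nhds hzN) ?_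
    rw [← hzy] at hI
    exact hfz hI
  have hl := line_deriv z (a - z)
  have h2 := inward_aux (a := a) ht hl (by simpa using hz) (by
    have : a - z = -(z - a) := by ring
    simp only [zero_smul, add_zero]
    rw [this, inner_neg_right, real_inner_self_eq_norm_sq, hz]
    nlinarith)
  have hc : Tendsto (fun s : ℝ => z + s • (a - z)) (𝓝[>] 0) (𝓝 z) := by
    have := hl.continuousAt.tendsto
    simp only [zero_smul, add_zero] at this
    exact this.mono_left nhdsWithin_le_nhds
  obtain ⟨s, ⟨hsN, x, ⟨hxM, hxb⟩, hx⟩, hs2⟩ := ((hc.eventually h1).and h2).exists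
  have := hinj hxb hs2 hx
  rw [this] at hxM
  exact Set.disjoint_left.1 hd hsN hxM

lemma halfplane_aux (ψ : ℂ →L[ℝ] ℝ) {n v : ℂ} (hn : n ≠ 0)
    (hψ : ∀ v, inner ℝ n v < 0 → ψ v ≤ 0) (hv : ψ v < 0) : inner ℝ n v < 0 := by
  by_contra hcon
  push Not at hcon
  have hnn : 0 < inner ℝ n n := real_inner_self_pos.2 hn
  have h1 : ∀ δ : ℝ, 0 < δ → -ψ v - δ * ψ n ≤ 0 := by
    intro δ hδ
    have := hψ (-v - δ • n) (by
      rw [inner_sub_right, inner_neg_right, inner_smul_right]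
      nlinarith [mul_pos hδ hnn])
    rwa [map_sub, map_neg, map_smul, smul_eq_mul] at this
  rcases le_or_gt (ψ n) 0 with h | h
  · have := h1 1 one_pos
    linarith
  · have := h1 (-ψ v / (2 * ψ n)) (by apply div_pos <;> linarith)
    have e : -ψ v / (2 * ψ n) * ψ n = -ψ v / 2 := by field_simp
    rw [e] at this
    linarith

lemma preim_aux {f : ℂ → ℂ} {L : ℂ ≃L[ℝ] ℂ} {z a u : ℂ} {t : ℝ} (ht : 0 < t)
    (hz : ‖z - a‖ = t) (hf : HasStrictFDerivAt f (L : ℂ →L[ℝ] ℂ) z)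
    (φ : ℂ →L[ℝ] ℝ) (hφ : ∀ x ∈ ball a t, φ (f x) < φ (f z)) (hu : φ u < 0)
    {N : Set ℂ} (hN : N ∈ 𝓝 z) :
    ∀ᶠ s : ℝ in 𝓝[>] 0, ∃ x ∈ ball a t ∩ N, f x = f z + s • u := by
  have hin : inner ℝ (z - a) (L.symm u) < 0 := by
    apply halfplane_aux (φ.comp (L : ℂ →L[ℝ] ℂ))
    · intro h0; rw [h0, norm_zero] at hz; linarith
    · intro v hv; exact tangent_aux ht hf.hasFDerivAt hz hv φ hφ
    · simpa using hu
  have hg := hf.to_localInverse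
  have hgz : hf.localInverse f L z (f z) = z := hf.localInverse_apply_image
  have hl := line_deriv (f z) u
  have e0 : (fun s : ℝ => f z + s • u) 0 = f z := by simp
  have hg' : HasFDerivAt (hf.localInverse f L z) (L.symm : ℂ →L[ℝ] ℂ)
      ((fun s : ℝ => f z + s • u) 0) := by rw [e0]; exact hg.hasFDerivAt
  have h2 := hg'.comp_hasDerivAt (0:ℝ) hl
  have h3 := inward_aux (a := a) ht h2 (by simpa [hgz] using hz) (by simpa [hgz] using hin)
  have hc : Tendsto (fun s : ℝ => f z + s • u) (𝓝[>] 0) (𝓝 (f z)) := by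
    have := hl.continuousAt.tendsto
    simp only [zero_smul, add_zero] at this
    exact this.mono_left nhdsWithin_le_nhds
  have h4 := hc.eventually hf.eventually_right_inverse
  have hgc : Tendsto (hf.localInverse f L z) (𝓝 (f z)) (𝓝 z) := by
    have := hg.continuousAt.tendsto
    rwa [hgz] at this
  have h5 := (hgc.comp hc).eventually hN
  filter_upwards [h3, h4, h5] with s a1 a2 a3
  exact ⟨_, ⟨a1, a3⟩, a2⟩

lemma injOn_aux {f : ℂ → ℂ} {a : ℂ} {R : ℝ}
    (hf : ∀ z ∈ closedBall a R, ∃ L : ℂ ≃L[ℝ] ℂ, HasStrictFDerivAt f (L : ℂ →L[ℝ] ℂ) z)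
    (hconv : ∀ t, 0 < t → t ≤ R → Convex ℝ (f '' ball a t)) :
    Set.InjOn f (closedBall a R) := by
  have hcont : ContinuousOn f (closedBall a R) := by
    intro z hz
    obtain ⟨L, hL⟩ := hf z hz
    exact hL.continuousAt.continuousWithinAt
  set C : Set (ℂ × ℂ) := closedBall a R ×ˢ closedBall a R with hC
  have hCc : IsCompact C := (isCompact_closedBall a R).prod (isCompact_closedBall a R)
  set G : Set (ℂ × ℂ) := C ∩ {p | f p.1 - f p.2 = 0} with hG
  have hGc : IsCompact G := by
    have h1 : ContinuousOn (fun p : ℂ × ℂ => f p.1 - f p.2) C :=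
      (hcont.comp continuousOn_fst (fun p hp => hp.1)).sub
        (hcont.comp continuousOn_snd (fun p hp => hp.2))
    exact hCc.of_isClosed_subset (h1.preimage_isClosed_of_isClosed hCc.isClosed isClosed_singleton)
      Set.inter_subset_left
  set O : Set (ℂ × ℂ) := interior {p | f p.1 = f p.2 → p.1 = p.2} with hO
  have hK : IsCompact (G \ O) := hGc.diff isOpen_interior
  have hdiag : ∀ x ∈ closedBall a R, (x, x) ∈ O := by
    intro x hx
    obtain ⟨L, hL⟩ := hf x hx
    rw [hO, mem_interior_iff_mem_nhds]
    have h1 := hL.eventually_left_inverse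
    filter_upwards [h1.prodMk_nhds h1] with p hp hpe
    rw [← hp.1, ← hp.2, hpe]
  have hmemK : ∀ x ∈ closedBall a R, ∀ y ∈ closedBall a R, f x = f y → x ≠ y → (x, y) ∈ G \ O := by
    intro x hx y hy hxy hne
    refine ⟨⟨⟨hx, hy⟩, by simp [hxy]⟩, fun h => hne (interior_subset h hxy)⟩
  intro x hx y hy hxy
  by_contra hne
  obtain ⟨p, hpK, hpmin⟩ := hK.exists_isMinOn ⟨_, hmemK x hx y hy hxy hne⟩
    (f := fun p : ℂ × ℂ => max (dist p.1 a) (dist p.2 a)) (by fun_prop)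
  have key : ∀ z w : ℂ, z ∈ closedBall a R → w ∈ closedBall a R → z ≠ w → f z = f w →
      dist w a ≤ dist z a → 
      (∀ x ∈ closedBall a R, ∀ y ∈ closedBall a R, f x = f y → x ≠ y →
        dist z a ≤ max (dist x a) (dist y a)) → False := by
    intro z w hz hw hzw hfzw hle hmin
    set t := dist z a with ht
    have htR : t ≤ R := hz
    have ht0 : 0 < t := by
      rcases (dist_nonneg (x := z) (y := a)).lt_or_eq with h | h
      · exact h
      · exfalso
        have h1 : z = a := dist_eq_zero.1 h.symm
        have h2 : w = a := dist_le_zero.1 (hle.trans (by rw [ht, ← h]))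
        exact hzw (h1.trans h2.symm)
    have hsub : ball a t ⊆ closedBall a R := ball_subset_closedBall.trans (closedBall_subset_closedBall htR)
    have hinj : Set.InjOn f (ball a t) := by
      intro x hx y hy hxy
      by_contra hne
      have := hmin x (hsub hx) y (hsub hy) hxy hne
      exact absurd this (not_le.2 (max_lt hx hy))
    have hzn : ‖z - a‖ = t := by rw [ht, dist_eq_norm]
    obtain ⟨L, hL⟩ := hf z hz
    obtain ⟨L', hL'⟩ := hf w hw
    have hnotin : f z ∉ f '' ball a t := by
      rintro ⟨y, hy, hyz⟩
      obtain ⟨L2, hL2⟩ := hf y (hsub hy)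
      exact open_contra ht0 hzn hy hL.continuousAt hL2 hyz.symm hinj
    have hwn : ‖w - a‖ = t := by
      rw [← dist_eq_norm]
      rcases hle.lt_or_eq with h | h
      · exact absurd ⟨w, h, hfzw.symm⟩ hnotin
      · exact h
    have hopen : IsOpen (f '' ball a t) := by
      rw [isOpen_iff_mem_nhds]
      rintro _ ⟨y, hy, rfl⟩
      obtain ⟨L2, hL2⟩ := hf y (hsub hy)
      rw [← hL2.map_nhds_eq_of_equiv]
      exact image_mem_map (isOpen_ball.mem_nhds hy)
    obtain ⟨φ, hφ⟩ := geometric_hahn_banach_open_point (hconv t ht0 htR) hopen hnotin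
    have hφ1 : ∀ x ∈ ball a t, φ (f x) < φ (f z) := fun x hx => hφ _ ⟨x, hx, rfl⟩
    have hφ2 : ∀ x ∈ ball a t, φ (f x) < φ (f w) := by rw [← hfzw]; exact hφ1
    have hu : φ (f a - f z) < 0 := by
      rw [map_sub]; linarith [hφ1 a (mem_ball_self ht0)]
    obtain ⟨N, M, hN, hM, hzN, hwM, hd⟩ := t2_separation hzw
    obtain ⟨s, ⟨x1, hx1, e1⟩, ⟨x2, hx2, e2⟩⟩ :=
      ((preim_aux ht0 hzn hL φ hφ1 hu (hN.mem_nhds hzN)).and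
        (preim_aux ht0 hwn hL' φ hφ2 hu (hM.mem_nhds hwM))).exists
    have : x1 = x2 := hinj hx1.1 hx2.1 (by rw [e1, e2, hfzw])
    subst this
    exact Set.disjoint_left.1 hd hx1.2 hx2.2
  obtain ⟨p1, p2⟩ := p
  obtain ⟨⟨⟨hp1, hp2⟩, hpe⟩, hpO⟩ := hpK
  have hpe' : f p1 = f p2 := sub_eq_zero.1 hpe
  have hpne : p1 ≠ p2 := by
    rintro rfl; exact hpO (hdiag _ hp1)
  have hmin : ∀ x ∈ closedBall a R, ∀ y ∈ closedBall a R, f x = f y → x ≠ y →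
      max (dist p1 a) (dist p2 a) ≤ max (dist x a) (dist y a) :=
    fun x hx y hy h1 h2 => hpmin (hmemK x hx y hy h1 h2)
  rcases le_total (dist p2 a) (dist p1 a) with hle | hle
  · exact key p1 p2 hp1 hp2 hpne hpe' hle
      (fun x hx y hy h1 h2 => (le_max_left _ _).trans (hmin x hx y hy h1 h2))
  · exact key p2 p1 hp2 hp1 hpne.symm hpe'.symm hle
      (fun x hx y hy h1 h2 => (le_max_right _ _).trans (hmin x hx y hy h1 h2))

lemma strict_aux {h g : ℂ → ℂ} {z : ℂ} (hh : AnalyticAt ℂ h z) (hg : AnalyticAt ℂ g z)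
    (hlt : ‖deriv g z‖ < ‖deriv h z‖) :
    ∃ L : ℂ ≃L[ℝ] ℂ, HasStrictFDerivAt (fun z => h z + conj (g z)) (L : ℂ →L[ℝ] ℂ) z ∧
      ∀ v, L v = v * deriv h z + conj (v * deriv g z) := by
  have h1 := (hh.hasStrictDerivAt.hasStrictFDerivAt).restrictScalars ℝ
  have h2 := (hg.hasStrictDerivAt.hasStrictFDerivAt).restrictScalars ℝ
  have h3 := h1.add ((conjCLE : ℂ →L[ℝ] ℂ).hasStrictFDerivAt.comp z h2)
  obtain ⟨M, hM⟩ : ∃ M : ℂ →L[ℝ] ℂ, M = (ContinuousLinearMap.restrictScalars ℝ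
      (ContinuousLinearMap.toSpanSingleton ℂ (deriv h z)) + (conjCLE : ℂ →L[ℝ] ℂ) ∘SL
      ContinuousLinearMap.restrictScalars ℝ
        (ContinuousLinearMap.toSpanSingleton ℂ (deriv g z))) := ⟨_, rfl⟩
  rw [← hM] at h3
  have hMv : ∀ v, M v = v * deriv h z + conj (v * deriv g z) := by
    intro v; simp [hM]
  have hinj : Function.Injective (M : ℂ →ₗ[ℝ] ℂ) := by
    rw [← LinearMap.ker_eq_bot, LinearMap.ker_eq_bot']
    intro v hv
    have hv' : M v = 0 := hv
    rw [hMv] at hv'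
    have h4 : ‖v‖ * ‖deriv h z‖ = ‖v‖ * ‖deriv g z‖ := by
      rw [← norm_mul, eq_neg_of_add_eq_zero_left hv', norm_neg, RCLike.norm_conj, norm_mul]
    by_contra hv0
    have := mul_left_cancel₀ (norm_ne_zero_iff.2 hv0) h4
    linarith
  refine ⟨(LinearEquiv.ofInjectiveEndo (M : ℂ →ₗ[ℝ] ℂ) hinj).toContinuousLinearEquiv, ?_, ?_⟩
  · have e : (((LinearEquiv.ofInjectiveEndo (M : ℂ →ₗ[ℝ] ℂ) hinj).toContinuousLinearEquiv :
        ℂ ≃L[ℝ] ℂ) : ℂ →L[ℝ] ℂ) = M := ContinuousLinearMap.ext fun v => rfl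
    rw [e]
    exact h3
  · intro v; exact hMv v

lemma final_aux {k : ℂ → ℂ} (hk : AnalyticAt ℂ k 0) (k0 : k 0 = 0) (k1 : deriv k 0 = 1)
    {ρ s : ℝ} (hs : 1 < 2 * ρ * s) (hρ : 0 < ρ)
    (hpos : ∀ z ∈ ball (ρ : ℂ) ρ, 0 < (k z).re) : (deriv (deriv k) 0 / 2).re ≤ s := by
  set p := dslope k 0 with hp
  set q := dslope p 0 with hq
  have hpa : AnalyticAt ℂ p 0 := by
    obtain ⟨P, hP⟩ := hk
    exact ⟨_, hP.has_fpower_series_dslope_fslope⟩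
  have hkp : ∀ z, k z = z * p z := by
    intro z
    have := sub_smul_dslope k 0 z
    simp only [sub_zero, k0, smul_eq_mul] at this
    exact this.symm
  have hp0 : p 0 = 1 := by rw [hp, dslope_same, k1]
  have hpq : ∀ z, p z = 1 + z * q z := by
    intro z
    have := sub_smul_dslope p 0 z
    simp only [sub_zero, hp0, smul_eq_mul] at this
    rw [hq, this]; ring
  have hqc : ContinuousAt q 0 := continuousAt_dslope_same.2 hpa.differentiableAt
  have hq0 : q 0 = deriv (deriv k) 0 / 2 := by
    rw [hq, dslope_same]
    have e1 : deriv k =ᶠ[𝓝 0] fun z => p z + z * deriv p z := by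
      filter_upwards [hpa.eventually_analyticAt] with z hz
      have : k = fun z => z * p z := funext hkp
      rw [this]
      have := ((hasDerivAt_id z).mul hz.differentiableAt.hasDerivAt).deriv
      simp only [id, one_mul] at this
      exact this
    rw [e1.deriv_eq]
    have h2 := hpa.differentiableAt.hasDerivAt.add
      ((hasDerivAt_id (0:ℂ)).mul hpa.deriv.differentiableAt.hasDerivAt)
    have h3 := h2.deriv
    simp only [id, one_mul, zero_mul, add_zero] at h3
    have h4 : deriv (fun z => p z + z * deriv p z) 0 = deriv p 0 + deriv p 0 := h3
    rw [h4]; ring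
  rw [← hq0]
  -- the curve
  let Z : ℝ → ℂ := fun y => (y:ℂ) * (I + s * y)
  have hZc : Continuous Z := by fun_prop
  have hZ0 : Z 0 = 0 := by simp [Z]
  have hT : Tendsto (fun y : ℝ => s + ((I + s * y) ^ 2 * q (Z y)).re) (𝓝[>] 0)
      (𝓝 (s + ((I + s * (0:ℝ)) ^ 2 * q (Z 0)).re)) := by
    have hqZ : ContinuousAt (fun y => q (Z y)) 0 := by
      apply ContinuousAt.comp (g := q) _ hZc.continuousAt
      rw [hZ0]; exact hqc
    have hc : ContinuousAt (fun y : ℝ => s + ((I + s * y) ^ 2 * q (Z y)).re) 0 := by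
      have : ContinuousAt (fun y : ℝ => (I + s * y) ^ 2) 0 := by fun_prop
      exact continuousAt_const.add (continuous_re.continuousAt.comp (this.mul hqZ))
    exact hc.tendsto.mono_left nhdsWithin_le_nhds
  have hev : ∀ᶠ y : ℝ in 𝓝[>] 0, 0 ≤ s + ((I + s * y) ^ 2 * q (Z y)).re := by
    have h1 : ∀ᶠ y : ℝ in 𝓝[>] 0, 1 - 2 * ρ * s + s ^ 2 * y ^ 2 < 0 := by
      have : ContinuousAt (fun y : ℝ => 1 - 2 * ρ * s + s ^ 2 * y ^ 2) 0 := by fun_prop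
      have h2 := this.tendsto.mono_left (nhdsWithin_le_nhds (s := Set.Ioi 0))
      exact h2.eventually (gt_mem_nhds (by simp; linarith))
    filter_upwards [h1, self_mem_nhdsWithin] with y hy hy0
    have hy0' : (0:ℝ) < y := hy0
    have hmem : Z y ∈ ball (ρ:ℂ) ρ := by
      rw [mem_ball, dist_eq_norm]
      apply lt_of_pow_lt_pow_left₀ 2 hρ.le
      rw [← normSq_eq_norm_sq, normSq_apply]
      simp [Z]
      nlinarith [mul_pos hy0' hy0']
    have h3 := hpos _ hmem
    have h4 : k (Z y) = Z y + ((y ^ 2 : ℝ) : ℂ) * ((I + s * y) ^ 2 * q (Z y)) := by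
      rw [hkp, hpq]; simp only [Z]; push_cast; ring
    rw [h4, add_re, re_ofReal_mul (y ^ 2)] at h3
    have h5 : (Z y).re = y ^ 2 * s := by simp [Z]; ring
    rw [h5, ← mul_add] at h3
    exact (pos_of_mul_pos_right h3 (sq_nonneg y)).le
  have := ge_of_tendsto hT hev
  rw [hZ0] at this
  simp at this
  linarith

/-- If `f = h + conj g ∈ 𝒜𝒦⁰_H` and the Taylor coefficient
`a₂ = h''(0)/2` is a nonnegative real number, then `a₂ + Re b₂ ≤ 1`, where
`b₂ = g''(0)/2`. -/
theorem AK0_a2_add_re_b2_le_one (h g : ℂ → ℂ)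
    (hh : DifferentiableOn ℂ h (ball (0:ℂ) 1))
    (hg : DifferentiableOn ℂ g (ball (0:ℂ) 1))
    (hsp : ∀ z ∈ ball (0:ℂ) 1, ‖deriv g z‖ < ‖deriv h z‖)
    (h0 : h 0 = 0) (g0 : g 0 = 0) (hd1 : deriv h 0 = 1) (gd1 : deriv g 0 = 0)
    (hconv : ∀ a ∈ ball (0:ℂ) 1, ∀ r : ℝ, 0 < r → r < 1 - ‖a‖ →
        Convex ℝ ((fun z => h z + conj (g z)) '' ball a r))
    (ha2im : (deriv (deriv h) 0 / 2).im = 0)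
    (ha2re : 0 ≤ (deriv (deriv h) 0 / 2).re) :
    (deriv (deriv h) 0 / 2).re + (deriv (deriv g) 0 / 2).re ≤ 1 := by
  have hha : ∀ z ∈ ball (0:ℂ) 1, AnalyticAt ℂ h z := fun z hz =>
    hh.analyticAt (isOpen_ball.mem_nhds hz)
  have hga : ∀ z ∈ ball (0:ℂ) 1, AnalyticAt ℂ g z := fun z hz =>
    hg.analyticAt (isOpen_ball.mem_nhds hz)
  have m0 : (0:ℂ) ∈ ball (0:ℂ) 1 := mem_ball_self one_pos
  have hk : AnalyticAt ℂ (fun z => h z + g z) 0 := (hha 0 m0).add (hga 0 m0)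
  have hder : ∀ z ∈ ball (0:ℂ) 1, deriv (fun z => h z + g z) z = deriv h z + deriv g z :=
    fun z hz => ((hha z hz).differentiableAt.hasDerivAt.add
      (hga z hz).differentiableAt.hasDerivAt).deriv
  have hder2 : deriv (deriv (fun z => h z + g z)) 0 = deriv (deriv h) 0 + deriv (deriv g) 0 := by
    have e : deriv (fun z => h z + g z) =ᶠ[𝓝 0] fun z => deriv h z + deriv g z := by
      filter_upwards [isOpen_ball.mem_nhds m0] with z hz using hder z hz
    rw [e.deriv_eq]
    exact ((hha 0 m0).deriv.differentiableAt.hasDerivAt.add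
      (hga 0 m0).deriv.differentiableAt.hasDerivAt).deriv
  rw [← add_re, ← add_div, ← hder2]
  apply le_of_forall_gt_imp_ge_of_dense
  intro s hs
  obtain ⟨ρ, hρ1, hρ2⟩ := exists_between (show 1 / (2 * s) < 1 / 2 by
    rw [div_lt_div_iff₀ (by linarith) (by norm_num)]; linarith)
  have hρ0 : 0 < ρ := lt_trans (by positivity) hρ1
  have hsρ : 1 < 2 * ρ * s := by
    rw [div_lt_iff₀ (by linarith)] at hρ1; linarith
  refine final_aux hk (by simp [h0, g0]) (by rw [hder 0 m0, hd1, gd1, add_zero]) hsρ hρ0 ?_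
  set f : ℂ → ℂ := fun z => h z + conj (g z) with hf
  have hnρ : ‖(ρ:ℂ)‖ = ρ := by rw [norm_real, Real.norm_of_nonneg hρ0.le]
  have hρm : (ρ:ℂ) ∈ ball (0:ℂ) 1 := by
    rw [mem_ball_zero_iff, hnρ]; linarith
  have hsub : closedBall (ρ:ℂ) ρ ⊆ ball (0:ℂ) 1 := by
    intro z hz
    rw [mem_closedBall, dist_eq_norm] at hz
    rw [mem_ball_zero_iff]
    have := norm_add_le (z - ρ) (ρ:ℂ)
    rw [sub_add_cancel, hnρ] at this
    linarith
  have hcv : ∀ t, 0 < t → t ≤ ρ → Convex ℝ (f '' ball (ρ:ℂ) t) := fun t h1 h2 =>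
    hconv _ hρm t h1 (by rw [hnρ]; linarith)
  have hst : ∀ z ∈ closedBall (ρ:ℂ) ρ, ∃ L : ℂ ≃L[ℝ] ℂ,
      HasStrictFDerivAt f (L : ℂ →L[ℝ] ℂ) z := by
    intro z hz
    obtain ⟨L, hL, -⟩ := strict_aux (hha z (hsub hz)) (hga z (hsub hz)) (hsp z (hsub hz))
    exact ⟨L, hL⟩
  have hinj := injOn_aux hst hcv
  have h0c : (0:ℂ) ∈ closedBall (ρ:ℂ) ρ := by
    rw [mem_closedBall, dist_eq_norm, zero_sub, norm_neg, hnρ]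
  have hnotin : f 0 ∉ f '' ball (ρ:ℂ) ρ := by
    rintro ⟨y, hy, hy0⟩
    have := hinj (ball_subset_closedBall hy) h0c hy0
    rw [this, mem_ball, dist_eq_norm, zero_sub, norm_neg, hnρ] at hy
    exact lt_irrefl _ hy
  have hopen : IsOpen (f '' ball (ρ:ℂ) ρ) := by
    rw [isOpen_iff_mem_nhds]
    rintro _ ⟨y, hy, rfl⟩
    obtain ⟨L2, hL2⟩ := hst y (ball_subset_closedBall hy)
    rw [← hL2.map_nhds_eq_of_equiv]
    exact image_mem_map (isOpen_ball.mem_nhds hy)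
  obtain ⟨φ, hφ⟩ := geometric_hahn_banach_open_point (hcv ρ hρ0 le_rfl) hopen hnotin
  have hφ1 : ∀ x ∈ ball (ρ:ℂ) ρ, φ (f x) < φ (f 0) := fun x hx => hφ _ ⟨x, hx, rfl⟩
  obtain ⟨L, hL, hLv⟩ := strict_aux (hha 0 m0) (hga 0 m0) (hsp 0 m0)
  have htan : ∀ v : ℂ, 0 < v.re → φ v ≤ 0 := by
    intro v hv
    have := tangent_aux (v := v) hρ0 hL.hasFDerivAt (a := (ρ:ℂ))
      (by rw [zero_sub, norm_neg, hnρ]) (by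
        rw [zero_sub, inner_neg_left]
        simp
        positivity) φ hφ1
    simpa [hLv, hd1, gd1] using this
  have hlin : ∀ x y : ℝ, φ (x + y * I) = x * φ 1 + y * φ I := by
    intro x y
    have : (x + y * I : ℂ) = x • (1:ℂ) + y • I := by simp
    rw [this, map_add, map_smul, map_smul]; rfl
  have hφI : φ I = 0 := by
    by_contra hne
    have := htan ((1:ℝ) + ((1 - φ 1) / φ I : ℝ) * I) (by simp)
    rw [hlin, div_mul_cancel₀ _ hne] at this
    linarith
  have hf0 : f 0 = 0 := by simp [hf, h0, g0]
  intro z hz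
  have h6 := hφ1 z hz
  rw [hf0, map_zero, ← re_add_im (f z), hlin, hφI, mul_zero, add_zero] at h6
  have h7 : φ 1 ≤ 0 := htan 1 (by simp)
  have h8 : 0 < (f z).re := by
    by_contra hcon
    push Not at hcon
    nlinarith
  simpa [hf] using h8
end
end
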